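/- Let Ω ⊂ ℂ be a bounded domain containing 0 whose boundary is an analytic Jordan curve, let u be a negative continuous subharmonic exhaustion of Ω with finite Monge–Ampère mass, and let f ∈ H^p_u(Ω), 1 ≤ p < ∞. Then f factors as f = I·F where I is Ω-inner and F is Ω-outer, and moreover both I ∈ H^p_u(Ω) and F ∈ H^p_u(Ω). -/

import Mathlib

open MeasureTheory Filter Metric Complex Set
open scoped Real ENNReal Topology

noncomputable section

/-- The Laplacian of a real-valued function on `ℂ ≅ ℝ²`. -/
def lap (φ : ℂ → ℝ) (z : ℂ) : ℝ :=
  fderiv ℝ (fun w => fderiv ℝ φ w 1) z 1 +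
    fderiv ℝ (fun w => fderiv ℝ φ w Complex.I) z Complex.I

/-- `h` is harmonic on `s`. -/
def HarmonicOn (h : ℂ → ℝ) (s : Set ℂ) : Prop :=
  ContDiffOn ℝ 2 h s ∧ ∀ z ∈ s, lap h z = 0

/-- `u` is subharmonic on `s` (continuous with the sub-mean-value property). -/
def SubharmonicOn (u : ℂ → ℝ) (s : Set ℂ) : Prop :=
  ContinuousOn u s ∧ ∀ z ∈ s, ∀ r : ℝ, 0 < r → closedBall z r ⊆ s →
    u z ≤ (2 * Real.pi)⁻¹ *
      ∫ t in (0:ℝ)..(2 * Real.pi), u (z + (r : ℂ) * Complex.exp ((t : ℂ) * Complex.I))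

/-- `u` is a negative continuous subharmonic exhaustion function for `Ω`:
sublevel sets `{u < c}`, `c < 0`, are relatively compact in `Ω`. -/
structure IsExhaustion (u : ℂ → ℝ) (Ω : Set ℂ) : Prop where
  neg : ∀ z ∈ Ω, u z < 0
  subh : SubharmonicOn u Ω
  exh : ∀ c : ℝ, c < 0 → IsCompact (closure {z | z ∈ Ω ∧ u z < c}) ∧
    closure {z | z ∈ Ω ∧ u z < c} ⊆ Ω

/-- `ν` is the Riesz measure `dd^c u = (1/4) Δu dA` of `u` on `Ω`, characterized
distributionally: `∫ φ dν = (1/4) ∫_Ω u Δφ dA` for test functions `φ`. -/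
def IsRieszMeasure (u : ℂ → ℝ) (Ω : Set ℂ) (ν : Measure ℂ) : Prop :=
  ν Ωᶜ = 0 ∧
  ∀ φ : ℂ → ℝ, ContDiff ℝ 2 φ → HasCompactSupport φ → tsupport φ ⊆ Ω →
    ∫ z, φ z ∂ν = (4 : ℝ)⁻¹ * ∫ z in Ω, u z * lap φ z

/-- `μ` is the Monge–Ampère measure `μ_{u,r} = dd^c max(u,r) - χ_{Ω∖{u<r}} dd^c u`,
where `ν = dd^c u`. -/
def IsMAMeasure (u : ℂ → ℝ) (Ω : Set ℂ) (ν : Measure ℂ) (r : ℝ) (μ : Measure ℂ) : Prop :=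
  ∃ νr : Measure ℂ, IsRieszMeasure (fun z => max (u z) r) Ω νr ∧
    μ = νr - ν.restrict {z | z ∈ Ω ∧ r ≤ u z}

/-- The `p`-th power of the Poletsky–Stessin Hardy "norm",
`limsup_{r→0⁻} ∫ |f|^p dμ_{u,r}`. -/
def psNormPow (p : ℝ) (μfam : ℝ → Measure ℂ) (f : ℂ → ℂ) : ℝ≥0∞ :=
  Filter.limsup (fun r => ∫⁻ z, ENNReal.ofReal (‖f z‖ ^ p) ∂(μfam r))
    (nhdsWithin 0 (Set.Iio 0))

/-- The Poletsky–Stessin Hardy norm. -/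
def psNorm (p : ℝ) (μfam : ℝ → Measure ℂ) (f : ℂ → ℂ) : ℝ≥0∞ :=
  psNormPow p μfam f ^ (1 / p)

/-- Membership in the Poletsky–Stessin Hardy space `H^p_u(Ω)`, where `μfam r = μ_{u,r}`. -/
def MemPS (p : ℝ) (Ω : Set ℂ) (μfam : ℝ → Measure ℂ) (f : ℂ → ℂ) : Prop :=
  DifferentiableOn ℂ f Ω ∧ psNormPow p μfam f < ⊤

/-- Membership in the classical Hardy space `H^p(Ω)`: `|f|^p` has a harmonic majorant. -/
def MemHClassical (p : ℝ) (Ω : Set ℂ) (f : ℂ → ℂ) : Prop :=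
  DifferentiableOn ℂ f Ω ∧
    ∃ h : ℂ → ℝ, HarmonicOn h Ω ∧ ∀ z ∈ Ω, ‖f z‖ ^ p ≤ h z

/-- A bounded domain in `ℂ` containing `0` whose boundary is an analytic Jordan curve:
there is a conformal map of the unit disc onto `Ω` extending analytically and injectively
across the closed disc, carrying the unit circle onto the boundary of `Ω`. -/
structure AnalyticJordanDomain (Ω : Set ℂ) : Prop where
  isOpen : IsOpen Ω
  isConnected : IsConnected Ω
  isBounded : Bornology.IsBounded Ω
  zero_mem : (0:ℂ) ∈ Ω
  analyticBoundary : ∃ (U : Set ℂ) (ψ : ℂ → ℂ), IsOpen U ∧ closedBall (0:ℂ) 1 ⊆ U ∧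
    DifferentiableOn ℂ ψ U ∧ Set.InjOn ψ U ∧ ψ '' ball (0:ℂ) 1 = Ω ∧
    ψ '' sphere (0:ℂ) 1 = frontier Ω

/-- `μ` is the boundary Monge–Ampère measure: the weak* limit of the measures
`μfam r = μ_{u,r}` as `r → 0⁻`. -/
def IsBoundaryMA (μfam : ℝ → Measure ℂ) (μ : Measure ℂ) : Prop :=
  ∀ φ : ℂ → ℝ, Continuous φ →
    Filter.Tendsto (fun r => ∫ z, φ z ∂(μfam r)) (nhdsWithin 0 (Set.Iio 0))
      (nhds (∫ z, φ z ∂μ))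

/-- `f` has nontangential limit `L` at the boundary point `ξ` of `Ω`. -/
def NTLim (Ω : Set ℂ) (f : ℂ → ℂ) (ξ : ℂ) (L : ℂ) : Prop :=
  ∀ C : ℝ, 1 < C →
    Filter.Tendsto f
      (nhdsWithin ξ {z | z ∈ Ω ∧ dist z ξ ≤ C * infDist z (frontier Ω)}) (nhds L)

/-- Arc length measure on the boundary of `Ω` (1-dimensional Hausdorff measure). -/
def arcLen (Ω : Set ℂ) : Measure ℂ := (μH[1] : Measure ℂ).restrict (frontier Ω)


/-- `ψ` is a conformal map of the unit disc onto `Ω` with `ψ 0 = 0`. -/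
def IsConformalOnto (ψ : ℂ → ℂ) (Ω : Set ℂ) : Prop :=
  DifferentiableOn ℂ ψ (ball (0:ℂ) 1) ∧ Set.InjOn ψ (ball (0:ℂ) 1) ∧
    ψ '' ball (0:ℂ) 1 = Ω ∧ ψ 0 = 0

/-- `h` is `Ω`-inner: `h ∘ ψ` has unimodular nontangential boundary values a.e. on the
unit circle. -/
def OmegaInner (Ω : Set ℂ) (ψ : ℂ → ℂ) (h : ℂ → ℂ) : Prop :=
  DifferentiableOn ℂ h Ω ∧
    ∀ᵐ ξ ∂(arcLen (ball (0:ℂ) 1)), ∃ L : ℂ,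
      NTLim (ball (0:ℂ) 1) (h ∘ ψ) ξ L ∧ ‖L‖ = 1

/-- `h` is `Ω`-outer: `h ∘ ψ` is outer, i.e.
`log|h(ψ 0)| = ∫_{∂𝔻} log|(h∘ψ)*| dσ` with `σ` normalized arc length. -/
def OmegaOuter (Ω : Set ℂ) (ψ : ℂ → ℂ) (h : ℂ → ℂ) : Prop :=
  DifferentiableOn ℂ h Ω ∧
    ∃ b : ℂ → ℂ,
      (∀ᵐ ξ ∂(arcLen (ball (0:ℂ) 1)), NTLim (ball (0:ℂ) 1) (h ∘ ψ) ξ (b ξ)) ∧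
      Real.log ‖h (ψ 0)‖ =
        (2 * Real.pi)⁻¹ * ∫ ξ, Real.log ‖b ξ‖ ∂(arcLen (ball (0:ℂ) 1))

/-!
Transport `f` to `g = f ∘ ψ` on the unit disc. For `s < 1` let `h_s` be the function harmonic on
`{‖ψ⁻¹‖ < s}` with boundary values `(‖f‖² + 1)^{p/2}`. Lowering `h_s` slightly and gluing it to
`(‖f‖² + 1)^{p/2}` gives a smooth subharmonic function on `Ω`, and testing `μ_{u,r}` with it
bounds `∫ h_s dν` uniformly in `s`. Since `ν ≠ 0`, Harnack's inequality turns this into a bound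
for the `L^p` means of `g`. Hence `g` belongs to `H¹` of the disc, has boundary values `g*` with
integrable log modulus, and factors classically; `I` and `F` are the inner and outer factors
transported back to `Ω`. By Jensen's inequality `‖F‖^p` is dominated by the Poisson integral of
`|g*|^p`, whose `ν`-integral is finite by Fatou's lemma. As `μ_{u,r} ≤ dd^c max(u, r)` and
`∫ v dd^c max(u, r) ≤ ∫ v dν` for harmonic `v ≥ 0`, it follows that `F ∈ H^p_u`, and `v = 1` gives
`I ∈ H^p_u` because `‖I‖ ≤ 1`.
-/

/-! ### Nontangential limits of bounded functions -/

theorem infDist_frontier_unitBall_le {z : ℂ} (hz : z ∈ ball (0 : ℂ) 1) :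
    infDist z (frontier (ball (0 : ℂ) 1)) ≤ 1 - ‖z‖ := by
  have hz' : ‖z‖ < 1 := mem_ball_zero_iff.1 hz
  rw [frontier_ball 0 one_ne_zero]
  obtain rfl | h0 := eq_or_ne z 0
  · refine (infDist_le_dist_of_mem (y := 1) (by simp)).trans ?_
    simp
  · have hn : 0 < ‖z‖ := norm_pos_iff.2 h0
    refine (infDist_le_dist_of_mem (y := (‖z‖⁻¹ : ℝ) • z) (by simp [hn.ne'])).trans_eq ?_
    have : z - (‖z‖⁻¹ : ℝ) • z = (1 - ‖z‖⁻¹ : ℝ) • z := by rw [sub_smul, one_smul]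
    rw [dist_eq_norm, this, norm_smul, Real.norm_eq_abs,
      abs_of_nonpos (sub_nonpos.2 ((one_le_inv₀ hn).2 hz'.le))]
    field_simp
    ring

theorem circleMap_add_arg_div {θ : ℝ} {ζ : ℂ} (hζ : ζ ∈ sphere (0 : ℂ) 1) :
    circleMap 0 1 (θ + arg (ζ / circleMap 0 1 θ)) = ζ := by
  have hn : ‖ζ / circleMap 0 1 θ‖ = 1 := by simpa using hζ
  have hpolar := norm_mul_exp_arg_mul_I (ζ / circleMap 0 1 θ)
  rw [hn, ofReal_one, one_mul] at hpolar
  have hadd (a b : ℝ) : circleMap 0 1 (a + b) = circleMap 0 1 a * Complex.exp (b * I) := by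
    simp [circleMap, add_mul, Complex.exp_add]
  rw [hadd, hpolar, mul_div_cancel₀ _ (circleMap_ne_center one_ne_zero)]

theorem isBigO_arg_div {ζ₀ : ℂ} (h0 : ζ₀ ≠ 0) :
    (fun ζ : ℂ => arg (ζ / ζ₀)) =O[𝓝 ζ₀] fun ζ => ζ - ζ₀ := by
  have hlog : DifferentiableAt ℂ (fun ζ : ℂ => Complex.log (ζ / ζ₀)) ζ₀ :=
    DifferentiableAt.clog (by fun_prop) (by simp [div_self h0])
  have hlogO := hlog.isBigO_sub
  simp only [div_self h0, Complex.log_one, sub_zero] at hlogO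
  refine (Asymptotics.IsBigO.of_bound 1 (Eventually.of_forall fun ζ => ?_)).trans hlogO
  rw [one_mul, ← Complex.log_im]
  exact Complex.abs_im_le_norm _

theorem isLittleO_sphere_of_hasDerivAt_circleMap {B : ℂ → ℂ} {θ : ℝ} {D : ℂ}
    (hD : HasDerivAt (fun t : ℝ => B (circleMap 0 1 t)) D θ) :
    (fun ζ => B ζ - B (circleMap 0 1 θ) -
        D / (circleMap 0 1 θ * I) * (ζ - circleMap 0 1 θ)) =o[𝓝[sphere 0 1] (circleMap 0 1 θ)]
      fun ζ => ζ - circleMap 0 1 θ := by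
  set ζ₀ := circleMap 0 1 θ with hζ₀
  have h0 : ζ₀ ≠ 0 := circleMap_ne_center one_ne_zero
  have hderiv : HasDerivAt (fun t : ℝ => B (circleMap 0 1 t) - B ζ₀ -
      D / (ζ₀ * I) * (circleMap 0 1 t - ζ₀)) 0 θ := by
    have h := (hD.sub_const (B ζ₀)).sub
      (((hasDerivAt_circleMap 0 1 θ).sub_const ζ₀).const_mul (D / (ζ₀ * I)))
    rwa [← hζ₀, div_mul_cancel₀ _ (by simp [h0]), sub_self] at h
  have hangle := hderiv.isLittleO
  simp only [← hζ₀, sub_self, mul_zero, smul_zero, sub_zero] at hangle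
  have hθ : Tendsto (fun ζ : ℂ => θ + arg (ζ / ζ₀)) (𝓝 ζ₀) (𝓝 θ) := by
    have h : Tendsto (fun ζ => arg (ζ / ζ₀)) (𝓝 ζ₀) (𝓝 0) :=
      (isBigO_arg_div h0).trans_tendsto (tendsto_sub_nhds_zero_iff.2 tendsto_id)
    simpa using h.const_add θ
  have hO : (fun ζ : ℂ => θ + arg (ζ / ζ₀) - θ) =O[𝓝 ζ₀] fun ζ => ζ - ζ₀ := by
    simpa only [add_sub_cancel_left] using isBigO_arg_div h0
  refine ((hangle.comp_tendsto hθ).trans_isBigO hO |>.mono nhdsWithin_le_nhds).congr' ?_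
    EventuallyEq.rfl
  filter_upwards [self_mem_nhdsWithin] with ζ hζ
  simp only [Function.comp_apply, hζ₀, circleMap_add_arg_div hζ]

theorem norm_sub_le_norm_sub_ofReal_mul {ζ ζ₀ : ℂ} (hζ : ‖ζ‖ = 1) (hζ₀ : ‖ζ₀‖ = 1) {t : ℝ}
    (ht : 1 ≤ t) : ‖ζ - ζ₀‖ ≤ ‖ζ - t * ζ₀‖ := by
  rw [← sq_eq_sq₀ (norm_nonneg _) zero_le_one, Complex.sq_norm, normSq_apply] at hζ hζ₀
  refine (sq_le_sq₀ (norm_nonneg _) (norm_nonneg _)).1 ?_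
  rw [Complex.sq_norm, Complex.sq_norm, normSq_apply, normSq_apply]
  simp only [sub_re, sub_im, re_ofReal_mul, im_ofReal_mul]
  nlinarith [mul_nonneg (sub_nonneg.2 ht) (sq_nonneg (ζ.re - ζ₀.re)),
    mul_nonneg (sub_nonneg.2 ht) (sq_nonneg (ζ.im - ζ₀.im)), sq_nonneg (t - 1)]

theorem norm_le_mul_norm_sub_of_forall_mem_sphere {f : ℂ → ℂ} (hf : DiffContOnCl ℂ f (ball 0 1))
    {ζ₀ : ℂ} (hζ₀ : ζ₀ ∈ sphere (0 : ℂ) 1) {a : ℝ}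
    (hfa : ∀ ζ ∈ sphere (0 : ℂ) 1, ‖f ζ‖ ≤ a * ‖ζ - ζ₀‖) {z : ℂ} (hz : z ∈ ball (0 : ℂ) 1) :
    ‖f z‖ ≤ a * ‖z - ζ₀‖ := by
  have hζ₀' : ‖ζ₀‖ = 1 := by simpa using hζ₀
  have ha : 0 ≤ a := by
    have h := (norm_nonneg _).trans (hfa (-ζ₀) (by simpa using hζ₀))
    refine nonneg_of_mul_nonneg_left h (norm_pos_iff.2 ?_)
    rw [← neg_add', neg_ne_zero, ← two_mul]
    exact mul_ne_zero two_ne_zero (norm_ne_zero_iff.1 (by simp [hζ₀']))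
  -- Moving the pole `ζ₀` out to `t • ζ₀` makes the quotient continuous on the closed disc.
  have hquot (t : ℝ) (ht : 1 < t) : ‖f z‖ ≤ a * ‖z - t * ζ₀‖ := by
    have hne (w : ℂ) (hw : ‖w‖ ≤ 1) : 0 < ‖w - t * ζ₀‖ := by
      rw [norm_sub_rev]
      refine lt_of_lt_of_le ?_ (norm_sub_norm_le _ _)
      rw [norm_mul, hζ₀', norm_real, Real.norm_of_nonneg (by linarith)]
      linarith
    have hd : DiffContOnCl ℂ (fun w => (w - t * ζ₀)⁻¹ * f w) (ball 0 1) := by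
      have hsub : Differentiable ℂ fun w : ℂ => w - t * ζ₀ := by fun_prop
      refine DiffContOnCl.smul (hsub.diffContOnCl.inv fun w hw => ?_) hf
      rw [closure_ball _ one_ne_zero, mem_closedBall_zero_iff] at hw
      exact norm_pos_iff.1 (hne w hw)
    have hbd : ‖(z - t * ζ₀)⁻¹ * f z‖ ≤ a := by
      refine norm_le_of_forall_mem_frontier_norm_le isBounded_ball hd (fun ζ hζ => ?_)
        (subset_closure hz)
      rw [frontier_ball _ one_ne_zero] at hζ
      have hζ' : ‖ζ‖ = 1 := by simpa using hζ
      rw [norm_mul, norm_inv, inv_mul_le_iff₀ (hne ζ hζ'.le), mul_comm _ a]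
      refine (hfa ζ hζ).trans (mul_le_mul_of_nonneg_left ?_ ha)
      exact norm_sub_le_norm_sub_ofReal_mul hζ' hζ₀' ht.le
    rw [norm_mul, norm_inv, inv_mul_le_iff₀ (hne z (mem_ball_zero_iff.1 hz).le)] at hbd
    linarith
  have hcont : Tendsto (fun t : ℝ => a * ‖z - t * ζ₀‖) (𝓝[>] 1) (𝓝 (a * ‖z - (1 : ℝ) * ζ₀‖)) :=
    (Continuous.tendsto (by fun_prop) 1).mono_left nhdsWithin_le_nhds
  rw [ofReal_one, one_mul] at hcont
  exact ge_of_tendsto hcont (eventually_nhdsWithin_of_forall hquot)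

/-- The half-sum `(ζ₀ + z) / 2` serves as a peak function at `ζ₀`. -/
theorem norm_half_add_sq {ζ₀ ζ : ℂ} (hζ₀ : ‖ζ₀‖ = 1) (hζ : ‖ζ‖ = 1) :
    ‖(ζ₀ + ζ) / 2‖ ^ 2 = 1 - ‖ζ - ζ₀‖ ^ 2 / 4 := by
  have h := parallelogram_law_with_norm ℝ ζ₀ ζ
  rw [norm_div, norm_sub_rev ζ, Complex.norm_ofNat]
  rw [hζ₀, hζ] at h
  linarith [h, sq ‖ζ₀ + ζ‖, sq ‖ζ₀ - ζ‖]

theorem exists_norm_half_add_pow_mul_le {f : ℂ → ℂ} {ζ₀ : ℂ} (hζ₀ : ‖ζ₀‖ = 1) {M : ℝ}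
    (hM : ∀ ζ ∈ sphere (0 : ℂ) 1, ‖f ζ‖ ≤ M * ‖ζ - ζ₀‖)
    (ho : f =o[𝓝[sphere 0 1] ζ₀] fun ζ => ζ - ζ₀) {ε : ℝ} (hε : 0 < ε) :
    ∃ n : ℕ, ∀ ζ ∈ sphere (0 : ℂ) 1, ‖((ζ₀ + ζ) / 2) ^ n * f ζ‖ ≤ ε * ‖ζ - ζ₀‖ := by
  obtain ⟨δ, hδ, hnear⟩ := Metric.mem_nhdsWithin_iff.1 (ho.def hε)
  set q := √(1 - δ ^ 2 / 4) with hq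
  have hq1 : q < 1 := by rw [hq, Real.sqrt_lt' one_pos]; nlinarith
  obtain ⟨n, hn⟩ : ∃ n : ℕ, M * q ^ n ≤ ε := by
    have h := (tendsto_pow_atTop_nhds_zero_of_lt_one (Real.sqrt_nonneg _) hq1).const_mul M
    rw [mul_zero] at h
    exact (h.eventually_le_const hε).exists
  refine ⟨n, fun ζ hζ => ?_⟩
  have hφ := norm_half_add_sq hζ₀ (by simpa using hζ : ‖ζ‖ = 1)
  rw [norm_mul, norm_pow]
  by_cases hd : ‖ζ - ζ₀‖ < δ
  · have hφ1 : ‖(ζ₀ + ζ) / 2‖ ≤ 1 := by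
      rw [← sq_le_one_iff₀ (norm_nonneg _), hφ]
      linarith [sq_nonneg ‖ζ - ζ₀‖]
    calc _ ≤ 1 * ‖f ζ‖ := by gcongr; exact pow_le_one₀ (norm_nonneg _) hφ1
      _ ≤ _ := by rw [one_mul]; exact hnear ⟨by rwa [mem_ball, dist_eq_norm], hζ⟩
  · have hφq : ‖(ζ₀ + ζ) / 2‖ ≤ q := by
      refine Real.le_sqrt_of_sq_le ?_
      rw [hφ]
      gcongr
      exact not_lt.1 hd
    calc _ ≤ q ^ n * (M * ‖ζ - ζ₀‖) := by gcongr; exact hM ζ hζ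
      _ = M * q ^ n * ‖ζ - ζ₀‖ := by ring
      _ ≤ _ := by gcongr

theorem isLittleO_ball_of_isLittleO_sphere {f : ℂ → ℂ} (hf : DiffContOnCl ℂ f (ball 0 1))
    {ζ₀ : ℂ} (hζ₀ : ζ₀ ∈ sphere (0 : ℂ) 1) {M : ℝ}
    (hM : ∀ ζ ∈ sphere (0 : ℂ) 1, ‖f ζ‖ ≤ M * ‖ζ - ζ₀‖)
    (ho : f =o[𝓝[sphere 0 1] ζ₀] fun ζ => ζ - ζ₀) :
    f =o[𝓝[ball 0 1] ζ₀] fun z => z - ζ₀ := by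
  have hζ₀' : ‖ζ₀‖ = 1 := by simpa using hζ₀
  refine Asymptotics.isLittleO_iff.2 fun ε hε => ?_
  obtain ⟨n, hpeak⟩ := exists_norm_half_add_pow_mul_le hζ₀' hM ho (half_pos hε)
  have hφlim : ∀ᶠ z in 𝓝[ball 0 1] ζ₀, 1 / 2 < ‖(ζ₀ + z) / 2‖ ^ n := by
    have h : Tendsto (fun z => ‖(ζ₀ + z) / 2‖ ^ n) (𝓝 ζ₀) (𝓝 (‖(ζ₀ + ζ₀) / 2‖ ^ n)) :=
      Continuous.tendsto (by fun_prop) _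
    rw [add_self_div_two, hζ₀', one_pow] at h
    exact (h.mono_left nhdsWithin_le_nhds).eventually_const_lt (by norm_num)
  filter_upwards [hφlim, self_mem_nhdsWithin] with z hz hzb
  have hmax := norm_le_mul_norm_sub_of_forall_mem_sphere
    (f := fun z => ((ζ₀ + z) / 2) ^ n * f z) (DiffContOnCl.smul
      (Differentiable.diffContOnCl (f := fun z : ℂ => ((ζ₀ + z) / 2) ^ n) (by fun_prop)) hf)
    hζ₀ hpeak hzb
  rw [norm_mul, norm_pow] at hmax
  nlinarith [norm_nonneg (f z)]

/-- Cauchy's estimate on the circle about `z` of radius half the distance to the boundary. -/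
theorem NTLim_deriv_zero_of_isLittleO {f : ℂ → ℂ} (hf : DifferentiableOn ℂ f (ball 0 1))
    {ζ₀ : ℂ} (hζ₀ : ζ₀ ∈ sphere (0 : ℂ) 1) (ho : f =o[𝓝[ball 0 1] ζ₀] fun z => z - ζ₀) :
    NTLim (ball 0 1) (deriv f) ζ₀ 0 := by
  intro C hC
  rw [tendsto_zero_iff_norm_tendsto_zero]
  refine tendsto_order.2 ⟨fun a ha => Eventually.of_forall fun z => ha.trans_le (norm_nonneg _),
    fun η hη => ?_⟩
  set ε := η / (2 * (2 * C + 1)) with hε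
  obtain ⟨δ, hδ, hnear⟩ := Metric.mem_nhdsWithin_iff.1 (ho.def (by positivity : 0 < ε))
  filter_upwards [self_mem_nhdsWithin,
    mem_nhdsWithin_of_mem_nhds (ball_mem_nhds ζ₀ (half_pos hδ))] with z ⟨hz, hzC⟩ hzδ
  have hz' : ‖z‖ < 1 := mem_ball_zero_iff.1 hz
  rw [dist_eq_norm] at hzC
  have hStolz : ‖z - ζ₀‖ ≤ C * (1 - ‖z‖) :=
    hzC.trans (by gcongr; exact infDist_frontier_unitBall_le hz)
  rw [mem_ball, dist_eq_norm] at hzδ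
  have hradius : 1 - ‖z‖ ≤ ‖z - ζ₀‖ := by
    rw [norm_sub_rev, ← mem_sphere_zero_iff_norm.1 hζ₀]
    exact norm_sub_norm_le _ _
  set ρ := (1 - ‖z‖) / 2 with hρ
  have hρ0 : 0 < ρ := by rw [hρ]; linarith
  have hsub : closedBall z ρ ⊆ ball 0 1 := fun w hw => by
    rw [mem_closedBall, dist_eq_norm] at hw
    rw [mem_ball_zero_iff]
    linarith [norm_le_norm_add_norm_sub' w z]
  have hcirc : ∀ w ∈ sphere z ρ, ‖f w‖ ≤ ε * (2 * C + 1) * ρ := by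
    intro w hw
    have hwz : ‖w - z‖ = ρ := by rwa [mem_sphere, dist_eq_norm] at hw
    have hwζ : ‖w - ζ₀‖ ≤ ‖w - z‖ + ‖z - ζ₀‖ := norm_sub_le_norm_sub_add_norm_sub _ _ _
    have hwδ : w ∈ ball ζ₀ δ := by rw [mem_ball, dist_eq_norm]; linarith
    refine (hnear ⟨hwδ, hsub (sphere_subset_closedBall hw)⟩ : ‖f w‖ ≤ ε * ‖w - ζ₀‖).trans ?_
    have hCρ : C * (1 - ‖z‖) = 2 * C * ρ := by rw [hρ]; ring
    rw [mul_assoc]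
    gcongr
    linarith
  calc ‖deriv f z‖ ≤ ε * (2 * C + 1) * ρ / ρ :=
        Complex.norm_deriv_le_of_forall_mem_sphere_norm_le hρ0 (hf.diffContOnCl_ball hsub) hcirc
    _ = η / 2 := by rw [hε]; field_simp
    _ < η := half_lt_self hη

theorem ae_exists_NTLim_of_bounded {b : ℂ → ℂ} (hb : DifferentiableOn ℂ b (ball 0 1)) {M : ℝ}
    (hM : ∀ z ∈ ball (0 : ℂ) 1, ‖b z‖ ≤ M) :
    ∀ᵐ θ : ℝ, ∃ L, NTLim (ball 0 1) b (circleMap 0 1 θ) L := by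
  obtain ⟨B, hB⟩ := hb.isExactOn_ball
  have hLip : LipschitzOnWith M.toNNReal B (ball 0 1) :=
    (convex_ball (0 : ℂ) 1).lipschitzOnWith_of_nnnorm_hasDerivWithin_le
      (fun z hz => (hB z hz).hasDerivWithinAt)
      fun z hz => by
        rw [← NNReal.coe_le_coe, Real.coe_toNNReal']
        exact le_max_of_le_left (hM z hz)
  obtain ⟨β, hβ, hBβ⟩ := hLip.extend_finite_dimension
  have hβd (z : ℂ) (hz : z ∈ ball 0 1) : HasDerivAt β (b z) z :=
    (hB z hz).congr_of_eventuallyEq (hBβ.symm.eventuallyEq_of_mem (isOpen_ball.mem_nhds hz))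
  have hae : ∀ᵐ θ : ℝ, DifferentiableAt ℝ (fun t : ℝ => β (circleMap 0 1 t)) θ :=
    (hβ.comp (lipschitzWith_circleMap 0 1)).ae_differentiableAt_real
  filter_upwards [hae] with θ hθ
  set ζ₀ := circleMap 0 1 θ
  have hζ₀s : ζ₀ ∈ sphere (0 : ℂ) 1 := circleMap_mem_sphere _ zero_le_one _
  set c := deriv (fun t : ℝ => β (circleMap 0 1 t)) θ / (ζ₀ * I)
  set E : ℂ → ℂ := fun z => β z - β ζ₀ - c * (z - ζ₀) with hE
  have hEd : ∀ z ∈ ball (0 : ℂ) 1, HasDerivAt E (b z - c) z := fun z hz => by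
    simpa only [hE, id, mul_one] using ((hβd z hz).sub_const (β ζ₀)).fun_sub
      (((hasDerivAt_id z).sub_const ζ₀).const_mul c)
  have hEdiff : DifferentiableOn ℂ E (ball 0 1) := fun z hz =>
    (hEd z hz).differentiableAt.differentiableWithinAt
  have hEc : Continuous E := by
    have := hβ.continuous
    fun_prop
  have hEO : ∀ ζ ∈ sphere (0 : ℂ) 1,
      ‖E ζ‖ ≤ (lipschitzExtensionConstant ℂ * M.toNNReal + ‖c‖) * ‖ζ - ζ₀‖ := fun ζ _ => by
    refine (norm_sub_le _ _).trans ?_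
    rw [norm_mul, add_mul]
    gcongr
    exact hβ.norm_sub_le _ _
  have hNT := NTLim_deriv_zero_of_isLittleO hEdiff hζ₀s (isLittleO_ball_of_isLittleO_sphere
    ⟨hEdiff, hEc.continuousOn⟩ hζ₀s hEO (isLittleO_sphere_of_hasDerivAt_circleMap hθ.hasDerivAt))
  refine ⟨c, fun C hC => tendsto_sub_nhds_zero_iff.1 ((hNT C hC).congr' ?_)⟩
  filter_upwards [self_mem_nhdsWithin] with z hz using (hEd z hz.1).deriv

/-! ### Harmonic measure of the disc -/

theorem poissonKernel_bounds {z ζ : ℂ} (hz : z ∈ ball (0 : ℂ) 1) (hζ : ζ ∈ sphere (0 : ℂ) 1) :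
    (1 - ‖z‖) / (1 + ‖z‖) ≤ poissonKernel 0 z ζ ∧
      poissonKernel 0 z ζ ≤ (1 + ‖z‖) / (1 - ‖z‖) := by
  rw [poissonKernel_eq_re_herglotzRieszKernel, Function.comp_apply, herglotzRieszKernel_def]
  exact ⟨by simpa using le_re_herglotzRieszKernel hζ hz,
    by simpa using re_herglotzRieszKernel_le hζ hz⟩

theorem poissonKernel_pos {z ζ : ℂ} (hz : z ∈ ball (0 : ℂ) 1) (hζ : ζ ∈ sphere (0 : ℂ) 1) :
    0 < poissonKernel 0 z ζ := by
  have hz' : ‖z‖ < 1 := mem_ball_zero_iff.1 hz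
  exact (div_pos (by linarith) (by positivity)).trans_le (poissonKernel_bounds hz hζ).1

theorem circleMap_zero_one_mem_sphere (θ : ℝ) : circleMap 0 1 θ ∈ sphere (0 : ℂ) 1 :=
  circleMap_mem_sphere _ zero_le_one _

/-- The harmonic measure of the unit disc at `z`, carried by the angle `θ ∈ (0, 2π]` of the
boundary point `circleMap 0 1 θ`. In particular `harmonicMeasure 0` is normalized arc length. -/
def harmonicMeasure (z : ℂ) : Measure ℝ :=
  (volume.restrict (Ioc 0 (2 * π))).withDensity
    fun θ => ENNReal.ofReal ((2 * π)⁻¹ * poissonKernel 0 z (circleMap 0 1 θ))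

section HarmonicMeasure

variable {E : Type*} [NormedAddCommGroup E]

theorem measurable_harmonicMeasure_density (z : ℂ) :
    Measurable fun θ : ℝ => ENNReal.ofReal ((2 * π)⁻¹ * poissonKernel 0 z (circleMap 0 1 θ)) := by
  have : Measurable (circleMap 0 1) := (continuous_circleMap 0 1).measurable
  unfold poissonKernel
  fun_prop

theorem toReal_harmonicMeasure_density {z : ℂ} (hz : z ∈ ball (0 : ℂ) 1) (θ : ℝ) :
    (ENNReal.ofReal ((2 * π)⁻¹ * poissonKernel 0 z (circleMap 0 1 θ))).toReal =
      (2 * π)⁻¹ * poissonKernel 0 z (circleMap 0 1 θ) := by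
  have := poissonKernel_pos hz (circleMap_zero_one_mem_sphere θ)
  exact ENNReal.toReal_ofReal (by positivity)

theorem integral_harmonicMeasure [NormedSpace ℝ E] {z : ℂ} (hz : z ∈ ball (0 : ℂ) 1) (f : ℂ → E) :
    ∫ θ, f (circleMap 0 1 θ) ∂harmonicMeasure z =
      Real.circleAverage (poissonKernel 0 z • f) 0 1 := by
  rw [harmonicMeasure, integral_withDensity_eq_integral_toReal_smul
    (measurable_harmonicMeasure_density z) (by simp), Real.circleAverage_def,
    intervalIntegral.integral_of_le (by positivity), ← integral_smul]
  simp only [toReal_harmonicMeasure_density hz, Pi.smul_apply', mul_smul]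

theorem poissonKernel_zero_apply {ζ : ℂ} (hζ : ζ ∈ sphere (0 : ℂ) 1) :
    poissonKernel 0 0 ζ = 1 := by
  simp [poissonKernel_def, mem_sphere_zero_iff_norm.1 hζ]

theorem integral_harmonicMeasure_zero [NormedSpace ℝ E] (f : ℂ → E) :
    ∫ θ, f (circleMap 0 1 θ) ∂harmonicMeasure 0 = Real.circleAverage f 0 1 := by
  rw [integral_harmonicMeasure (mem_ball_self one_pos)]
  refine Real.circleAverage_congr_sphere fun ζ hζ => ?_
  rw [Pi.smul_apply', poissonKernel_zero_apply (by simpa using hζ), one_smul]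

theorem integrable_harmonicMeasure_zero [NormedSpace ℝ E] {f : ℂ → E} :
    Integrable (fun θ => f (circleMap 0 1 θ)) (harmonicMeasure 0) ↔ CircleIntegrable f 0 1 := by
  rw [harmonicMeasure, integrable_withDensity_iff_integrable_smul'
    (measurable_harmonicMeasure_density 0) (by simp), CircleIntegrable,
    intervalIntegrable_iff_integrableOn_Ioc_of_le (by positivity), IntegrableOn]
  simp only [poissonKernel_zero_apply (circleMap_zero_one_mem_sphere _), mul_one]
  exact integrable_smul_iff (by simp [Real.pi_pos.le, Real.pi_ne_zero]) _

theorem ae_harmonicMeasure {p : ℝ → Prop} (hp : ∀ᵐ θ : ℝ, p θ) (z : ℂ) :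
    ∀ᵐ θ ∂harmonicMeasure z, p θ :=
  ((withDensity_absolutelyContinuous _ _).trans Measure.restrict_le_self.absolutelyContinuous).ae_le
    hp

theorem isProbabilityMeasure_harmonicMeasure {z : ℂ} (hz : z ∈ ball (0 : ℂ) 1) :
    IsProbabilityMeasure (harmonicMeasure z) := by
  have h := integral_harmonicMeasure hz fun _ => (1 : ℂ)
  rw [(diffContOnCl_const : DiffContOnCl ℂ (fun _ => (1 : ℂ)) _).circleAverage_poissonKernel_smul
    hz, integral_const, Measure.real, real_smul, mul_one, ofReal_eq_one] at h
  exact ⟨(ENNReal.toReal_eq_one_iff _).1 h⟩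

theorem harmonicMeasure_le_smul {z w : ℂ} (hz : z ∈ ball (0 : ℂ) 1) (hw : w ∈ ball (0 : ℂ) 1) :
    harmonicMeasure z ≤ ENNReal.ofReal ((1 + ‖z‖) / (1 - ‖z‖) * ((1 + ‖w‖) / (1 - ‖w‖))) •
      harmonicMeasure w := by
  have hz' : ‖z‖ < 1 := mem_ball_zero_iff.1 hz
  have hw' : ‖w‖ < 1 := mem_ball_zero_iff.1 hw
  have : 0 < 1 - ‖z‖ := by linarith
  have : 0 < 1 - ‖w‖ := by linarith
  rw [harmonicMeasure, harmonicMeasure, ← withDensity_smul _ (measurable_harmonicMeasure_density w)]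
  refine withDensity_mono (Eventually.of_forall fun θ => ?_)
  have hζ := circleMap_zero_one_mem_sphere θ
  rw [Pi.smul_apply, smul_eq_mul, ← ENNReal.ofReal_mul (by positivity), mul_left_comm]
  refine ENNReal.ofReal_le_ofReal (mul_le_mul_of_nonneg_left ?_ (by positivity))
  have hlow := (poissonKernel_bounds hw hζ).1
  have hone : (1 + ‖w‖) / (1 - ‖w‖) * ((1 - ‖w‖) / (1 + ‖w‖)) = 1 := by field_simp
  calc poissonKernel 0 z (circleMap 0 1 θ)
      ≤ (1 + ‖z‖) / (1 - ‖z‖) * ((1 + ‖w‖) / (1 - ‖w‖) * ((1 - ‖w‖) / (1 + ‖w‖))) := by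
        rw [hone, mul_one]; exact (poissonKernel_bounds hz hζ).2
    _ ≤ (1 + ‖z‖) / (1 - ‖z‖) * ((1 + ‖w‖) / (1 - ‖w‖) * poissonKernel 0 w _) := by gcongr
    _ = _ := (mul_assoc _ _ _).symm

theorem integrable_harmonicMeasure_congr {z w : ℂ} (hz : z ∈ ball (0 : ℂ) 1)
    (hw : w ∈ ball (0 : ℂ) 1) {f : ℝ → E} :
    Integrable f (harmonicMeasure z) ↔ Integrable f (harmonicMeasure w) :=
  ⟨fun h => (h.smul_measure ENNReal.ofReal_ne_top).mono_measure (harmonicMeasure_le_smul hw hz),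
    fun h => (h.smul_measure ENNReal.ofReal_ne_top).mono_measure (harmonicMeasure_le_smul hz hw)⟩

theorem integrable_harmonicMeasure_iff [NormedSpace ℝ E] {z : ℂ} (hz : z ∈ ball (0 : ℂ) 1)
    {f : ℂ → E} :
    Integrable (fun θ => f (circleMap 0 1 θ)) (harmonicMeasure z) ↔ CircleIntegrable f 0 1 :=
  (integrable_harmonicMeasure_congr hz (mem_ball_self one_pos)).trans
    integrable_harmonicMeasure_zero

theorem integrable_harmonicMeasure_of_continuousOn [NormedSpace ℝ E] {z : ℂ}
    (hz : z ∈ ball (0 : ℂ) 1) {f : ℂ → E} (hf : ContinuousOn f (sphere 0 1)) :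
    Integrable (fun θ => f (circleMap 0 1 θ)) (harmonicMeasure z) :=
  (integrable_harmonicMeasure_iff hz).2 (hf.circleIntegrable zero_le_one)

theorem ae_harmonicMeasure_congr {z w : ℂ} (hz : z ∈ ball (0 : ℂ) 1) (hw : w ∈ ball (0 : ℂ) 1)
    {p : ℝ → Prop} (hp : ∀ᵐ θ ∂harmonicMeasure z, p θ) : ∀ᵐ θ ∂harmonicMeasure w, p θ :=
  ((Measure.absolutelyContinuous_of_le (harmonicMeasure_le_smul hw hz)).trans
    (Measure.AbsolutelyContinuous.rfl.smul_left _)).ae_le hp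

theorem integral_harmonicMeasure_of_diffContOnCl {z : ℂ} (hz : z ∈ ball (0 : ℂ) 1) {f : ℂ → ℂ}
    (hf : DiffContOnCl ℂ f (ball 0 1)) :
    ∫ θ, f (circleMap 0 1 θ) ∂harmonicMeasure z = f z := by
  rw [integral_harmonicMeasure hz, hf.circleAverage_poissonKernel_smul hz]

theorem continuousOn_sphere_of_diffContOnCl {f : ℂ → ℂ} (hf : DiffContOnCl ℂ f (ball 0 1)) :
    ContinuousOn f (sphere 0 1) :=
  hf.2.mono (sphere_subset_closedBall.trans_eq (closure_ball 0 one_ne_zero).symm)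

theorem integral_re_harmonicMeasure_of_diffContOnCl {z : ℂ} (hz : z ∈ ball (0 : ℂ) 1) {f : ℂ → ℂ}
    (hf : DiffContOnCl ℂ f (ball 0 1)) :
    ∫ θ, (f (circleMap 0 1 θ)).re ∂harmonicMeasure z = (f z).re := by
  rw [← integral_harmonicMeasure_of_diffContOnCl hz hf]
  exact reCLM.integral_comp_comm (integrable_harmonicMeasure_of_continuousOn hz
    (continuousOn_sphere_of_diffContOnCl hf))

theorem norm_le_integral_norm_harmonicMeasure {z : ℂ} (hz : z ∈ ball (0 : ℂ) 1) {f : ℂ → ℂ}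
    (hf : DiffContOnCl ℂ f (ball 0 1)) :
    ‖f z‖ ≤ ∫ θ, ‖f (circleMap 0 1 θ)‖ ∂harmonicMeasure z := by
  rw [← integral_harmonicMeasure_of_diffContOnCl hz hf]
  exact norm_integral_le_integral_norm _

end HarmonicMeasure

theorem exists_differentiable_re_eq_of_mem_span_fourier {T : ℝ} {x : C(AddCircle T, ℂ)}
    (hx : x ∈ Submodule.span ℂ (range (@fourier T))) (c : ℂ) :
    ∃ Q : ℂ → ℂ, Differentiable ℂ Q ∧ ∀ t, (c * x t).re = (Q (AddCircle.toCircle t)).re := by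
  induction hx using Submodule.span_induction generalizing c with
  | mem x h =>
    obtain ⟨n, rfl⟩ := h
    obtain ⟨m, rfl | rfl⟩ := n.eq_nat_or_neg
    · exact ⟨fun z => c * z ^ m, by fun_prop, fun t => by
        simp [fourier_apply, AddCircle.toCircle_nsmul]⟩
    · refine ⟨fun z => starRingEnd ℂ c * z ^ m, by fun_prop, fun t => ?_⟩
      rw [fourier_neg, ← Complex.conj_re]
      simp [fourier_apply, AddCircle.toCircle_nsmul]
  | zero => exact ⟨fun _ => 0, by fun_prop, fun t => by simp⟩
  | add x y _ _ hx hy =>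
    obtain ⟨P, hP, hPx⟩ := hx c
    obtain ⟨Q, hQ, hQy⟩ := hy c
    refine ⟨fun z => P z + Q z, by fun_prop, fun t => ?_⟩
    rw [ContinuousMap.add_apply, mul_add, add_re, hPx, hQy, add_re]
  | smul a x _ hx =>
    obtain ⟨Q, hQ, hQx⟩ := hx (c * a)
    refine ⟨Q, hQ, fun t => ?_⟩
    rw [← hQx, ContinuousMap.smul_apply, smul_eq_mul, mul_assoc]

theorem exists_differentiable_abs_re_sub_lt {φ : ℂ → ℝ} (hφ : ContinuousOn φ (sphere 0 1))
    {ε : ℝ} (hε : 0 < ε) :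
    ∃ Q : ℂ → ℂ, Differentiable ℂ Q ∧ ∀ ζ ∈ sphere (0 : ℂ) 1, |φ ζ - (Q ζ).re| < ε := by
  have : Fact (0 < 2 * π) := ⟨Real.two_pi_pos⟩
  let Φ : C(AddCircle (2 * π), ℂ) := ⟨fun t => φ (AddCircle.toCircle t), by
    refine continuous_ofReal.comp (hφ.comp_continuous
      (continuous_subtype_val.comp AddCircle.continuous_toCircle) fun t => ?_)
    rw [mem_sphere_zero_iff_norm, Circle.norm_coe]⟩
  have hΦ : Φ ∈ (Submodule.span ℂ (range (@fourier (2 * π)))).topologicalClosure := by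
    rw [span_fourier_closure_eq_top]
    trivial
  rw [← SetLike.mem_coe, Submodule.topologicalClosure_coe, Metric.mem_closure_iff] at hΦ
  obtain ⟨x, hx, hΦx⟩ := hΦ ε hε
  obtain ⟨Q, hQ, hQx⟩ := exists_differentiable_re_eq_of_mem_span_fourier hx 1
  refine ⟨Q, hQ, fun ζ hζ => ?_⟩
  obtain ⟨t, rfl⟩ : ∃ t : AddCircle (2 * π), (AddCircle.toCircle t : ℂ) = ζ :=
    ⟨(arg ζ : AddCircle (2 * π)), by
      have h := norm_mul_exp_arg_mul_I ζ
      rw [mem_sphere_zero_iff_norm.1 hζ, ofReal_one, one_mul] at h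
      rwa [AddCircle.toCircle_apply_mk, div_self Real.two_pi_pos.ne', one_mul, Circle.coe_exp]⟩
  rw [← hQx, one_mul]
  calc |φ (AddCircle.toCircle t) - (x t).re| = |(Φ t - x t).re| := by simp [Φ]
    _ ≤ ‖Φ t - x t‖ := abs_re_le_norm _
    _ ≤ dist Φ x := by rw [← dist_eq_norm]; exact ContinuousMap.dist_apply_le_dist t
    _ < ε := hΦx

theorem norm_le_exp_integral_harmonicMeasure {g : ℂ → ℂ} (hg : DiffContOnCl ℂ g (ball 0 1))
    {φ : ℂ → ℝ} (hφ : ContinuousOn φ (sphere 0 1))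
    (hgφ : ∀ ζ ∈ sphere (0 : ℂ) 1, ‖g ζ‖ ≤ Real.exp (φ ζ)) {z : ℂ} (hz : z ∈ ball (0 : ℂ) 1) :
    ‖g z‖ ≤ Real.exp (∫ θ, φ (circleMap 0 1 θ) ∂harmonicMeasure z) := by
  have := isProbabilityMeasure_harmonicMeasure hz
  set A := ∫ θ, φ (circleMap 0 1 θ) ∂harmonicMeasure z
  have key (ε : ℝ) (hε : 0 < ε) : ‖g z‖ ≤ Real.exp (A + 2 * ε) := by
    obtain ⟨Q, hQ, hQφ⟩ := exists_differentiable_abs_re_sub_lt hφ hε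
    have hexp : Differentiable ℂ fun w => Complex.exp (-Q w) := by fun_prop
    have hmax : ‖g z * Complex.exp (-Q z)‖ ≤ Real.exp ε := by
      refine norm_le_of_forall_mem_frontier_norm_le isBounded_ball
        (hg.smul hexp.diffContOnCl) (fun ζ hζ => ?_) (subset_closure hz)
      rw [frontier_ball 0 one_ne_zero] at hζ
      rw [smul_eq_mul, norm_mul, Complex.norm_exp, neg_re]
      calc _ ≤ Real.exp (φ ζ) * Real.exp (-(Q ζ).re) := by gcongr; exact hgφ ζ hζ
        _ = Real.exp (φ ζ - (Q ζ).re) := by rw [← Real.exp_add, sub_eq_add_neg]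
        _ ≤ _ := Real.exp_le_exp.2 (abs_lt.1 (hQφ ζ hζ)).2.le
    have hQz : (Q z).re ≤ A + ε := by
      have hφi := integrable_harmonicMeasure_of_continuousOn hz hφ
      have hQi := integrable_harmonicMeasure_of_continuousOn hz
        (continuous_re.comp_continuousOn hQ.continuous.continuousOn)
      calc (Q z).re = ∫ θ, (Q (circleMap 0 1 θ)).re ∂harmonicMeasure z :=
            (integral_re_harmonicMeasure_of_diffContOnCl hz hQ.diffContOnCl).symm
        _ ≤ ∫ θ, (φ (circleMap 0 1 θ) + ε) ∂harmonicMeasure z :=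
            integral_mono hQi (hφi.add (integrable_const ε)) fun θ => by
              have := (abs_lt.1 (hQφ _ (circleMap_zero_one_mem_sphere θ))).1
              beta_reduce
              linarith
        _ = A + ε := by simp [integral_add hφi (integrable_const ε), A]
    rw [norm_mul, Complex.norm_exp, neg_re, Real.exp_neg, ← div_eq_mul_inv,
      div_le_iff₀ (Real.exp_pos _), ← Real.exp_add] at hmax
    exact hmax.trans (Real.exp_le_exp.2 (by linarith))
  have hlim : Tendsto (fun ε : ℝ => Real.exp (A + 2 * ε)) (𝓝[>] 0) (𝓝 (Real.exp (A + 2 * 0))) :=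
    (Continuous.tendsto (by fun_prop) _).mono_left nhdsWithin_le_nhds
  rw [mul_zero, add_zero] at hlim
  exact ge_of_tendsto hlim (eventually_nhdsWithin_of_forall key)

section Fatou

variable {α : Type*} [MeasurableSpace α] {μ : Measure α} {f : ℕ → α → ℝ} {F : α → ℝ}
  {b : ℕ → ℝ} {B : ℝ}

theorem lintegral_liminf_ofReal_le (hi : ∀ n, Integrable (f n) μ) (h0 : ∀ n, 0 ≤ᵐ[μ] f n)
    (hb : ∀ᶠ n in atTop, ∫ a, f n a ∂μ ≤ b n) (hbB : Tendsto b atTop (𝓝 B)) :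
    ∫⁻ a, liminf (fun n => ENNReal.ofReal (f n a)) atTop ∂μ ≤ ENNReal.ofReal B :=
  calc ∫⁻ a, liminf (fun n => ENNReal.ofReal (f n a)) atTop ∂μ
      ≤ liminf (fun n => ∫⁻ a, ENNReal.ofReal (f n a) ∂μ) atTop :=
        lintegral_liminf_le' fun n => (hi n).1.aemeasurable.ennreal_ofReal
    _ ≤ liminf (fun n => ENNReal.ofReal (b n)) atTop := by
        refine liminf_le_liminf (hb.mono fun n hn => ?_)
        rw [← ofReal_integral_eq_lintegral_ofReal (hi n) (h0 n)]
        exact ENNReal.ofReal_le_ofReal hn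
    _ = ENNReal.ofReal B := (ENNReal.tendsto_ofReal hbB).liminf_eq

theorem ae_not_tendsto_atTop_of_integral_le (hi : ∀ n, Integrable (f n) μ)
    (h0 : ∀ n, 0 ≤ᵐ[μ] f n) (hb : ∀ᶠ n in atTop, ∫ a, f n a ∂μ ≤ b n)
    (hbB : Tendsto b atTop (𝓝 B)) : ∀ᵐ a ∂μ, ¬Tendsto (fun n => f n a) atTop atTop := by
  have hfin := (lintegral_liminf_ofReal_le hi h0 hb hbB).trans_lt ENNReal.ofReal_lt_top
  have hm : AEMeasurable (fun a => liminf (fun n => ENNReal.ofReal (f n a)) atTop) μ := by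
    simp only [liminf_eq_iSup_iInf_of_nat']
    exact .iSup fun n => .iInf fun i => (hi _).1.aemeasurable.ennreal_ofReal
  filter_upwards [ae_lt_top' hm hfin.ne] with a ha htop
  exact ha.ne (ENNReal.tendsto_ofReal_atTop.comp htop).liminf_eq

theorem integrable_and_integral_le_of_tendsto_ae (hi : ∀ n, Integrable (f n) μ)
    (h0 : ∀ n, 0 ≤ᵐ[μ] f n) (hb : ∀ᶠ n in atTop, ∫ a, f n a ∂μ ≤ b n)
    (hbB : Tendsto b atTop (𝓝 B))
    (hlim : ∀ᵐ a ∂μ, Tendsto (fun n => f n a) atTop (𝓝 (F a))) :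
    Integrable F μ ∧ ∫ a, F a ∂μ ≤ B := by
  have hF0 : 0 ≤ᵐ[μ] F := by
    filter_upwards [hlim, ae_all_iff.2 h0] with a ha ha0
    exact ge_of_tendsto' ha ha0
  have hB0 : 0 ≤ B :=
    ge_of_tendsto hbB (hb.mono fun n hn => (integral_nonneg_of_ae (h0 n)).trans hn)
  have hle : ∫⁻ a, ENNReal.ofReal (F a) ∂μ ≤ ENNReal.ofReal B := by
    refine le_of_eq_of_le (lintegral_congr_ae ?_) (lintegral_liminf_ofReal_le hi h0 hb hbB)
    filter_upwards [hlim] with a ha using (ENNReal.tendsto_ofReal ha).liminf_eq.symm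
  have hFi : Integrable F μ :=
    ⟨aestronglyMeasurable_of_tendsto_ae atTop (fun n => (hi n).1) hlim,
      (hasFiniteIntegral_iff_ofReal hF0).2 (hle.trans_lt ENNReal.ofReal_lt_top)⟩
  rw [← ofReal_integral_eq_lintegral_ofReal hFi hF0] at hle
  exact ⟨hFi, (ENNReal.ofReal_le_ofReal_iff hB0).1 hle⟩

end Fatou

section LogFatou

theorem log_le_mul_sub_log {ε y : ℝ} (hε : 0 < ε) (hy : 0 < y) :
    Real.log y ≤ ε * y - Real.log ε := by
  have := Real.log_le_self (mul_pos hε hy).le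
  rw [Real.log_mul hε.ne' hy.ne'] at this
  linarith

variable {α : Type*} [MeasurableSpace α] {μ : Measure α} [IsProbabilityMeasure μ]

theorem integrable_log_add_const {x : α → ℝ} (hx : Integrable x μ) (hx0 : ∀ a, 0 ≤ x a) {δ : ℝ}
    (hδ : 0 < δ) : Integrable (fun a => Real.log (x a + δ)) μ := by
  have hxδ := hx.add (integrable_const δ)
  refine integrable_of_le_of_le (Real.measurable_log.comp_aemeasurable
    hxδ.1.aemeasurable).aestronglyMeasurable (Eventually.of_forall fun a => ?_)
    (Eventually.of_forall fun a => ?_) (integrable_const (Real.log δ)) hxδ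
  · exact Real.log_le_log hδ (le_add_of_nonneg_left (hx0 a))
  · exact Real.log_le_self (add_nonneg (hx0 a) hδ.le)

theorem integral_mul_add_const_sub {f g : α → ℝ} (hf : Integrable f μ) (hg : Integrable g μ)
    (b d : ℝ) : ∫ a, (b * f a + d - g a) ∂μ = b * ∫ a, f a ∂μ + d - ∫ a, g a ∂μ := by
  have hlin : Integrable (fun a => b * f a + d) μ := (hf.const_mul b).add (integrable_const d)
  rw [integral_sub hlin hg, integral_add (hf.const_mul b) (integrable_const d),
    integral_const_mul, integral_const, probReal_univ, one_smul]

variable {x : ℕ → α → ℝ} {X : α → ℝ} {c : ℕ → ℝ} {c₀ C : ℝ}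

theorem integral_mul_add_sub_log_le (hx0 : ∀ n a, 0 ≤ x n a) (hxi : ∀ n, Integrable (x n) μ)
    (hxC : ∀ n, ∫ a, x n a ∂μ ≤ C) (hc : Tendsto c atTop (𝓝 c₀))
    (hcx : ∀ᶠ n : ℕ in atTop, c n ≤ ∫ a, Real.log (x n a + 1 / (n + 1)) ∂μ)
    (hlim : ∀ᵐ a ∂μ, Tendsto (fun n => x n a) atTop (𝓝 (X a))) {ε : ℝ} (hε : 0 < ε) :
    (∀ᵐ a ∂μ, X a ≠ 0) ∧ Integrable (fun a => ε * X a + (ε - Real.log ε) - Real.log (X a)) μ ∧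
      ∫ a, (ε * X a + (ε - Real.log ε) - Real.log (X a)) ∂μ ≤ ε * C + (ε - Real.log ε) - c₀ := by
  have hδ (n : ℕ) : (0 : ℝ) < 1 / (n + 1) := Nat.one_div_pos_of_nat
  have hxδ {a : α} {y : ℝ} (ha : Tendsto (fun n => x n a) atTop (𝓝 y)) :
      Tendsto (fun n : ℕ => x n a + 1 / (n + 1)) atTop (𝓝 y) := by
    simpa using ha.add tendsto_one_div_add_atTop_nhds_zero_nat
  set A : ℕ → α → ℝ := fun n a => ε * x n a + (ε - Real.log ε) - Real.log (x n a + 1 / (n + 1))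
  have hA0 (n : ℕ) (a : α) : 0 ≤ A n a := by
    have h := log_le_mul_sub_log hε (add_pos_of_nonneg_of_pos (hx0 n a) (hδ n))
    have hδ1 : (1 : ℝ) / (n + 1) ≤ 1 := by
      simpa using Nat.one_div_le_one_div (α := ℝ) n.zero_le
    have hεδ := mul_le_of_le_one_right hε.le hδ1
    simp only [A]
    linarith
  have hlog (n : ℕ) := integrable_log_add_const (hxi n) (hx0 n) (hδ n)
  have hAi (n : ℕ) : Integrable (A n) μ :=
    (((hxi n).const_mul ε).add (integrable_const _)).sub (hlog n)
  have hAb : ∀ᶠ n in atTop, ∫ a, A n a ∂μ ≤ ε * C + (ε - Real.log ε) - c n := by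
    filter_upwards [hcx] with n hn
    rw [integral_mul_add_const_sub (hxi n) (hlog n)]
    gcongr
    exact hxC n
  have hX0 : ∀ᵐ a ∂μ, X a ≠ 0 := by
    filter_upwards [hlim, ae_not_tendsto_atTop_of_integral_le hAi
      (fun n => Eventually.of_forall (hA0 n)) hAb (hc.const_sub _)] with a ha hna hXa
    refine hna (tendsto_atTop_mono (fun n => ?_) (tendsto_atTop_add_const_left _ (ε - Real.log ε)
      (tendsto_neg_atBot_atTop.comp (Real.tendsto_log_nhdsGT_zero.comp
        (tendsto_nhdsWithin_iff.2 ⟨hxδ (hXa ▸ ha), Eventually.of_forall fun n =>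
          add_pos_of_nonneg_of_pos (hx0 n a) (hδ n)⟩)))))
    have := mul_nonneg hε.le (hx0 n a)
    simp only [A, Function.comp_apply]
    linarith
  refine ⟨hX0, integrable_and_integral_le_of_tendsto_ae hAi
    (fun n => Eventually.of_forall (hA0 n)) hAb (hc.const_sub _) ?_⟩
  filter_upwards [hlim, hX0] with a ha hXa
  exact ((ha.const_mul ε).add_const _).sub ((hxδ ha).log hXa)

theorem ae_ne_zero_and_le_integral_log (hx0 : ∀ n a, 0 ≤ x n a) (hxi : ∀ n, Integrable (x n) μ)
    (hxC : ∀ n, ∫ a, x n a ∂μ ≤ C) (hc : Tendsto c atTop (𝓝 c₀))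
    (hcx : ∀ᶠ n : ℕ in atTop, c n ≤ ∫ a, Real.log (x n a + 1 / (n + 1)) ∂μ)
    (hlim : ∀ᵐ a ∂μ, Tendsto (fun n => x n a) atTop (𝓝 (X a))) :
    (∀ᵐ a ∂μ, X a ≠ 0) ∧ Integrable X μ ∧ Integrable (fun a => Real.log (X a)) μ ∧
      c₀ ≤ ∫ a, Real.log (X a) ∂μ := by
  have main (ε : ℝ) (hε : 0 < ε) := integral_mul_add_sub_log_le hx0 hxi hxC hc hcx hlim hε
  have hX : Integrable X μ := (integrable_and_integral_le_of_tendsto_ae hxi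
    (fun n => Eventually.of_forall (hx0 n)) (Eventually.of_forall hxC) tendsto_const_nhds hlim).1
  have hX0 : 0 ≤ ∫ a, X a ∂μ := integral_nonneg_of_ae <| by
    filter_upwards [hlim] with a ha using ge_of_tendsto' ha (hx0 · a)
  have hlog : Integrable (fun a => Real.log (X a)) μ :=
    (((hX.const_mul 1).add (integrable_const (1 - Real.log 1))).sub (main 1 one_pos).2.1).congr
      (Eventually.of_forall fun a => by simp)
  refine ⟨(main 1 one_pos).1, hX, hlog, ?_⟩
  have hle (ε : ℝ) (hε : 0 < ε) : c₀ - ε * C ≤ ∫ a, Real.log (X a) ∂μ := by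
    have h := (main ε hε).2.2
    rw [integral_mul_add_const_sub hX hlog] at h
    linarith [mul_nonneg hε.le hX0]
  have ht : Tendsto (fun ε : ℝ => c₀ - ε * C) (𝓝[>] 0) (𝓝 (c₀ - 0 * C)) :=
    (Continuous.tendsto (by fun_prop) _).mono_left nhdsWithin_le_nhds
  rw [zero_mul, sub_zero] at ht
  exact le_of_tendsto ht (eventually_nhdsWithin_of_forall hle)

end LogFatou

section Dilation

variable {g : ℂ → ℂ}

theorem ofReal_mul_mem_ball {s : ℝ} (hs0 : 0 ≤ s) (hs1 : s < 1) {w : ℂ}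
    (hw : w ∈ closedBall (0 : ℂ) 1) : (s : ℂ) * w ∈ ball (0 : ℂ) 1 := by
  rw [mem_ball_zero_iff, norm_mul, norm_real, Real.norm_of_nonneg hs0]
  exact (mul_le_of_le_one_right hs0 (mem_closedBall_zero_iff.1 hw)).trans_lt hs1

theorem diffContOnCl_dilation (hg : DifferentiableOn ℂ g (ball 0 1)) {s : ℝ} (hs0 : 0 ≤ s)
    (hs1 : s < 1) : DiffContOnCl ℂ (fun w => g (s * w)) (ball 0 1) := by
  refine DifferentiableOn.diffContOnCl (hg.comp (by fun_prop) fun w hw => ?_)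
  rw [closure_ball 0 one_ne_zero] at hw
  exact ofReal_mul_mem_ball hs0 hs1 hw

theorem tendsto_dilation (hg : DifferentiableOn ℂ g (ball 0 1)) {s : ℕ → ℝ}
    (hs : Tendsto s atTop (𝓝 1)) {z : ℂ} (hz : z ∈ ball (0 : ℂ) 1) :
    Tendsto (fun n => g (s n * z)) atTop (𝓝 (g z)) := by
  have hsz : Tendsto (fun n => (s n : ℂ) * z) atTop (𝓝 z) := by
    simpa using ((continuous_ofReal.tendsto 1).comp hs).mul_const z
  exact (hg.differentiableAt (isOpen_ball.mem_nhds hz)).continuousAt.tendsto.comp hsz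

theorem log_norm_le_integral_log_harmonicMeasure (hg : DifferentiableOn ℂ g (ball 0 1))
    {s : ℕ → ℝ} (hs0 : ∀ n, 0 ≤ s n) (hs1 : ∀ n, s n < 1) (hs : Tendsto s atTop (𝓝 1)) {z : ℂ}
    (hz : z ∈ ball (0 : ℂ) 1) (hgz : g z ≠ 0) {C : ℝ}
    (hC : ∀ n, ∫ θ, ‖g (s n * circleMap 0 1 θ)‖ ∂harmonicMeasure z ≤ C) {G : ℂ → ℂ}
    (hG : ∀ᵐ θ ∂harmonicMeasure z,
      Tendsto (fun n => g (s n * circleMap 0 1 θ)) atTop (𝓝 (G (circleMap 0 1 θ)))) :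
    (∀ᵐ θ ∂harmonicMeasure z, ‖G (circleMap 0 1 θ)‖ ≠ 0) ∧
      Integrable (fun θ => ‖G (circleMap 0 1 θ)‖) (harmonicMeasure z) ∧
      Integrable (fun θ => Real.log ‖G (circleMap 0 1 θ)‖) (harmonicMeasure z) ∧
      Real.log ‖g z‖ ≤ ∫ θ, Real.log ‖G (circleMap 0 1 θ)‖ ∂harmonicMeasure z := by
  have := isProbabilityMeasure_harmonicMeasure hz
  have hcl (n : ℕ) := diffContOnCl_dilation hg (hs0 n) (hs1 n)
  have hcont (n : ℕ) : ContinuousOn (fun w : ℂ => ‖g (s n * w)‖) (sphere 0 1) :=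
    (continuousOn_sphere_of_diffContOnCl (hcl n)).norm
  have hgl := tendsto_dilation hg hs hz
  have hlow : ∀ᶠ n : ℕ in atTop, Real.log ‖g (s n * z)‖ ≤
      ∫ θ, Real.log (‖g (s n * circleMap 0 1 θ)‖ + 1 / (n + 1)) ∂harmonicMeasure z := by
    filter_upwards [hgl.eventually_ne hgz] with n hn
    have hpos (ζ : ℂ) : 0 < ‖g (s n * ζ)‖ + 1 / ((n : ℝ) + 1) := by positivity
    rw [Real.log_le_iff_le_exp (norm_pos_iff.2 hn)]
    refine norm_le_exp_integral_harmonicMeasure (hcl n) (φ := fun ζ =>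
      Real.log (‖g (s n * ζ)‖ + 1 / ((n : ℝ) + 1)))
      (((hcont n).add continuousOn_const).log fun ζ _ => (hpos ζ).ne') (fun ζ _ => ?_) hz
    rw [Real.exp_log (hpos ζ)]
    exact le_add_of_nonneg_right Nat.one_div_pos_of_nat.le
  exact ae_ne_zero_and_le_integral_log (fun n θ => norm_nonneg (g (s n * circleMap 0 1 θ)))
    (fun n => integrable_harmonicMeasure_of_continuousOn hz
      (f := fun w => ‖g (s n * w)‖) (hcont n)) hC
    (hgl.norm.log (norm_ne_zero_iff.2 hgz)) hlow (hG.mono fun θ hθ => hθ.norm)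

end Dilation

/-! ### Herglotz integrals -/

section Montel

theorem equicontinuousAt_of_norm_le {ι : Type*} {Φ : ι → ℂ → ℂ} {z : ℂ} {r M : ℝ} (hr : 0 < r)
    (hΦ : ∀ i, DifferentiableOn ℂ (Φ i) (ball z r)) (hM : ∀ i, ∀ w ∈ ball z r, ‖Φ i w‖ ≤ M) :
    EquicontinuousAt Φ z := by
  refine equicontinuousAt_of_continuity_modulus (fun w => (M + M) / r * dist w z) ?_ Φ ?_
  · simpa using ((tendsto_id (x := 𝓝 z)).dist (tendsto_const_nhds (x := z))).const_mul ((M + M) / r)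
  · filter_upwards [ball_mem_nhds z hr] with w hw i
    rw [dist_comm]
    refine dist_le_div_mul_dist_of_mapsTo_ball (hΦ i) (fun v hv => ?_) hw
    rw [mem_closedBall, dist_eq_norm]
    exact (norm_sub_le _ _).trans (add_le_add (hM i v hv) (hM i z (mem_ball_self hr)))

theorem exists_differentiableOn_tendsto_ultrafilter {ι : Type*} {U : Set ℂ} (hU : IsOpen U)
    {Φ : ι → ℂ → ℂ} (hΦ : ∀ i, DifferentiableOn ℂ (Φ i) U)
    (hM : ∀ z ∈ U, ∃ M, ∀ᶠ w in 𝓝 z, ∀ i, ‖Φ i w‖ ≤ M) (𝒰 : Ultrafilter ι) :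
    ∃ P : ℂ → ℂ, DifferentiableOn ℂ P U ∧
      ∀ z ∈ U, Tendsto (fun i => Φ i z) 𝒰 (𝓝 (P z)) := by
  have hlim (z : ℂ) (hz : z ∈ U) : ∃ c, Tendsto (fun i => Φ i z) 𝒰 (𝓝 c) := by
    obtain ⟨M, hMz⟩ := hM z hz
    obtain ⟨c, -, hc⟩ := isCompact_iff_ultrafilter_le_nhds.1 (isCompact_closedBall (0 : ℂ) M)
      (𝒰.map fun i => Φ i z) (le_principal_iff.2 <| Ultrafilter.mem_map.2 <|
        univ_mem' fun i => mem_closedBall_zero_iff.2 (hMz.self_of_nhds i))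
    exact ⟨c, hc⟩
  choose! P hP using hlim
  have hequi (K : Set ℂ) (hK : K ⊆ U) : EquicontinuousOn Φ K := by
    intro z hz
    obtain ⟨M, hM⟩ := hM z (hK hz)
    obtain ⟨r, hr, hrU⟩ := Metric.eventually_nhds_iff_ball.1 ((hU.eventually_mem (hK hz)).and hM)
    exact (equicontinuousAt_of_norm_le hr (fun i => (hΦ i).mono fun w hw => (hrU w hw).1)
      fun i w hw => (hrU w hw).2 i).equicontinuousWithinAt K
  refine ⟨P, TendstoLocallyUniformlyOn.differentiableOn (φ := 𝒰)
    ((tendstoLocallyUniformlyOn_iff_forall_isCompact hU).2 fun K hKU hK => ?_)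
    (Eventually.of_forall hΦ) hU, hP⟩
  refine UniformOnFun.tendsto_iff_tendstoUniformlyOn.1
    ((EquicontinuousOn.tendsto_uniformOnFun_iff_pi' (𝔖 := {K}) (by simpa using hK)
      (by simpa using hequi K hKU) 𝒰 P).2 ?_) K rfl
  rw [sUnion_singleton]
  exact tendsto_pi_nhds.2 fun z => hP z (hKU z.2)

end Montel

section Herglotz

/-- The Herglotz integral of a function `φ` on the unit circle: the holomorphic function on the
unit disc whose real part is the Poisson integral of `φ`, real at the origin. -/
def herglotz (φ : ℂ → ℝ) (z : ℂ) : ℂ :=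
  Real.circleAverage (fun ζ => herglotzRieszKernel 0 z ζ • (φ ζ : ℂ)) 0 1

variable {φ : ℂ → ℝ}

theorem differentiableOn_herglotz
    (hφ : Integrable (fun θ => φ (circleMap 0 1 θ)) (harmonicMeasure 0)) :
    DifferentiableOn ℂ (herglotz φ) (ball 0 1) :=
  differentiableOn_circleAverage_herglotzRieszKernel_smul
    (integrable_harmonicMeasure_zero (f := fun ζ => (φ ζ : ℂ)) |>.1 hφ.ofReal)

theorem re_herglotz (hφ : Integrable (fun θ => φ (circleMap 0 1 θ)) (harmonicMeasure 0)) {z : ℂ}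
    (hz : z ∈ ball (0 : ℂ) 1) :
    (herglotz φ z).re = ∫ θ, φ (circleMap 0 1 θ) ∂harmonicMeasure z := by
  rw [herglotz, re_circleAverage_herglotzRieszKernel_smul (integrable_harmonicMeasure_zero.1 hφ) hz,
    ← poissonKernel_eq_re_herglotzRieszKernel, integral_harmonicMeasure hz]

theorem norm_herglotz_le (hφ : Integrable (fun θ => φ (circleMap 0 1 θ)) (harmonicMeasure 0))
    {z : ℂ} (hz : z ∈ ball (0 : ℂ) 1) :
    ‖herglotz φ z‖ ≤ 2 / (1 - ‖z‖) * ∫ θ, |φ (circleMap 0 1 θ)| ∂harmonicMeasure 0 := by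
  have hz1 : 0 < 1 - ‖z‖ := sub_pos.2 (mem_ball_zero_iff.1 hz)
  rw [herglotz, ← integral_harmonicMeasure_zero, ← integral_const_mul]
  refine norm_integral_le_of_norm_le (hφ.abs.const_mul _) (Eventually.of_forall fun θ => ?_)
  have hζ : ‖circleMap 0 1 θ‖ = 1 := by simp
  rw [norm_smul, norm_real, Real.norm_eq_abs, herglotzRieszKernel_def, sub_zero, sub_zero, norm_div]
  gcongr
  · exact (norm_add_le _ _).trans (by linarith)
  · simpa only [hζ] using norm_sub_norm_le (circleMap 0 1 θ) z

/-- The dominant is a normal-families limit of the Herglotz integrals of the dilations. -/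
theorem exists_norm_le_re {g : ℂ → ℂ} (hg : DifferentiableOn ℂ g (ball 0 1)) {s : ℕ → ℝ}
    (hs0 : ∀ n, 0 ≤ s n) (hs1 : ∀ n, s n < 1) (hs : Tendsto s atTop (𝓝 1)) {C : ℝ}
    (hC : ∀ n, ∫ θ, ‖g (s n * circleMap 0 1 θ)‖ ∂harmonicMeasure 0 ≤ C) :
    ∃ P : ℂ → ℂ, DifferentiableOn ℂ P (ball 0 1) ∧ ∀ z ∈ ball (0 : ℂ) 1, ‖g z‖ ≤ (P z).re := by
  have hcl (n : ℕ) := diffContOnCl_dilation hg (hs0 n) (hs1 n)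
  have hint (n : ℕ) := integrable_harmonicMeasure_of_continuousOn (mem_ball_self one_pos)
    (f := fun w : ℂ => ‖g (s n * w)‖) (continuousOn_sphere_of_diffContOnCl (hcl n)).norm
  have hbound (z : ℂ) (hz : z ∈ ball (0 : ℂ) 1) : ∃ M, ∀ᶠ w in 𝓝 z, ∀ n,
      ‖herglotz (fun ζ => ‖g (s n * ζ)‖) w‖ ≤ M := by
    obtain ⟨ρ, hzρ, hρ⟩ := exists_between (mem_ball_zero_iff.1 hz)
    refine ⟨2 / (1 - ρ) * C, ?_⟩
    filter_upwards [continuous_norm.continuousAt.eventually_lt_const hzρ] with w hw n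
    refine (norm_herglotz_le (φ := fun ζ => ‖g (s n * ζ)‖) (hint n)
      (mem_ball_zero_iff.2 (hw.trans hρ))).trans ?_
    simp only [abs_norm]
    have : 0 < 1 - ρ := sub_pos.2 hρ
    gcongr
    exact hC n
  obtain ⟨P, hP, hlim⟩ := exists_differentiableOn_tendsto_ultrafilter isOpen_ball
    (Φ := fun n => herglotz fun ζ => ‖g (s n * ζ)‖)
    (fun n => differentiableOn_herglotz (hint n)) hbound (hyperfilter ℕ)
  refine ⟨P, hP, fun z hz => le_of_tendsto_of_tendsto' ((tendsto_dilation hg hs hz).norm.mono_left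
    Nat.hyperfilter_le_atTop) ((continuous_re.tendsto _).comp (hlim z hz)) fun n => ?_⟩
  rw [Function.comp_apply, re_herglotz (φ := fun ζ => ‖g (s n * ζ)‖) (hint n) hz]
  exact norm_le_integral_norm_harmonicMeasure hz (hcl n)

end Herglotz

section NontangentialLimit

theorem one_sub_norm_le_infDist_frontier_unitBall (z : ℂ) :
    1 - ‖z‖ ≤ infDist z (frontier (ball (0 : ℂ) 1)) := by
  rw [frontier_ball 0 one_ne_zero, le_infDist ⟨1, by simp⟩]
  intro ζ hζ
  rw [← mem_sphere_zero_iff_norm.1 hζ, dist_comm, dist_eq_norm]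
  exact norm_sub_norm_le _ _

theorem NTLim.tendsto_radial {g : ℂ → ℂ} {θ : ℝ} {L : ℂ}
    (h : NTLim (ball 0 1) g (circleMap 0 1 θ) L) {s : ℕ → ℝ} (hs0 : ∀ n, 0 ≤ s n)
    (hs1 : ∀ n, s n < 1) (hs : Tendsto s atTop (𝓝 1)) :
    Tendsto (fun n => g (s n * circleMap 0 1 θ)) atTop (𝓝 L) := by
  refine (h 2 one_lt_two).comp (tendsto_nhdsWithin_iff.2 ⟨?_, Eventually.of_forall fun n => ?_⟩)
  · simpa using ((continuous_ofReal.tendsto 1).comp hs).mul_const (circleMap 0 1 θ)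
  · have hζ : ‖circleMap 0 1 θ‖ = 1 := by simp
    have hnorm : ‖(s n : ℂ) * circleMap 0 1 θ‖ = s n := by
      rw [norm_mul, hζ, norm_real, Real.norm_of_nonneg (hs0 n), mul_one]
    have hdist : dist (s n * circleMap 0 1 θ) (circleMap 0 1 θ) = 1 - s n := by
      rw [dist_comm, dist_eq_norm, ← one_sub_mul, norm_mul, hζ, mul_one, ← ofReal_one,
        ← ofReal_sub, norm_real, Real.norm_of_nonneg (sub_nonneg.2 (hs1 n).le)]
    refine ⟨mem_ball_zero_iff.2 (hnorm.trans_lt (hs1 n)), ?_⟩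
    have := one_sub_norm_le_infDist_frontier_unitBall (s n * circleMap 0 1 θ)
    rw [hnorm] at this
    rw [hdist]
    linarith [hs1 n]

theorem NTLim.congr {Ω : Set ℂ} {g h : ℂ → ℂ} {ξ L : ℂ} (hg : NTLim Ω g ξ L) (hgh : EqOn g h Ω) :
    NTLim Ω h ξ L := fun C hC =>
  (hg C hC).congr' (eventually_nhdsWithin_of_forall fun _ hz => hgh hz.1)

theorem NTLim.div {Ω : Set ℂ} {g h : ℂ → ℂ} {ξ L M : ℂ} (hg : NTLim Ω g ξ L) (hh : NTLim Ω h ξ M)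
    (hM : M ≠ 0) : NTLim Ω (fun z => g z / h z) ξ (L / M) :=
  fun C hC => (hg C hC).div (hh C hC) hM

/-- The nontangential limit at `ξ` of a function on the unit disc, with junk value `0` where there
is none. -/
def boundaryValue (g : ℂ → ℂ) (ξ : ℂ) : ℂ :=
  open Classical in if h : ∃ L, NTLim (ball 0 1) g ξ L then h.choose else 0

theorem NTLim_boundaryValue {g : ℂ → ℂ} {ξ : ℂ} (h : ∃ L, NTLim (ball 0 1) g ξ L) :
    NTLim (ball 0 1) g ξ (boundaryValue g ξ) := by
  rw [boundaryValue, dif_pos h]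
  exact h.choose_spec

theorem ae_boundaryValue_ne_zero {b : ℂ → ℂ} (hb : DifferentiableOn ℂ b (ball 0 1)) {M : ℝ}
    (hM : ∀ z ∈ ball (0 : ℂ) 1, ‖b z‖ ≤ M) (hb0 : b 0 ≠ 0) :
    ∀ᵐ θ ∂harmonicMeasure 0, boundaryValue b (circleMap 0 1 θ) ≠ 0 := by
  have h0 : (0 : ℂ) ∈ ball (0 : ℂ) 1 := mem_ball_self one_pos
  have := isProbabilityMeasure_harmonicMeasure h0
  obtain ⟨s, -, hs01, hs⟩ := exists_seq_strictMono_tendsto' (zero_lt_one' ℝ)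
  have hmean (n : ℕ) : ∫ θ, ‖b (s n * circleMap 0 1 θ)‖ ∂harmonicMeasure 0 ≤ M := by
    have hint := integrable_harmonicMeasure_of_continuousOn h0 (f := fun w : ℂ => ‖b (s n * w)‖)
      (continuousOn_sphere_of_diffContOnCl
        (diffContOnCl_dilation hb (hs01 n).1.le (hs01 n).2)).norm
    refine (integral_mono hint (integrable_const M) fun θ => hM _ (ofReal_mul_mem_ball (hs01 n).1.le
      (hs01 n).2 (sphere_subset_closedBall (circleMap_zero_one_mem_sphere θ)))).trans_eq (by simp)
  have hlim := ae_harmonicMeasure (ae_exists_NTLim_of_bounded hb hM) 0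
  filter_upwards [(log_norm_le_integral_log_harmonicMeasure hb (fun n => (hs01 n).1.le)
    (fun n => (hs01 n).2) hs h0 hb0 hmean (hlim.mono fun θ hθ => (NTLim_boundaryValue
      hθ).tendsto_radial (fun n => (hs01 n).1.le) (fun n => (hs01 n).2) hs)).1] with θ hθ
  exact norm_ne_zero_iff.1 hθ

/-- Fatou's theorem: `g / (1 + P)` and `1 / (1 + P)` are bounded by `1`. -/
theorem ae_NTLim_of_norm_le_re {g P : ℂ → ℂ} (hg : DifferentiableOn ℂ g (ball 0 1))
    (hP : DifferentiableOn ℂ P (ball 0 1)) (hgP : ∀ z ∈ ball (0 : ℂ) 1, ‖g z‖ ≤ (P z).re) :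
    ∀ᵐ θ ∂harmonicMeasure 0,
      NTLim (ball 0 1) g (circleMap 0 1 θ) (boundaryValue g (circleMap 0 1 θ)) := by
  have hnorm (z : ℂ) (hz : z ∈ ball (0 : ℂ) 1) : 1 ≤ ‖1 + P z‖ ∧ ‖g z‖ ≤ ‖1 + P z‖ := by
    have h := re_le_norm (1 + P z)
    rw [add_re, one_re] at h
    constructor <;> linarith [hgP z hz, norm_nonneg (g z)]
  have hne (z : ℂ) (hz : z ∈ ball (0 : ℂ) 1) : 1 + P z ≠ 0 :=
    norm_pos_iff.1 (one_pos.trans_le (hnorm z hz).1)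
  have hnum : DifferentiableOn ℂ (fun z => g z / (1 + P z)) (ball 0 1) :=
    hg.div (hP.const_add 1) hne
  have hden : DifferentiableOn ℂ (fun z => 1 / (1 + P z)) (ball 0 1) :=
    (differentiableOn_const 1).div (hP.const_add 1) hne
  have hnum1 (z : ℂ) (hz : z ∈ ball (0 : ℂ) 1) : ‖g z / (1 + P z)‖ ≤ 1 := by
    rw [norm_div]
    exact div_le_one_of_le₀ (hnorm z hz).2 (norm_nonneg _)
  have hden1 (z : ℂ) (hz : z ∈ ball (0 : ℂ) 1) : ‖1 / (1 + P z)‖ ≤ 1 := by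
    rw [norm_div, norm_one]
    exact div_le_one_of_le₀ (hnorm z hz).1 (norm_nonneg _)
  filter_upwards [ae_harmonicMeasure (ae_exists_NTLim_of_bounded hnum hnum1) 0,
    ae_harmonicMeasure (ae_exists_NTLim_of_bounded hden hden1) 0,
    ae_boundaryValue_ne_zero hden hden1
      (div_ne_zero one_ne_zero (hne 0 (mem_ball_self one_pos)))] with θ ⟨L, hL⟩ hdenθ hdenθ0
  refine NTLim_boundaryValue ⟨_, (hL.div (NTLim_boundaryValue hdenθ) hdenθ0).congr fun z hz => ?_⟩
  have := hne z hz
  field_simp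

end NontangentialLimit

/-! ### Outer functions and the Hardy space `H¹` -/

section Outer

theorem exp_integral_log_rpow_le {α : Type*} [MeasurableSpace α] {μ : Measure α}
    [IsProbabilityMeasure μ] {X : α → ℝ} (hX : ∀ᵐ a ∂μ, 0 < X a)
    (hlog : Integrable (fun a => Real.log (X a)) μ) {p : ℝ}
    (hp : Integrable (fun a => X a ^ p) μ) :
    Real.exp (∫ a, Real.log (X a) ∂μ) ^ p ≤ ∫ a, X a ^ p ∂μ := by
  have hexp : (fun a => X a ^ p) =ᵐ[μ] fun a => Real.exp (Real.log (X a) * p) :=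
    hX.mono fun a ha => Real.rpow_def_of_pos ha p
  rw [← Real.exp_mul, ← integral_mul_const, integral_congr_ae hexp]
  exact convexOn_exp.map_integral_le Real.continuous_exp.continuousOn isClosed_univ (by simp)
    (hlog.mul_const p) (hp.congr hexp)

/-- The outer function on the unit disc whose modulus on the unit circle is `w`. -/
def outerFunction (w : ℂ → ℝ) (z : ℂ) : ℂ :=
  Complex.exp (herglotz (fun ζ => Real.log (w ζ)) z)

variable {w : ℂ → ℝ}

theorem differentiableOn_outerFunction
    (hlog : Integrable (fun θ => Real.log (w (circleMap 0 1 θ))) (harmonicMeasure 0)) :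
    DifferentiableOn ℂ (outerFunction w) (ball 0 1) :=
  (differentiableOn_herglotz (φ := fun ζ => Real.log (w ζ)) hlog).cexp

theorem norm_outerFunction
    (hlog : Integrable (fun θ => Real.log (w (circleMap 0 1 θ))) (harmonicMeasure 0)) {z : ℂ}
    (hz : z ∈ ball (0 : ℂ) 1) :
    ‖outerFunction w z‖ = Real.exp (∫ θ, Real.log (w (circleMap 0 1 θ)) ∂harmonicMeasure z) := by
  rw [outerFunction, norm_exp, re_herglotz (φ := fun ζ => Real.log (w ζ)) hlog hz]

theorem norm_outerFunction_rpow_le (hw : ∀ᵐ θ ∂harmonicMeasure 0, 0 < w (circleMap 0 1 θ))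
    (hlog : Integrable (fun θ => Real.log (w (circleMap 0 1 θ))) (harmonicMeasure 0)) {p : ℝ}
    (hp : Integrable (fun θ => w (circleMap 0 1 θ) ^ p) (harmonicMeasure 0)) {z : ℂ}
    (hz : z ∈ ball (0 : ℂ) 1) :
    ‖outerFunction w z‖ ^ p ≤ ∫ θ, w (circleMap 0 1 θ) ^ p ∂harmonicMeasure z := by
  have h0 : (0 : ℂ) ∈ ball (0 : ℂ) 1 := mem_ball_self one_pos
  have := isProbabilityMeasure_harmonicMeasure hz
  rw [norm_outerFunction hlog hz]
  exact exp_integral_log_rpow_le (ae_harmonicMeasure_congr h0 hz hw)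
    ((integrable_harmonicMeasure_congr h0 hz).1 hlog)
    ((integrable_harmonicMeasure_congr h0 hz).1 hp)

variable (hw : ∀ᵐ θ ∂harmonicMeasure 0, 0 < w (circleMap 0 1 θ))
  (hlog : Integrable (fun θ => Real.log (w (circleMap 0 1 θ))) (harmonicMeasure 0))
  (hint : Integrable (fun θ => w (circleMap 0 1 θ)) (harmonicMeasure 0))

include hw hlog hint

theorem norm_outerFunction_le_re_herglotz {z : ℂ} (hz : z ∈ ball (0 : ℂ) 1) :
    ‖outerFunction w z‖ ≤ (herglotz w z).re := by
  simpa only [Real.rpow_one, re_herglotz hint hz] using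
    norm_outerFunction_rpow_le hw hlog (p := 1) (by simpa only [Real.rpow_one] using hint) hz

theorem ae_NTLim_outerFunction :
    ∀ᵐ θ ∂harmonicMeasure 0, NTLim (ball 0 1) (outerFunction w) (circleMap 0 1 θ)
      (boundaryValue (outerFunction w) (circleMap 0 1 θ)) :=
  ae_NTLim_of_norm_le_re (differentiableOn_outerFunction hlog) (differentiableOn_herglotz hint)
    fun _ => norm_outerFunction_le_re_herglotz hw hlog hint

theorem integral_norm_outerFunction_dilation_le {s : ℝ} (hs0 : 0 ≤ s) (hs1 : s < 1) :
    ∫ θ, ‖outerFunction w (s * circleMap 0 1 θ)‖ ∂harmonicMeasure 0 ≤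
      ∫ θ, w (circleMap 0 1 θ) ∂harmonicMeasure 0 := by
  have h0 : (0 : ℂ) ∈ ball (0 : ℂ) 1 := mem_ball_self one_pos
  have houter := diffContOnCl_dilation (differentiableOn_outerFunction hlog) hs0 hs1
  have hherg := diffContOnCl_dilation (differentiableOn_herglotz hint) hs0 hs1
  calc ∫ θ, ‖outerFunction w (s * circleMap 0 1 θ)‖ ∂harmonicMeasure 0
      ≤ ∫ θ, (herglotz w (s * circleMap 0 1 θ)).re ∂harmonicMeasure 0 :=
        integral_mono
          (integrable_harmonicMeasure_of_continuousOn h0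
            (f := fun ζ : ℂ => ‖outerFunction w (s * ζ)‖) (continuousOn_sphere_of_diffContOnCl
              houter).norm)
          (integrable_harmonicMeasure_of_continuousOn h0 (f := fun ζ : ℂ => (herglotz w (s * ζ)).re)
            (continuous_re.comp_continuousOn (continuousOn_sphere_of_diffContOnCl hherg)))
          fun θ => norm_outerFunction_le_re_herglotz hw hlog hint (ofReal_mul_mem_ball hs0 hs1
            (sphere_subset_closedBall (circleMap_zero_one_mem_sphere θ)))
    _ = (herglotz w 0).re := by
        rw [integral_re_harmonicMeasure_of_diffContOnCl h0 hherg, mul_zero]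
    _ = ∫ θ, w (circleMap 0 1 θ) ∂harmonicMeasure 0 := re_herglotz hint h0

theorem ae_norm_boundaryValue_outerFunction
    (hle : ∀ᵐ θ ∂harmonicMeasure 0,
      w (circleMap 0 1 θ) ≤ ‖boundaryValue (outerFunction w) (circleMap 0 1 θ)‖) :
    ∀ᵐ θ ∂harmonicMeasure 0,
      ‖boundaryValue (outerFunction w) (circleMap 0 1 θ)‖ = w (circleMap 0 1 θ) := by
  obtain ⟨s, -, hs01, hs⟩ := exists_seq_strictMono_tendsto' (zero_lt_one' ℝ)
  obtain ⟨hbint, hbw⟩ := integrable_and_integral_le_of_tendsto_ae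
    (f := fun n θ => ‖outerFunction w (s n * circleMap 0 1 θ)‖)
    (F := fun θ => ‖boundaryValue (outerFunction w) (circleMap 0 1 θ)‖)
    (fun n => integrable_harmonicMeasure_of_continuousOn (mem_ball_self one_pos)
      (f := fun ζ : ℂ => ‖outerFunction w (s n * ζ)‖) (continuousOn_sphere_of_diffContOnCl <|
        diffContOnCl_dilation (differentiableOn_outerFunction hlog)
          (hs01 n).1.le (hs01 n).2).norm)
    (fun n => Eventually.of_forall fun θ => norm_nonneg _)
    (Eventually.of_forall fun n =>
      integral_norm_outerFunction_dilation_le hw hlog hint (hs01 n).1.le (hs01 n).2)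
    tendsto_const_nhds ((ae_NTLim_outerFunction hw hlog hint).mono fun θ hθ =>
      (hθ.tendsto_radial (fun n => (hs01 n).1.le) (fun n => (hs01 n).2) hs).norm)
  have hzero := (integral_eq_zero_iff_of_nonneg_ae (hle.mono fun θ hθ => sub_nonneg.2 hθ)
    (hbint.sub hint)).1 <| by
      refine le_antisymm ?_ (integral_nonneg_of_ae (hle.mono fun θ hθ => sub_nonneg.2 hθ))
      rw [integral_sub hbint hint]
      exact sub_nonpos.2 hbw
  exact hzero.mono fun θ hθ => sub_eq_zero.1 hθ

end Outer

section HardyOne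

/-- The Hardy space `H¹` of the unit disc. Boundedness of the means is only required along some
sequence of radii, which is equivalent because the means increase with the radius. -/
structure MemHardyOne (g : ℂ → ℂ) : Prop where
  differentiableOn : DifferentiableOn ℂ g (ball 0 1)
  exists_radii : ∃ s : ℕ → ℝ, (∀ n, 0 ≤ s n) ∧ (∀ n, s n < 1) ∧ Tendsto s atTop (𝓝 1) ∧
    ∃ C, ∀ n, ∫ θ, ‖g (s n * circleMap 0 1 θ)‖ ∂harmonicMeasure 0 ≤ C

namespace MemHardyOne

variable {g : ℂ → ℂ} (hg : MemHardyOne g)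

include hg

theorem ae_NTLim : ∀ᵐ θ ∂harmonicMeasure 0,
    NTLim (ball 0 1) g (circleMap 0 1 θ) (boundaryValue g (circleMap 0 1 θ)) := by
  obtain ⟨s, hs0, hs1, hs, C, hC⟩ := hg.exists_radii
  obtain ⟨P, hP, hgP⟩ := exists_norm_le_re hg.differentiableOn hs0 hs1 hs hC
  exact ae_NTLim_of_norm_le_re hg.differentiableOn hP hgP

theorem log_norm_le_integral {z : ℂ} (hz : z ∈ ball (0 : ℂ) 1) (hgz : g z ≠ 0) :
    (∀ᵐ θ ∂harmonicMeasure z, ‖boundaryValue g (circleMap 0 1 θ)‖ ≠ 0) ∧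
      Integrable (fun θ => ‖boundaryValue g (circleMap 0 1 θ)‖) (harmonicMeasure z) ∧
      Integrable (fun θ => Real.log ‖boundaryValue g (circleMap 0 1 θ)‖) (harmonicMeasure z) ∧
      Real.log ‖g z‖ ≤
        ∫ θ, Real.log ‖boundaryValue g (circleMap 0 1 θ)‖ ∂harmonicMeasure z := by
  obtain ⟨s, hs0, hs1, hs, C, hC⟩ := hg.exists_radii
  have h0 : (0 : ℂ) ∈ ball (0 : ℂ) 1 := mem_ball_self one_pos
  have hz1 : 0 < 1 - ‖z‖ := sub_pos.2 (mem_ball_zero_iff.1 hz)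
  have hlez := harmonicMeasure_le_smul hz h0
  refine log_norm_le_integral_log_harmonicMeasure hg.differentiableOn hs0 hs1 hs hz hgz
    (C := (1 + ‖z‖) / (1 - ‖z‖) * C) (fun n => ?_) ((ae_harmonicMeasure_congr h0 hz
      hg.ae_NTLim).mono fun θ hθ => hθ.tendsto_radial hs0 hs1 hs)
  have hint := integrable_harmonicMeasure_of_continuousOn h0 (f := fun ζ : ℂ => ‖g (s n * ζ)‖)
    (continuousOn_sphere_of_diffContOnCl
      (diffContOnCl_dilation hg.differentiableOn (hs0 n) (hs1 n))).norm
  refine (integral_mono_measure hlez (Eventually.of_forall fun θ => norm_nonneg _)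
    (hint.smul_measure ENNReal.ofReal_ne_top)).trans ?_
  rw [integral_smul_measure, norm_zero, add_zero, sub_zero, div_one, mul_one,
    ENNReal.toReal_ofReal (by positivity), smul_eq_mul]
  gcongr
  exact hC n

variable (hne : ∃ z ∈ ball (0 : ℂ) 1, g z ≠ 0)

include hne

theorem ae_boundaryValue_pos :
    ∀ᵐ θ ∂harmonicMeasure 0, 0 < ‖boundaryValue g (circleMap 0 1 θ)‖ := by
  obtain ⟨z, hz, hgz⟩ := hne
  exact (ae_harmonicMeasure_congr hz (mem_ball_self one_pos)
    (hg.log_norm_le_integral hz hgz).1).mono fun θ hθ => (norm_nonneg _).lt_of_ne' hθ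

theorem integrable_norm_boundaryValue :
    Integrable (fun θ => ‖boundaryValue g (circleMap 0 1 θ)‖) (harmonicMeasure 0) := by
  obtain ⟨z, hz, hgz⟩ := hne
  exact (integrable_harmonicMeasure_congr hz (mem_ball_self one_pos)).1
    (hg.log_norm_le_integral hz hgz).2.1

theorem integrable_log_norm_boundaryValue :
    Integrable (fun θ => Real.log ‖boundaryValue g (circleMap 0 1 θ)‖) (harmonicMeasure 0) := by
  obtain ⟨z, hz, hgz⟩ := hne
  exact (integrable_harmonicMeasure_congr hz (mem_ball_self one_pos)).1
    (hg.log_norm_le_integral hz hgz).2.2.1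

theorem norm_le_norm_outerFunction {z : ℂ} (hz : z ∈ ball (0 : ℂ) 1) :
    ‖g z‖ ≤ ‖outerFunction (fun ζ => ‖boundaryValue g ζ‖) z‖ := by
  obtain hgz | hgz := eq_or_ne (g z) 0
  · rw [hgz, norm_zero]
    exact norm_nonneg _
  · rw [norm_outerFunction (w := fun ζ => ‖boundaryValue g ζ‖)
        (hg.integrable_log_norm_boundaryValue hne) hz,
      ← Real.log_le_iff_le_exp (norm_pos_iff.2 hgz)]
    exact (hg.log_norm_le_integral hz hgz).2.2.2

theorem ae_norm_boundaryValue_outerFunction_eq :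
    ∀ᵐ θ ∂harmonicMeasure 0,
      ‖boundaryValue (outerFunction fun ζ => ‖boundaryValue g ζ‖) (circleMap 0 1 θ)‖ =
        ‖boundaryValue g (circleMap 0 1 θ)‖ := by
  have hpos := hg.ae_boundaryValue_pos hne
  have hlog := hg.integrable_log_norm_boundaryValue hne
  have hint := hg.integrable_norm_boundaryValue hne
  obtain ⟨s, hs0, hs1, hs, -⟩ := hg.exists_radii
  refine ae_norm_boundaryValue_outerFunction (w := fun ζ => ‖boundaryValue g ζ‖) hpos hlog hint ?_
  filter_upwards [hg.ae_NTLim,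
    ae_NTLim_outerFunction (w := fun ζ => ‖boundaryValue g ζ‖) hpos hlog hint] with θ hgθ houterθ
  exact le_of_tendsto_of_tendsto' (hgθ.tendsto_radial hs0 hs1 hs).norm
    (houterθ.tendsto_radial hs0 hs1 hs).norm fun n => hg.norm_le_norm_outerFunction hne
      (ofReal_mul_mem_ball (hs0 n) (hs1 n)
        (sphere_subset_closedBall (circleMap_zero_one_mem_sphere θ)))

end MemHardyOne

end HardyOne

/-! ### Arc length of the circle -/

theorem injOn_circleMap_Ioc : InjOn (circleMap 0 1) (Ioc 0 (2 * π)) := by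
  have hinj := injOn_circleMap_of_abs_sub_le (a := 0) (b := 2 * π) (R := 1) (c := 0) one_ne_zero
    (by rw [zero_sub, abs_neg, abs_of_pos Real.two_pi_pos])
  rwa [uIoc_of_le Real.two_pi_pos.le] at hinj

-- The arc is at least as long as its orthogonal projection to the tangent at `circleMap 0 1 a`.
theorem two_mul_sin_le_hausdorffMeasure_arc (a : ℝ) {d : ℝ} (hd : 0 ≤ d) :
    ENNReal.ofReal (2 * Real.sin d) ≤ μH[1] (circleMap 0 1 '' Ioc (a - d) (a + d)) := by
  set T : Set ℂ := circleMap 0 1 '' Ioc (a - d) (a + d)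
  let proj : ℂ → ℝ := fun z => (exp (-(a * I)) * z).im
  have hproj : LipschitzWith 1 proj := by
    refine LipschitzWith.of_dist_le_mul fun x y => ?_
    rw [Real.dist_eq, dist_eq_norm, NNReal.coe_one, one_mul, ← sub_im, ← mul_sub]
    refine (abs_im_le_norm _).trans_eq ?_
    rw [norm_mul, show -(a * I) = ((-a : ℝ) : ℂ) * I by push_cast; ring, norm_exp_ofReal_mul_I,
      one_mul]
  have hsub : Ioc (-Real.sin d) (Real.sin d) ⊆ proj '' T := by
    have hivt := intermediate_value_Ioc (a := -d) (b := d) (by linarith)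
      (Real.continuous_sin.continuousOn (s := Icc (-d) d))
    rw [Real.sin_neg] at hivt
    refine hivt.trans ?_
    rintro _ ⟨t, ht, rfl⟩
    refine ⟨_, ⟨a + t, ⟨by linarith [ht.1], by linarith [ht.2]⟩, rfl⟩, ?_⟩
    have harg : -(a * I) + ((a + t : ℝ) : ℂ) * I = (t : ℂ) * I := by push_cast; ring
    simp only [proj, circleMap, ofReal_one, one_mul, zero_add]
    rw [← Complex.exp_add, harg, exp_ofReal_mul_I_im]
  calc ENNReal.ofReal (2 * Real.sin d)
      = volume (Ioc (-Real.sin d) (Real.sin d)) := by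
        rw [Real.volume_Ioc, sub_neg_eq_add, two_mul]
    _ ≤ μH[1] (proj '' T) := by
        rw [hausdorffMeasure_real]
        exact measure_mono hsub
    _ ≤ μH[1] T := by
        simpa using (hproj.lipschitzOnWith (s := T)).hausdorffMeasure_image_le zero_le_one

theorem pairwiseDisjoint_circleMap_image_Ioc {s : Set ℕ} {A : ℕ → Set ℝ}
    (hA : Pairwise (Function.onFun Disjoint A)) (hsub : ∀ k ∈ s, A k ⊆ Ioc 0 (2 * π)) :
    s.PairwiseDisjoint fun k => circleMap 0 1 '' A k := by
  refine fun i hi j hj hij => Set.disjoint_left.2 ?_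
  rintro _ ⟨x, hx, rfl⟩ ⟨y, hy, hxy⟩
  exact Set.disjoint_left.1 (hA hij) hx
    (injOn_circleMap_Ioc (hsub j hj hy) (hsub i hi hx) hxy ▸ hy)

theorem mul_two_mul_sin_le_hausdorffMeasure_sphere {n : ℕ} (hn : n ≠ 0) :
    ENNReal.ofReal (n * (2 * Real.sin (π / n))) ≤ μH[1] (sphere (0 : ℂ) 1) := by
  have hn0 : (0 : ℝ) < n := by positivity
  have hpos : 0 < π / n := by positivity
  let A : ℕ → Set ℝ := fun k => Ioc ((2 * k) * (π / n)) ((2 * (k + 1 : ℕ)) * (π / n))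
  have hcenter (k : ℕ) :
      A k = Ioc ((2 * k + 1) * (π / n) - π / n) ((2 * k + 1) * (π / n) + π / n) := by
    simp only [A]
    congr 1 <;> push_cast <;> ring
  have hAsub : ∀ k ∈ Finset.range n, A k ⊆ Ioc 0 (2 * π) := by
    refine fun k hk => Ioc_subset_Ioc (by positivity) ?_
    have hkn : ((k + 1 : ℕ) : ℝ) ≤ n := by exact_mod_cast Finset.mem_range.1 hk
    calc 2 * ((k + 1 : ℕ) : ℝ) * (π / n) ≤ 2 * n * (π / n) := by gcongr
      _ = 2 * π := by field_simp
  have hmono : Monotone fun k : ℕ => (2 * (k : ℝ)) * (π / n) := fun a b hab => by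
    have : (a : ℝ) ≤ b := by exact_mod_cast hab
    simp only
    gcongr
  have hdisj := pairwiseDisjoint_circleMap_image_Ioc (s := ↑(Finset.range n))
    hmono.pairwise_disjoint_on_Ioc_succ hAsub
  have hmeas : ∀ k ∈ Finset.range n, MeasurableSet (circleMap 0 1 '' A k) := fun k hk =>
    measurableSet_Ioc.image_of_continuousOn_injOn (continuous_circleMap 0 1).continuousOn
      (injOn_circleMap_Ioc.mono (hAsub k hk))
  calc ENNReal.ofReal (n * (2 * Real.sin (π / n)))
      = ∑ k ∈ Finset.range n, ENNReal.ofReal (2 * Real.sin (π / n)) := by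
        rw [Finset.sum_const, Finset.card_range, nsmul_eq_mul, ENNReal.ofReal_mul hn0.le,
          ENNReal.ofReal_natCast]
    _ ≤ ∑ k ∈ Finset.range n, μH[1] (circleMap 0 1 '' A k) := by
        refine Finset.sum_le_sum fun k _ => ?_
        rw [hcenter]
        exact two_mul_sin_le_hausdorffMeasure_arc _ hpos.le
    _ = μH[1] (⋃ k ∈ Finset.range n, circleMap 0 1 '' A k) :=
        (measure_biUnion_finset hdisj hmeas).symm
    _ ≤ μH[1] (sphere (0 : ℂ) 1) :=
        measure_mono <| iUnion₂_subset fun k _ => by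
          rintro _ ⟨t, -, rfl⟩
          exact circleMap_zero_one_mem_sphere t

theorem two_pi_le_hausdorffMeasure_sphere :
    ENNReal.ofReal (2 * π) ≤ μH[1] (sphere (0 : ℂ) 1) := by
  have hsinc : Tendsto (fun n : ℕ => 2 * π * Real.sinc (π / n)) atTop (𝓝 (2 * π)) := by
    have := ((Real.continuous_sinc.tendsto 0).comp
      (tendsto_const_div_atTop_nhds_zero_nat π)).const_mul (2 * π)
    rwa [Real.sinc_zero, mul_one] at this
  refine le_of_tendsto (ENNReal.tendsto_ofReal hsinc) ?_
  filter_upwards [eventually_ne_atTop 0] with n hn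
  have hn0 : (n : ℝ) ≠ 0 := by exact_mod_cast hn
  have hsin : 2 * π * Real.sinc (π / n) = n * (2 * Real.sin (π / n)) := by
    rw [Real.sinc_of_ne_zero (div_ne_zero Real.pi_ne_zero hn0)]
    field_simp
  simpa only [hsin] using mul_two_mul_sin_le_hausdorffMeasure_sphere hn

theorem arcLen_unitBall_le :
    arcLen (ball (0 : ℂ) 1) ≤ (volume.restrict (Ioc 0 (2 * π))).map (circleMap 0 1) := by
  have hm : Measurable (circleMap 0 1) := (continuous_circleMap 0 1).measurable
  refine Measure.le_iff.2 fun s hs => ?_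
  rw [arcLen, frontier_ball 0 one_ne_zero, Measure.restrict_apply hs, Measure.map_apply hm hs,
    Measure.restrict_apply (hm hs)]
  set E := circleMap 0 1 ⁻¹' s ∩ Ioc 0 (2 * π)
  have hsub : s ∩ sphere 0 1 ⊆ circleMap 0 1 '' E := by
    rintro z ⟨hzs, hz⟩
    have hz' : z ∈ circleMap 0 1 '' Ioc 0 (2 * π) := by simpa using hz
    obtain ⟨t, ht, rfl⟩ := hz'
    exact ⟨t, ⟨hzs, ht⟩, rfl⟩
  calc μH[1] (s ∩ sphere 0 1) ≤ μH[1] (circleMap 0 1 '' E) := measure_mono hsub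
    _ ≤ volume E := by
        simpa [hausdorffMeasure_real] using ((lipschitzWith_circleMap 0 1).lipschitzOnWith
          (s := E)).hausdorffMeasure_image_le zero_le_one

theorem arcLen_unitBall :
    arcLen (ball (0 : ℂ) 1) = (volume.restrict (Ioc 0 (2 * π))).map (circleMap 0 1) := by
  have := isFiniteMeasure_of_le _ arcLen_unitBall_le
  refine Measure.eq_of_le_of_measure_univ_eq arcLen_unitBall_le
    (le_antisymm (arcLen_unitBall_le _) ?_)
  rw [Measure.map_apply (continuous_circleMap 0 1).measurable .univ, arcLen,
    Measure.restrict_apply_univ, frontier_ball 0 one_ne_zero]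
  simpa using two_pi_le_hausdorffMeasure_sphere

-- The parametrization is only injective on `(0, 2π]`; restricting it there gives an embedding,
-- so that no measurability is required of predicates and integrands on the circle.
theorem measurableEmbedding_domRestrict_circleMap :
    MeasurableEmbedding ((Ioc 0 (2 * π)).domRestrict (circleMap 0 1)) :=
  (continuous_circleMap 0 1).continuousOn.measurableEmbedding measurableSet_Ioc
    injOn_circleMap_Ioc

theorem arcLen_unitBall_eq_map_domRestrict :
    arcLen (ball (0 : ℂ) 1) = Measure.map ((Ioc 0 (2 * π)).domRestrict (circleMap 0 1))
      (volume.comap (Subtype.val : Ioc 0 (2 * π) → ℝ)) := by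
  rw [arcLen_unitBall, ← map_comap_subtype_coe measurableSet_Ioc volume,
    Measure.map_map (continuous_circleMap 0 1).measurable measurable_subtype_coe]
  rfl

theorem harmonicMeasure_zero :
    harmonicMeasure 0 = ENNReal.ofReal (2 * π)⁻¹ • volume.restrict (Ioc 0 (2 * π)) := by
  simp only [harmonicMeasure, poissonKernel_zero_apply (circleMap_zero_one_mem_sphere _), mul_one,
    withDensity_const]

theorem ae_arcLen_unitBall {P : ℂ → Prop} (h : ∀ᵐ θ ∂harmonicMeasure 0, P (circleMap 0 1 θ)) :
    ∀ᵐ ξ ∂arcLen (ball (0 : ℂ) 1), P ξ := by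
  rw [harmonicMeasure_zero, Measure.ae_ennreal_smul_measure_iff
    (by simpa using Real.pi_pos), ← map_comap_subtype_coe measurableSet_Ioc volume,
    (MeasurableEmbedding.subtype_coe measurableSet_Ioc).ae_map_iff] at h
  rw [arcLen_unitBall_eq_map_domRestrict, measurableEmbedding_domRestrict_circleMap.ae_map_iff]
  exact h

theorem integral_arcLen_unitBall (φ : ℂ → ℝ) :
    (2 * π)⁻¹ * ∫ ξ, φ ξ ∂arcLen (ball (0 : ℂ) 1) =
      ∫ θ, φ (circleMap 0 1 θ) ∂harmonicMeasure 0 := by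
  rw [harmonicMeasure_zero, integral_smul_measure,
    ENNReal.toReal_ofReal (inv_nonneg.2 Real.two_pi_pos.le), smul_eq_mul,
    arcLen_unitBall_eq_map_domRestrict, measurableEmbedding_domRestrict_circleMap.integral_map,
    ← integral_subtype_comap measurableSet_Ioc]
  rfl

/-! ### Inverses of conformal maps -/

section InjectiveHolomorphic

variable {f : ℂ → ℂ} {U : Set ℂ}

theorem nhds_le_map_nhds_of_injOn (hU : IsOpen U) (hf : DifferentiableOn ℂ f U) (hinj : InjOn f U)
    {z : ℂ} (hz : z ∈ U) : 𝓝 (f z) ≤ map f (𝓝 z) := by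
  refine ((hf.analyticOnNhd hU z hz).eventually_constant_or_nhds_le_map_nhds).resolve_left
    fun hconst => ?_
  have hsub : ∀ᶠ w in 𝓝 z, w = z := by
    filter_upwards [hconst, hU.mem_nhds hz] with w hw hwU using hinj hwU hz hw
  obtain ⟨w, hw, hwz⟩ := ((hsub.filter_mono nhdsWithin_le_nhds).and
    (self_mem_nhdsWithin (s := {z}ᶜ))).exists
  exact hwz hw

theorem isOpen_image_of_injOn (hU : IsOpen U) (hf : DifferentiableOn ℂ f U) (hinj : InjOn f U) :
    IsOpen (f '' U) := by
  refine isOpen_iff_mem_nhds.2 ?_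
  rintro _ ⟨z, hz, rfl⟩
  exact nhds_le_map_nhds_of_injOn hU hf hinj hz (image_mem_map (hU.mem_nhds hz))

theorem eventually_deriv_ne_zero_of_injOn (hU : IsOpen U) (hf : DifferentiableOn ℂ f U)
    (hinj : InjOn f U) {z : ℂ} (hz : z ∈ U) : ∀ᶠ w in 𝓝[≠] z, deriv f w ≠ 0 := by
  refine ((hf.analyticOnNhd hU z hz).deriv.eventually_eq_zero_or_eventually_ne_zero).resolve_left
    fun hzero => ?_
  obtain ⟨ε, hε, hball⟩ :=
    Metric.eventually_nhds_iff_ball.1 (hzero.and (hU.eventually_mem hz))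
  have hmid : z + (ε / 2 : ℝ) ∈ ball z ε := by
    rw [mem_ball, dist_self_add_left, norm_real, Real.norm_of_nonneg (by positivity)]
    linarith
  have heq : f (z + (ε / 2 : ℝ)) = f z :=
    isOpen_ball.is_const_of_deriv_eq_zero (convex_ball z ε).isPreconnected
      (hf.mono fun x hx => (hball x hx).2) (fun x hx => (hball x hx).1) hmid (mem_ball_self hε)
  have := hinj (hball _ hmid).2 hz heq
  simp [hε.ne'] at this

theorem continuousAt_invFunOn_of_injOn (hU : IsOpen U) (hf : DifferentiableOn ℂ f U)
    (hinj : InjOn f U) {z : ℂ} (hz : z ∈ U) :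
    ContinuousAt (Function.invFunOn f U) (f z) := by
  rw [ContinuousAt, hinj.leftInvOn_invFunOn hz]
  refine fun s hs => ?_
  have himage : f '' (s ∩ U) ∈ 𝓝 (f z) :=
    nhds_le_map_nhds_of_injOn hU hf hinj hz (image_mem_map (inter_mem hs (hU.mem_nhds hz)))
  refine mem_map.2 (mem_of_superset himage ?_)
  rintro _ ⟨w, ⟨hws, hwU⟩, rfl⟩
  rwa [mem_preimage, hinj.leftInvOn_invFunOn hwU]

theorem differentiableAt_invFunOn_of_deriv_ne_zero (hU : IsOpen U) (hf : DifferentiableOn ℂ f U)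
    (hinj : InjOn f U) {z : ℂ} (hz : z ∈ U) (hne : deriv f z ≠ 0) :
    DifferentiableAt ℂ (Function.invFunOn f U) (f z) := by
  have hleft := hinj.leftInvOn_invFunOn hz
  have hderiv : HasDerivAt f (deriv f z) (Function.invFunOn f U (f z)) := by
    rw [hleft]
    exact (hf.differentiableAt (hU.mem_nhds hz)).hasDerivAt
  refine (HasDerivAt.of_local_left_inverse (continuousAt_invFunOn_of_injOn hU hf hinj hz) hderiv
    hne ?_).differentiableAt
  filter_upwards [(isOpen_image_of_injOn hU hf hinj).mem_nhds (mem_image_of_mem f hz)] with w hw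
  exact Function.invFunOn_eq hw

-- The inverse is continuous, and differentiable off the discrete set of critical values, whose
-- points are then removable singularities.
theorem differentiableOn_invFunOn_of_injOn (hU : IsOpen U) (hf : DifferentiableOn ℂ f U)
    (hinj : InjOn f U) : DifferentiableOn ℂ (Function.invFunOn f U) (f '' U) := by
  rintro _ ⟨z, hz, rfl⟩
  have hcont := continuousAt_invFunOn_of_injOn hU hf hinj hz
  have hleft := hinj.leftInvOn_invFunOn hz
  have himage : ∀ᶠ w in 𝓝[≠] (f z), w ∈ f '' U := mem_nhdsWithin_of_mem_nhds
    ((isOpen_image_of_injOn hU hf hinj).mem_nhds (mem_image_of_mem f hz))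
  have hpunctured : Tendsto (Function.invFunOn f U) (𝓝[≠] (f z)) (𝓝[≠] z) := by
    refine tendsto_nhdsWithin_of_tendsto_nhds_of_eventually_within _ ?_ ?_
    · simpa only [hleft] using hcont.tendsto.mono_left nhdsWithin_le_nhds
    · filter_upwards [self_mem_nhdsWithin, himage]
      rintro _ hne ⟨v, hv, rfl⟩ h
      rw [hinj.leftInvOn_invFunOn hv, mem_singleton_iff] at h
      exact hne (by rw [h, mem_singleton_iff])
  refine (analyticAt_of_differentiable_on_punctured_nhds_of_continuousAt ?_
    hcont).differentiableAt.differentiableWithinAt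
  filter_upwards [hpunctured.eventually (eventually_deriv_ne_zero_of_injOn hU hf hinj hz), himage]
  rintro _ hne ⟨v, hv, rfl⟩
  rw [hinj.leftInvOn_invFunOn hv] at hne
  exact differentiableAt_invFunOn_of_deriv_ne_zero hU hf hinj hv hne

end InjectiveHolomorphic

/-- The inverse `κ : Ω → 𝔻` of a conformal map `ψ : 𝔻 → Ω`, extended by junk values off `Ω`. -/
def discInverse (ψ : ℂ → ℂ) : ℂ → ℂ :=
  Function.invFunOn ψ (ball 0 1)

namespace IsConformalOnto

variable {ψ : ℂ → ℂ} {Ω : Set ℂ}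

theorem differentiableOn (hψ : IsConformalOnto ψ Ω) : DifferentiableOn ℂ ψ (ball 0 1) := hψ.1

theorem mapsTo (hψ : IsConformalOnto ψ Ω) : MapsTo ψ (ball 0 1) Ω :=
  fun _ hz => hψ.2.2.1 ▸ mem_image_of_mem ψ hz

theorem discInverse_apply (hψ : IsConformalOnto ψ Ω) {z : ℂ} (hz : z ∈ ball (0 : ℂ) 1) :
    discInverse ψ (ψ z) = z :=
  hψ.2.1.leftInvOn_invFunOn hz

theorem apply_discInverse (hψ : IsConformalOnto ψ Ω) {w : ℂ} (hw : w ∈ Ω) :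
    ψ (discInverse ψ w) = w :=
  Function.invFunOn_eq (show w ∈ ψ '' ball 0 1 from hψ.2.2.1.symm ▸ hw)

theorem mapsTo_discInverse (hψ : IsConformalOnto ψ Ω) :
    MapsTo (discInverse ψ) Ω (ball 0 1) := fun w hw =>
  Function.invFunOn_mem (show w ∈ ψ '' ball 0 1 from hψ.2.2.1.symm ▸ hw)

theorem isOpen (hψ : IsConformalOnto ψ Ω) : IsOpen Ω :=
  hψ.2.2.1 ▸ isOpen_image_of_injOn isOpen_ball hψ.1 hψ.2.1

theorem differentiableOn_discInverse (hψ : IsConformalOnto ψ Ω) :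
    DifferentiableOn ℂ (discInverse ψ) Ω :=
  hψ.2.2.1 ▸ differentiableOn_invFunOn_of_injOn isOpen_ball hψ.1 hψ.2.1

theorem zero_mem (hψ : IsConformalOnto ψ Ω) : (0 : ℂ) ∈ Ω := by
  simpa only [hψ.2.2.2] using hψ.mapsTo (mem_ball_self one_pos)

end IsConformalOnto

/-! ### The Laplacian -/

section Laplacian

variable {φ χ : ℂ → ℝ} {f : ℂ → ℂ} {U : Set ℂ} {z : ℂ}

theorem lap_congr (h : φ =ᶠ[𝓝 z] χ) : lap φ z = lap χ z := by
  have hfderiv (v : ℂ) : (fun w => fderiv ℝ φ w v) =ᶠ[𝓝 z] fun w => fderiv ℝ χ w v :=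
    h.fderiv.mono fun w hw => DFunLike.congr_fun hw v
  simp only [lap, (hfderiv 1).fderiv_eq, (hfderiv I).fderiv_eq]

theorem lap_eq_laplacian (h : ContDiffAt ℝ 2 φ z) : lap φ z = Laplacian.laplacian φ z := by
  have hfderiv : DifferentiableAt ℝ (fderiv ℝ φ) z :=
    (h.fderiv_right (m := 1) (by norm_num)).differentiableAt one_ne_zero
  simp [lap, InnerProductSpace.laplacian_eq_iteratedFDeriv_complexPlane, iteratedFDeriv_two_apply,
    fderiv_clm_apply hfderiv (differentiableAt_const _)]

theorem lap_const (c : ℝ) (z : ℂ) : lap (fun _ => c) z = 0 := by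
  simp [lap]

theorem lap_add (hφ : ContDiffAt ℝ 2 φ z) (hχ : ContDiffAt ℝ 2 χ z) :
    lap (fun w => φ w + χ w) z = lap φ z + lap χ z := by
  rw [lap_eq_laplacian hφ, lap_eq_laplacian hχ, lap_eq_laplacian (hφ.add hχ)]
  exact hφ.laplacian_add hχ

theorem lap_sub (hφ : ContDiffAt ℝ 2 φ z) (hχ : ContDiffAt ℝ 2 χ z) :
    lap (fun w => φ w - χ w) z = lap φ z - lap χ z := by
  rw [lap_eq_laplacian hφ, lap_eq_laplacian hχ, lap_eq_laplacian (hφ.sub hχ)]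
  exact hφ.laplacian_sub hχ

theorem contDiffAt_of_differentiableOn (hU : IsOpen U) (hf : DifferentiableOn ℂ f U) (hz : z ∈ U) :
    ContDiffAt ℝ 2 f z :=
  (hf.analyticAt (hU.mem_nhds hz)).contDiffAt.restrict_scalars ℝ

theorem contDiffAt_re_of_differentiableOn (hU : IsOpen U) (hf : DifferentiableOn ℂ f U)
    (hz : z ∈ U) : ContDiffAt ℝ 2 (fun w => (f w).re) z :=
  reCLM.contDiff.contDiffAt.comp z (contDiffAt_of_differentiableOn hU hf hz)

theorem lap_re_of_differentiableOn (hU : IsOpen U) (hf : DifferentiableOn ℂ f U) (hz : z ∈ U) :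
    lap (fun w => (f w).re) z = 0 :=
  (lap_eq_laplacian (contDiffAt_re_of_differentiableOn hU hf hz)).trans
    (hf.analyticAt (hU.mem_nhds hz)).harmonicAt_re.2.self_of_nhds

theorem lap_comp {Λ : ℝ → ℝ} (hΛ : ContDiffAt ℝ 2 Λ (φ z)) (hφ : ContDiffAt ℝ 2 φ z) :
    lap (fun w => Λ (φ w)) z =
      deriv (deriv Λ) (φ z) * (fderiv ℝ φ z 1 ^ 2 + fderiv ℝ φ z I ^ 2) +
        deriv Λ (φ z) * lap φ z := by
  have hφ' : DifferentiableAt ℝ φ z := hφ.differentiableAt two_ne_zero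
  have hφ'' (v : ℂ) : DifferentiableAt ℝ (fun w => fderiv ℝ φ w v) z :=
    ((hφ.fderiv_right (m := 1) (by norm_num)).differentiableAt one_ne_zero).clm_apply
      (differentiableAt_const v)
  have hΛ'' : HasDerivAt (deriv Λ) (deriv (deriv Λ) (φ z)) (φ z) :=
    ((hΛ.derivWithin (m := 1) (by norm_num)).differentiableAt one_ne_zero).hasDerivAt
  have hchain (v : ℂ) : (fun w => fderiv ℝ (fun w => Λ (φ w)) w v) =ᶠ[𝓝 z]
      fun w => deriv Λ (φ w) * fderiv ℝ φ w v := by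
    filter_upwards [hφ.eventually (by simp), hφ.continuousAt.eventually (hΛ.eventually (by simp))]
      with w hφw hΛw
    exact DFunLike.congr_fun ((hΛw.differentiableAt two_ne_zero).hasDerivAt.comp_hasFDerivAt w
      (hφw.differentiableAt two_ne_zero).hasFDerivAt).fderiv v
  have hsecond (v : ℂ) : fderiv ℝ (fun w => fderiv ℝ (fun w => Λ (φ w)) w v) z v =
      deriv (deriv Λ) (φ z) * fderiv ℝ φ z v ^ 2 +
        deriv Λ (φ z) * fderiv ℝ (fun w => fderiv ℝ φ w v) z v := by
    have hcomp : HasFDerivAt (fun w => deriv Λ (φ w)) _ z :=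
      hΛ''.comp_hasFDerivAt z hφ'.hasFDerivAt
    rw [(hchain v).fderiv_eq, (hcomp.fun_mul (hφ'' v).hasFDerivAt).fderiv]
    simp only [add_apply, smul_apply, smul_eq_mul]
    ring
  simp only [lap, hsecond]
  ring

theorem fderiv_norm_sq_of_differentiableAt (hf : DifferentiableAt ℂ f z) (v : ℂ) :
    fderiv ℝ (fun w => ‖f w‖ ^ 2) z v = 2 * inner ℝ (f z) (deriv f z * v) := by
  rw [(hf.hasDerivAt.hasFDerivAt.restrictScalars ℝ).norm_sq.fderiv]
  simp [mul_comm v, mul_add]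

theorem inner_mul_sq_add_inner_mul_I_sq (a b : ℂ) :
    inner ℝ a (b * 1) ^ 2 + inner ℝ a (b * I) ^ 2 = ‖a‖ ^ 2 * ‖b‖ ^ 2 := by
  simp only [Complex.inner, Complex.sq_norm, normSq_apply, mul_re, mul_im, conj_re, conj_im, I_re,
    I_im, one_re, one_im]
  ring

theorem lap_norm_sq_of_differentiableOn (hU : IsOpen U) (hf : DifferentiableOn ℂ f U)
    (hz : z ∈ U) : lap (fun w => ‖f w‖ ^ 2) z = 4 * ‖deriv f z‖ ^ 2 := by
  have hf' (w : ℂ) (hw : w ∈ U) : HasFDerivAt f _ w :=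
    (hf.differentiableAt (hU.mem_nhds hw)).hasDerivAt.hasFDerivAt.restrictScalars ℝ
  have hf'' : HasDerivAt (deriv f) (deriv (deriv f) z) z :=
    ((hf.deriv hU).differentiableAt (hU.mem_nhds hz)).hasDerivAt
  have hsecond (v : ℂ) : fderiv ℝ (fun w => fderiv ℝ (fun w => ‖f w‖ ^ 2) w v) z v =
      2 * (‖deriv f z * v‖ ^ 2 + inner ℝ (f z) (deriv (deriv f) z * v * v)) := by
    have hfirst : (fun w => fderiv ℝ (fun w => ‖f w‖ ^ 2) w v) =ᶠ[𝓝 z]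
        fun w => 2 * inner ℝ (f w) (deriv f w * v) := by
      filter_upwards [hU.mem_nhds hz] with w hw
      exact fderiv_norm_sq_of_differentiableAt (hf.differentiableAt (hU.mem_nhds hw)) v
    have hinner := (hf' z hz).inner ℝ
      ((hf''.mul_const v).hasFDerivAt.restrictScalars ℝ)
    rw [hfirst.fderiv_eq, (hinner.const_mul 2).fderiv]
    simp [mul_comm, mul_assoc, add_comm]
  rw [lap, hsecond, hsecond, mul_one, mul_one, mul_one, mul_assoc _ I I, I_mul_I, mul_neg_one,
    inner_neg_right, norm_mul, norm_I]
  ring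

theorem lap_comp_norm_sq {Λ : ℝ → ℝ} (hU : IsOpen U) (hf : DifferentiableOn ℂ f U) (hz : z ∈ U)
    (hΛ : ContDiffAt ℝ 2 Λ (‖f z‖ ^ 2)) : lap (fun w => Λ (‖f w‖ ^ 2)) z = 4 * ‖deriv f z‖ ^ 2 *
      (deriv (deriv Λ) (‖f z‖ ^ 2) * ‖f z‖ ^ 2 + deriv Λ (‖f z‖ ^ 2)) := by
  have hnorm := (contDiffAt_of_differentiableOn hU hf hz).norm_sq ℝ
  have hfz := hf.differentiableAt (hU.mem_nhds hz)
  rw [lap_comp (φ := fun w => ‖f w‖ ^ 2) hΛ hnorm, lap_norm_sq_of_differentiableOn hU hf hz,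
    fderiv_norm_sq_of_differentiableAt hfz, fderiv_norm_sq_of_differentiableAt hfz, mul_pow,
    mul_pow, ← mul_add, inner_mul_sq_add_inner_mul_I_sq]
  ring

end Laplacian

/-- The smooth subharmonic majorant `(‖f‖² + 1)^{p/2}` of `‖f‖^p`: unlike `‖f‖^p` itself it is
differentiable at the zeros of `f`, so it can be tested against a Riesz measure. -/
def smoothNormPow (p : ℝ) (f : ℂ → ℂ) (z : ℂ) : ℝ :=
  (‖f z‖ ^ 2 + 1) ^ (p / 2)

section SmoothNormPow

variable {p : ℝ} {f : ℂ → ℂ} {U : Set ℂ} {z : ℂ}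

theorem smoothNormPow_nonneg (p : ℝ) (f : ℂ → ℂ) (z : ℂ) : 0 ≤ smoothNormPow p f z := by
  unfold smoothNormPow
  positivity

theorem sq_rpow_half {a : ℝ} (ha : 0 ≤ a) (p : ℝ) : (a ^ 2) ^ (p / 2) = a ^ p := by
  rw [← Real.rpow_natCast, ← Real.rpow_mul ha]
  congr 1
  push_cast
  ring

theorem norm_rpow_le_smoothNormPow (hp : 0 ≤ p) (f : ℂ → ℂ) (z : ℂ) :
    ‖f z‖ ^ p ≤ smoothNormPow p f z := by
  rw [← sq_rpow_half (norm_nonneg _), smoothNormPow]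
  gcongr
  exact le_add_of_nonneg_right zero_le_one

theorem norm_le_smoothNormPow (hp : 1 ≤ p) (f : ℂ → ℂ) (z : ℂ) : ‖f z‖ ≤ smoothNormPow p f z := by
  have hone : 1 ≤ ‖f z‖ ^ 2 + 1 := le_add_of_nonneg_left (by positivity)
  calc ‖f z‖ = ‖f z‖ ^ (1 : ℝ) := (Real.rpow_one _).symm
    _ ≤ smoothNormPow 1 f z := norm_rpow_le_smoothNormPow zero_le_one f z
    _ ≤ smoothNormPow p f z := Real.rpow_le_rpow_of_exponent_le hone (by linarith)

theorem smoothNormPow_le (hp : 0 ≤ p) (f : ℂ → ℂ) (z : ℂ) :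
    smoothNormPow p f z ≤ 2 ^ p * (‖f z‖ ^ p + 1) := by
  have hbase : ‖f z‖ ^ 2 + 1 ≤ (2 * max ‖f z‖ 1) ^ 2 := by
    nlinarith [le_max_left ‖f z‖ 1, le_max_right ‖f z‖ 1, norm_nonneg (f z)]
  have hmax : max ‖f z‖ 1 ^ p ≤ ‖f z‖ ^ p + 1 := by
    rcases le_total ‖f z‖ 1 with h | h
    · rw [max_eq_right h, Real.one_rpow]
      exact le_add_of_nonneg_left (by positivity)
    · rw [max_eq_left h]
      exact le_add_of_nonneg_right zero_le_one
  calc smoothNormPow p f z ≤ ((2 * max ‖f z‖ 1) ^ 2) ^ (p / 2) := by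
        unfold smoothNormPow
        gcongr
    _ = 2 ^ p * max ‖f z‖ 1 ^ p := by
        rw [sq_rpow_half (by positivity), Real.mul_rpow two_pos.le (by positivity)]
    _ ≤ 2 ^ p * (‖f z‖ ^ p + 1) := by gcongr

theorem contDiffAt_smoothNormPow (hU : IsOpen U) (hf : DifferentiableOn ℂ f U) (hz : z ∈ U) :
    ContDiffAt ℝ 2 (smoothNormPow p f) z :=
  (((contDiffAt_of_differentiableOn hU hf hz).norm_sq ℝ).add contDiffAt_const).rpow_const_of_ne
    (by positivity)

theorem lap_smoothNormPow_nonneg (hp : 0 ≤ p) (hU : IsOpen U) (hf : DifferentiableOn ℂ f U)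
    (hz : z ∈ U) : 0 ≤ lap (smoothNormPow p f) z := by
  set t := ‖f z‖ ^ 2
  have ht : 0 ≤ t := sq_nonneg _
  have ht1 : 0 < t + 1 := by positivity
  have hderiv {q s : ℝ} (hs : 0 < s + 1) :
      HasDerivAt (fun x : ℝ => (x + 1) ^ q) (q * (s + 1) ^ (q - 1)) s := by
    simpa using ((hasDerivAt_id s).add_const 1).rpow_const (p := q) (Or.inl hs.ne')
  have hΛ : ContDiffAt ℝ 2 (fun x : ℝ => (x + 1) ^ (p / 2)) t :=
    (contDiffAt_id.add contDiffAt_const).rpow_const_of_ne ht1.ne'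
  have hderiv_eq : deriv (fun x : ℝ => (x + 1) ^ (p / 2)) =ᶠ[𝓝 t]
      fun x => p / 2 * (x + 1) ^ (p / 2 - 1) := by
    filter_upwards [lt_mem_nhds (show -1 < t by linarith)] with x hx
    exact (hderiv (by linarith)).deriv
  have hpow : (t + 1) ^ (p / 2 - 1) = (t + 1) ^ (p / 2 - 1 - 1) * (t + 1) := by
    rw [← Real.rpow_add_one ht1.ne', sub_add_cancel]
  have hlap := lap_comp_norm_sq hU hf hz hΛ
  rw [hderiv_eq.deriv_eq, ((hderiv ht1).const_mul _).deriv, hderiv_eq.eq_of_nhds, hpow] at hlap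
  calc 0 ≤ 4 * ‖deriv f z‖ ^ 2 * (p / 2 * (t + 1) ^ (p / 2 - 1 - 1) * (p / 2 * t + 1)) := by
        positivity
    _ = lap (smoothNormPow p f) z := by
        rw [show lap (smoothNormPow p f) z = _ from hlap]
        ring

end SmoothNormPow

/-! ### Truncated Riesz measures -/

/-- Admissible test functions for the distributional Laplacian on `Ω`: compactly supported in `Ω`,
and only `C²`, as in `IsRieszMeasure`. -/
structure IsTestFunction (Ω : Set ℂ) (φ : ℂ → ℝ) : Prop where
  contDiff : ContDiff ℝ 2 φ
  hasCompactSupport : HasCompactSupport φ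
  tsupport_subset : tsupport φ ⊆ Ω

/-- A cutoff function for `K` in `Ω`: a test function with values in `[0, 1]` which equals `1` on a
neighbourhood of `K`. -/
structure IsCutoff (Ω K : Set ℂ) (χ : ℂ → ℝ) : Prop extends IsTestFunction Ω χ where
  eventually_eq_one : ∀ᶠ z in 𝓝ˢ K, χ z = 1
  nonneg : ∀ z, 0 ≤ χ z
  le_one : ∀ z, χ z ≤ 1

open scoped Manifold in
theorem exists_isCutoff {Ω K : Set ℂ} (hΩ : IsOpen Ω) (hK : IsCompact K) (hKΩ : K ⊆ Ω) :
    ∃ χ, IsCutoff Ω K χ := by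
  obtain ⟨L, hL, hKL, hLΩ⟩ := exists_compact_between hK hΩ hKΩ
  obtain ⟨χ, hone, hzero, hmem⟩ :=
    exists_contMDiffMap_one_nhds_of_subset_interior (n := 2) 𝓘(ℝ, ℂ) hK.isClosed hKL
  have hsupp : tsupport χ ⊆ L := closure_minimal
    (fun z hz => by_contra fun hzL => hz (hzero z hzL)) hL.isClosed
  exact ⟨χ, ⟨χ.contMDiff.contDiff, HasCompactSupport.intro hL hzero, hsupp.trans hLΩ⟩, hone,
    fun z => (hmem z).1, fun z => (hmem z).2⟩

theorem eventuallyEq_zero_of_notMem_tsupport {φ : ℂ → ℝ} {z : ℂ} (hz : z ∉ tsupport φ) :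
    φ =ᶠ[𝓝 z] fun _ => 0 :=
  notMem_tsupport_iff_eventuallyEq.1 hz

theorem lap_eq_zero_of_notMem_tsupport {φ : ℂ → ℝ} {z : ℂ} (hz : z ∉ tsupport φ) :
    lap φ z = 0 := by
  rw [lap_congr (eventuallyEq_zero_of_notMem_tsupport hz), lap_const]

theorem integral_fderiv_eq_zero {φ : ℂ → ℝ} (hφ : ContDiff ℝ 1 φ) (hc : HasCompactSupport φ)
    (v : ℂ) : ∫ z, fderiv ℝ φ z v = 0 := by
  have hint : Integrable φ := hφ.continuous.integrable_of_hasCompactSupport hc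
  have hint' : Integrable (fun z => fderiv ℝ φ z v) :=
    ((hφ.continuous_fderiv one_ne_zero).clm_apply
      continuous_const).integrable_of_hasCompactSupport (hc.fderiv_apply (𝕜 := ℝ) v)
  simpa using integral_mul_fderiv_eq_neg_fderiv_mul_of_integrable (μ := (volume : Measure ℂ))
    (𝕜 := ℝ) (f := fun _ => (1 : ℝ)) (g := φ) (v := v) (by simp) (by simpa using hint')
    (by simpa using hint) (fun _ _ => differentiableAt_const _)
    (fun z _ => hφ.differentiable one_ne_zero z)

namespace IsTestFunction

variable {Ω : Set ℂ} {φ : ℂ → ℝ}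

theorem mul {χ : ℂ → ℝ} (h : IsTestFunction Ω χ) (hφ : ∀ z ∈ Ω, ContDiffAt ℝ 2 φ z) :
    IsTestFunction Ω (fun z => χ z * φ z) := by
  refine ⟨contDiff_iff_contDiffAt.2 fun z => ?_, h.hasCompactSupport.mul_right,
    (closure_mono (Function.support_mul_subset_left _ _)).trans h.tsupport_subset⟩
  by_cases hz : z ∈ tsupport χ
  · exact h.contDiff.contDiffAt.mul (hφ z (h.tsupport_subset hz))
  · refine contDiffAt_const (c := (0 : ℝ)) |>.congr_of_eventuallyEq ?_
    filter_upwards [eventuallyEq_zero_of_notMem_tsupport hz] with w hw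
    rw [hw, zero_mul]

theorem contDiff_fderiv_apply (h : IsTestFunction Ω φ) (v : ℂ) :
    ContDiff ℝ 1 (fun z => fderiv ℝ φ z v) :=
  (h.contDiff.fderiv_right (m := 1) (by norm_num)).clm_apply contDiff_const

theorem continuous_fderiv_fderiv_apply (h : IsTestFunction Ω φ) (v : ℂ) :
    Continuous fun z => fderiv ℝ (fun w => fderiv ℝ φ w v) z v :=
  ((h.contDiff_fderiv_apply v).continuous_fderiv one_ne_zero).clm_apply continuous_const

theorem integrable_mul_lap {u : ℂ → ℝ} (h : IsTestFunction Ω φ) (hu : ContinuousOn u Ω) :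
    Integrable (fun z => u z * lap φ z) := by
  have hlap : Continuous (lap φ) :=
    (h.continuous_fderiv_fderiv_apply 1).add (h.continuous_fderiv_fderiv_apply I)
  have hsupp : Function.support (fun z => u z * lap φ z) ⊆ tsupport φ := fun z hz =>
    by_contra fun hzφ => hz (by simp only [lap_eq_zero_of_notMem_tsupport hzφ, mul_zero])
  rw [← integrableOn_iff_integrable_of_support_subset hsupp]
  exact ((hu.mono h.tsupport_subset).mul hlap.continuousOn).integrableOn_compact
    h.hasCompactSupport

theorem integral_lap_eq_zero (h : IsTestFunction Ω φ) : ∫ z, lap φ z = 0 := by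
  have hsupp (v : ℂ) : HasCompactSupport (fun w => fderiv ℝ φ w v) :=
    h.hasCompactSupport.fderiv_apply (𝕜 := ℝ) v
  have hint (v : ℂ) : Integrable fun z => fderiv ℝ (fun w => fderiv ℝ φ w v) z v :=
    (h.continuous_fderiv_fderiv_apply v).integrable_of_hasCompactSupport
      ((hsupp v).fderiv_apply (𝕜 := ℝ) v)
  have hzero (v : ℂ) := integral_fderiv_eq_zero (h.contDiff_fderiv_apply v) (hsupp v) v
  simp only [lap]
  rw [integral_add (hint 1) (hint I), hzero, hzero, add_zero]

end IsTestFunction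

namespace IsCutoff

variable {Ω K : Set ℂ} {χ v : ℂ → ℝ}

theorem eq_one (h : IsCutoff Ω K χ) {z : ℂ} (hz : z ∈ K) : χ z = 1 :=
  h.eventually_eq_one.self_of_nhdsSet z hz

theorem mul_nonneg (h : IsCutoff Ω K χ) (hv : ∀ z ∈ Ω, 0 ≤ v z) (z : ℂ) : 0 ≤ χ z * v z := by
  by_cases hz : z ∈ tsupport χ
  · exact _root_.mul_nonneg (h.nonneg z) (hv z (h.tsupport_subset hz))
  · rw [image_eq_zero_of_notMem_tsupport hz, zero_mul]

theorem lintegral_mul_le (h : IsCutoff Ω K χ) (hv : ∀ z ∈ Ω, 0 ≤ v z) {μ : Measure ℂ}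
    (hμ : μ Ωᶜ = 0) :
    ∫⁻ z, ENNReal.ofReal (χ z * v z) ∂μ ≤ ∫⁻ z, ENNReal.ofReal (v z) ∂μ := by
  refine lintegral_mono_ae ?_
  filter_upwards [show ∀ᵐ z ∂μ, z ∈ Ω from hμ] with z hz
  exact ENNReal.ofReal_le_ofReal (mul_le_of_le_one_left (hv z hz) (h.le_one z))

theorem setLIntegral_le_setLIntegral_mul (h : IsCutoff Ω K χ) {s : Set ℂ} (hs : MeasurableSet s)
    (hsK : s ⊆ K) (μ : Measure ℂ) :
    ∫⁻ z in s, ENNReal.ofReal (v z) ∂μ ≤ ∫⁻ z in s, ENNReal.ofReal (χ z * v z) ∂μ :=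
  setLIntegral_mono' hs fun z hz => by rw [h.eq_one (hsK hz), one_mul]

end IsCutoff

theorem measure_le_sub_add (μ ν : Measure ℂ) [IsFiniteMeasure μ] [IsFiniteMeasure ν] :
    μ ≤ (μ - ν) + ν := by
  obtain ⟨s, hs, hνμ, hμν⟩ := hahn_decomposition μ ν
  have hle : ν.restrict s ≤ μ.restrict s := Measure.le_iff.2 fun t ht => by
    simpa only [Measure.restrict_apply ht] using hνμ _ (ht.inter hs) inter_subset_right
  have hle' : μ.restrict sᶜ ≤ ν.restrict sᶜ := Measure.le_iff.2 fun t ht => by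
    simpa only [Measure.restrict_apply ht] using hμν _ (ht.inter hs.compl) inter_subset_right
  have hsub : (μ - ν).restrict s + ν.restrict s = μ.restrict s := by
    rw [Measure.restrict_sub_eq_restrict_sub_restrict hs, Measure.sub_add_cancel_of_le hle]
  calc μ = μ.restrict s + μ.restrict sᶜ := (Measure.restrict_add_restrict_compl hs).symm
    _ ≤ ((μ - ν).restrict s + ν.restrict s) + ((μ - ν).restrict sᶜ + ν.restrict sᶜ) := by
        rw [hsub]
        exact add_le_add le_rfl (hle'.trans (Measure.le_add_left le_rfl))
    _ = ((μ - ν).restrict s + (μ - ν).restrict sᶜ) + (ν.restrict s + ν.restrict sᶜ) := by abel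
    _ = (μ - ν) + ν := by simp only [Measure.restrict_add_restrict_compl hs]

/-- The sublevel set `{u < c}` of a function on `Ω`. -/
abbrev sublevel (u : ℂ → ℝ) (Ω : Set ℂ) (c : ℝ) : Set ℂ :=
  {z | z ∈ Ω ∧ u z < c}

section Sublevel

variable {Ω : Set ℂ} {u : ℂ → ℝ}

theorem IsExhaustion.isOpen_sublevel (hu : IsExhaustion u Ω) (hΩ : IsOpen Ω) (c : ℝ) :
    IsOpen (sublevel u Ω c) :=
  hu.subh.1.isOpen_inter_preimage hΩ isOpen_Iio

theorem lintegral_le_of_forall_sublevel {r b : ℝ} (hr : r < b) (hu : ∀ z ∈ Ω, u z < b)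
    {μ : Measure ℂ} (hμ : μ Ωᶜ = 0) {g : ℂ → ℝ≥0∞} {B : ℝ≥0∞}
    (hB : ∀ c ∈ Ioo r b, ∫⁻ z in sublevel u Ω c, g z ∂μ ≤ B) : ∫⁻ z, g z ∂μ ≤ B := by
  obtain ⟨c, hc_mono, hc, hc_lim⟩ := exists_seq_strictMono_tendsto' hr
  have hdirected : Directed (· ⊆ ·) fun n => sublevel u Ω (c n) :=
    directed_of_isDirected_le fun _ _ hmn _ hz => ⟨hz.1, hz.2.trans_le (hc_mono.monotone hmn)⟩
  have hmem : ∀ᵐ z ∂μ, z ∈ ⋃ n, sublevel u Ω (c n) := by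
    filter_upwards [show ∀ᵐ z ∂μ, z ∈ Ω from hμ] with z hz
    obtain ⟨n, hn⟩ := (hc_lim.eventually (lt_mem_nhds (hu z hz))).exists
    exact mem_iUnion.2 ⟨n, hz, hn⟩
  rw [← Measure.restrict_eq_self_of_ae_mem hmem, setLIntegral_iUnion_of_directed _ hdirected]
  exact iSup_le fun n => hB (c n) (hc n)

end Sublevel

/-- `νr` is the Riesz measure of the truncation `max(u, r)` of the exhaustion `u`, whose own Riesz
measure is the finite measure `ν`. The level `r < 0` is required to lie above the infimum of `u`,
so that the truncation is not `u` itself. -/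
structure IsTruncatedRieszMeasure (u : ℂ → ℝ) (Ω : Set ℂ) (ν : Measure ℂ) (r : ℝ)
    (νr : Measure ℂ) : Prop where
  isOpen : IsOpen Ω
  exhaustion : IsExhaustion u Ω
  riesz : IsRieszMeasure u Ω ν
  finite : IsFiniteMeasure ν
  neg : r < 0
  riesz_max : IsRieszMeasure (fun z => max (u z) r) Ω νr
  nonempty : (sublevel u Ω r).Nonempty

namespace IsTruncatedRieszMeasure

variable {Ω K : Set ℂ} {u χ φ v : ℂ → ℝ} {ν νr : Measure ℂ} {r : ℝ}

theorem isOpen_sublevel (h : IsTruncatedRieszMeasure u Ω ν r νr) : IsOpen (sublevel u Ω r) :=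
  h.exhaustion.isOpen_sublevel h.isOpen r

theorem continuousOn_max_sub (h : IsTruncatedRieszMeasure u Ω ν r νr) :
    ContinuousOn (fun z => max (u z) r - u z) Ω :=
  (h.exhaustion.subh.1.sup continuousOn_const).sub h.exhaustion.subh.1

theorem exists_isCutoff_union (h : IsTruncatedRieszMeasure u Ω ν r νr) (hK : IsCompact K)
    (hKΩ : K ⊆ Ω) : ∃ χ, IsCutoff Ω (K ∪ closure (sublevel u Ω r)) χ := by
  obtain ⟨hcompact, hsubset⟩ := h.exhaustion.exh r h.neg
  exact exists_isCutoff h.isOpen (hK.union hcompact) (union_subset hKΩ hsubset)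

theorem integral_eq (h : IsTruncatedRieszMeasure u Ω ν r νr) (hφ : IsTestFunction Ω φ) :
    ∫ z, φ z ∂νr = ∫ z, φ z ∂ν + (4 : ℝ)⁻¹ * ∫ z in Ω, (max (u z) r - u z) * lap φ z := by
  rw [h.riesz.2 φ hφ.contDiff hφ.hasCompactSupport hφ.tsupport_subset,
    h.riesz_max.2 φ hφ.contDiff hφ.hasCompactSupport hφ.tsupport_subset, ← mul_add,
    ← integral_add (hφ.integrable_mul_lap h.exhaustion.subh.1).integrableOn
      (hφ.integrable_mul_lap h.continuousOn_max_sub).integrableOn]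
  simp only [← add_mul, add_sub_cancel]

-- `max(u, r) - u` vanishes off `{u < r}`, where `χ = 1`: no derivative of the cutoff survives.
theorem integral_cutoff_mul_eq (h : IsTruncatedRieszMeasure u Ω ν r νr) (hχ : IsCutoff Ω K χ)
    (hK : sublevel u Ω r ⊆ K) (hv : ∀ z ∈ Ω, ContDiffAt ℝ 2 v z) :
    ∫ z, χ z * v z ∂νr =
      ∫ z, χ z * v z ∂ν + (4 : ℝ)⁻¹ * ∫ z in Ω, (max (u z) r - u z) * lap v z := by
  rw [h.integral_eq (hχ.toIsTestFunction.mul hv)]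
  congr 2
  refine setIntegral_congr_fun h.isOpen.measurableSet fun z hz => ?_
  by_cases hzr : u z < r
  · refine congrArg _ (lap_congr ?_)
    filter_upwards [eventually_nhdsSet_iff_forall.1 hχ.eventually_eq_one z (hK ⟨hz, hzr⟩)]
      with w hw
    rw [hw, one_mul]
  · simp only [max_eq_left (not_lt.1 hzr), sub_self, zero_mul]

theorem setIntegral_max_sub_pos (h : IsTruncatedRieszMeasure u Ω ν r νr) :
    0 < ∫ z in Ω, (max (u z) r - u z) := by
  have hnonneg (z : ℂ) : 0 ≤ max (u z) r - u z := sub_nonneg.2 (le_max_left _ _)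
  obtain ⟨hcompact, hsubset⟩ := h.exhaustion.exh r h.neg
  have hint : IntegrableOn (fun z => max (u z) r - u z) Ω := by
    refine ((h.continuousOn_max_sub.mono hsubset).integrableOn_compact
      hcompact).of_forall_sdiff_eq_zero h.isOpen.measurableSet fun z hz => ?_
    have hzr : r ≤ u z := not_lt.1 fun hlt => hz.2 (subset_closure ⟨hz.1, hlt⟩)
    rw [max_eq_left hzr, sub_self]
  rw [setIntegral_pos_iff_support_of_nonneg_ae (Eventually.of_forall hnonneg) hint]
  refine (h.isOpen_sublevel.measure_pos volume h.nonempty).trans_le (measure_mono ?_)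
  rintro z ⟨hz, hzr⟩
  refine ⟨?_, hz⟩
  rw [Function.mem_support, max_eq_right hzr.le]
  exact (sub_pos.2 hzr).ne'

theorem integral_cutoff_mul_norm_sq_add_one_lt (h : IsTruncatedRieszMeasure u Ω ν r νr)
    (hχ : IsCutoff Ω K χ) (hK : sublevel u Ω r ⊆ K) :
    ∫ z, χ z * (‖z‖ ^ 2 + 1) ∂ν < ∫ z, χ z * (‖z‖ ^ 2 + 1) ∂νr := by
  have hnorm (z : ℂ) : ContDiffAt ℝ 2 (fun w : ℂ => ‖w‖ ^ 2) z := (contDiff_norm_sq ℝ).contDiffAt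
  have hlap (z : ℂ) : lap (fun w => ‖w‖ ^ 2 + 1) z = 4 := by
    have hsq : lap (fun w => ‖w‖ ^ 2) z = 4 * ‖deriv (fun w : ℂ => w) z‖ ^ 2 :=
      lap_norm_sq_of_differentiableOn isOpen_univ differentiableOn_id (mem_univ z)
    rw [lap_add (hnorm z) contDiffAt_const, lap_const, hsq, deriv_id'', norm_one]
    norm_num
  rw [h.integral_cutoff_mul_eq (v := fun z => ‖z‖ ^ 2 + 1) hχ hK
    fun z _ => (hnorm z).add contDiffAt_const]
  simp only [hlap, integral_mul_const]
  linarith [h.setIntegral_max_sub_pos]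

-- `IsRieszMeasure` alone does not make `νr` locally finite, as the Bochner integral of a
-- non-integrable function is `0`; here that junk value is excluded by the strict inequality.
theorem measure_lt_top_of_isCompact (h : IsTruncatedRieszMeasure u Ω ν r νr) (hK : IsCompact K)
    (hKΩ : K ⊆ Ω) : νr K < ⊤ := by
  obtain ⟨χ, hχ⟩ := h.exists_isCutoff_union hK hKΩ
  have hlt := h.integral_cutoff_mul_norm_sq_add_one_lt hχ
    (subset_closure.trans subset_union_right)
  have hnonneg : 0 ≤ ∫ z, χ z * (‖z‖ ^ 2 + 1) ∂ν :=
    integral_nonneg fun z => mul_nonneg (hχ.nonneg z) (by positivity)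
  have hint : Integrable (fun z => χ z * (‖z‖ ^ 2 + 1)) νr :=
    by_contra fun hint => (hnonneg.trans_lt hlt).ne' (integral_undef hint)
  refine (measure_mono fun z hz => ?_).trans_lt (hint.measure_norm_ge_lt_top one_pos)
  rw [mem_ofPred_eq, hχ.eq_one (Or.inl hz), one_mul, Real.norm_of_nonneg (by positivity)]
  exact le_add_of_nonneg_left (by positivity)

theorem integrable (h : IsTruncatedRieszMeasure u Ω ν r νr) (hφ : IsTestFunction Ω φ) :
    Integrable φ νr := by
  obtain ⟨B, hB⟩ :=
    hφ.hasCompactSupport.exists_bound_of_continuousOn hφ.contDiff.continuous.continuousOn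
  refine (integrableOn_iff_integrable_of_support_subset (subset_tsupport φ)).1
    (IntegrableOn.of_bound (h.measure_lt_top_of_isCompact hφ.hasCompactSupport hφ.tsupport_subset)
      hφ.contDiff.continuous.aestronglyMeasurable B ?_)
  exact (ae_restrict_iff' (isClosed_tsupport φ).measurableSet).2 (Eventually.of_forall hB)

theorem lintegral_cutoff_mul_eq (h : IsTruncatedRieszMeasure u Ω ν r νr) (hχ : IsCutoff Ω K χ)
    (hv : ∀ z ∈ Ω, ContDiffAt ℝ 2 v z) (hv0 : ∀ z ∈ Ω, 0 ≤ v z) :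
    (∫⁻ z, ENNReal.ofReal (χ z * v z) ∂ν = ENNReal.ofReal (∫ z, χ z * v z ∂ν)) ∧
      ∫⁻ z, ENNReal.ofReal (χ z * v z) ∂νr = ENNReal.ofReal (∫ z, χ z * v z ∂νr) := by
  have := h.finite
  have htest := hχ.toIsTestFunction.mul hv
  have hnonneg (μ : Measure ℂ) : ∀ᵐ z ∂μ, 0 ≤ χ z * v z :=
    Eventually.of_forall (hχ.mul_nonneg hv0)
  have hintegrable : Integrable (fun z => χ z * v z) ν :=
    htest.contDiff.continuous.integrable_of_hasCompactSupport htest.hasCompactSupport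
  exact ⟨(ofReal_integral_eq_lintegral_ofReal hintegrable (hnonneg ν)).symm,
    (ofReal_integral_eq_lintegral_ofReal (h.integrable htest) (hnonneg νr)).symm⟩

theorem lintegral_le_of_lap_eq_zero (h : IsTruncatedRieszMeasure u Ω ν r νr)
    (hv : ∀ z ∈ Ω, ContDiffAt ℝ 2 v z) (hv0 : ∀ z ∈ Ω, 0 ≤ v z) (hlap : ∀ z ∈ Ω, lap v z = 0) :
    ∫⁻ z, ENNReal.ofReal (v z) ∂νr ≤ ∫⁻ z, ENNReal.ofReal (v z) ∂ν := by
  refine lintegral_le_of_forall_sublevel h.neg h.exhaustion.neg h.riesz_max.1 fun c hc => ?_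
  obtain ⟨hcompact, hsubset⟩ := h.exhaustion.exh c hc.2
  obtain ⟨χ, hχ⟩ := h.exists_isCutoff_union hcompact hsubset
  have hintegral : ∫ z, χ z * v z ∂νr = ∫ z, χ z * v z ∂ν := by
    rw [h.integral_cutoff_mul_eq hχ (subset_closure.trans subset_union_right) hv,
      setIntegral_congr_fun h.isOpen.measurableSet fun z hz => by
        rw [hlap z hz, mul_zero], integral_zero, mul_zero, add_zero]
  obtain ⟨hν, hνr⟩ := h.lintegral_cutoff_mul_eq hχ hv hv0
  calc ∫⁻ z in sublevel u Ω c, ENNReal.ofReal (v z) ∂νr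
    _ ≤ ∫⁻ z in sublevel u Ω c, ENNReal.ofReal (χ z * v z) ∂νr :=
        hχ.setLIntegral_le_setLIntegral_mul (h.exhaustion.isOpen_sublevel h.isOpen c).measurableSet
          (subset_closure.trans subset_union_left) νr
    _ ≤ ∫⁻ z, ENNReal.ofReal (χ z * v z) ∂νr := setLIntegral_le_lintegral _ _
    _ = ∫⁻ z, ENNReal.ofReal (χ z * v z) ∂ν := by rw [hν, hνr, hintegral]
    _ ≤ ∫⁻ z, ENNReal.ofReal (v z) ∂ν := hχ.lintegral_mul_le hv0 h.riesz.1

theorem measure_univ_le (h : IsTruncatedRieszMeasure u Ω ν r νr) : νr univ ≤ ν univ := by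
  simpa using h.lintegral_le_of_lap_eq_zero (v := fun _ => 1) (fun _ _ => contDiffAt_const)
    (fun _ _ => zero_le_one) fun z _ => lap_const 1 z

theorem ne_zero (h : IsTruncatedRieszMeasure u Ω ν r νr) : ν ≠ 0 := by
  rintro rfl
  obtain rfl : νr = 0 := Measure.measure_univ_eq_zero.1 (by simpa using h.measure_univ_le)
  obtain ⟨χ, hχ⟩ := h.exists_isCutoff_union isCompact_empty (empty_subset Ω)
  simpa using h.integral_cutoff_mul_norm_sq_add_one_lt hχ
    (subset_closure.trans subset_union_right)

theorem measure_sublevel (h : IsTruncatedRieszMeasure u Ω ν r νr) : νr (sublevel u Ω r) = 0 := by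
  refine measure_null_of_locally_null _ fun z hz => ?_
  obtain ⟨L, hL, hzL, hLV⟩ :=
    exists_compact_between isCompact_singleton h.isOpen_sublevel (singleton_subset_iff.2 hz)
  refine ⟨L, mem_nhdsWithin_of_mem_nhds (mem_interior_iff_mem_nhds.1 (hzL rfl)), ?_⟩
  obtain ⟨χ, hχ⟩ := exists_isCutoff h.isOpen_sublevel hL hLV
  have htest : IsTestFunction Ω χ :=
    ⟨hχ.contDiff, hχ.hasCompactSupport, hχ.tsupport_subset.trans fun _ hw => hw.1⟩
  have hoff (w : ℂ) (hw : w ∉ tsupport χ) : max (u w) r * lap χ w = 0 := by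
    rw [lap_eq_zero_of_notMem_tsupport hw, mul_zero]
  have hconst (w : ℂ) : max (u w) r * lap χ w = r * lap χ w := by
    by_cases hw : w ∈ tsupport χ
    · rw [max_eq_right (hχ.tsupport_subset hw).2.le]
    · rw [hoff w hw, lap_eq_zero_of_notMem_tsupport hw, mul_zero]
  have hintegral : ∫ w, χ w ∂νr = 0 := by
    rw [h.riesz_max.2 χ htest.contDiff htest.hasCompactSupport htest.tsupport_subset,
      setIntegral_eq_integral_of_forall_compl_eq_zero fun w hw =>
        hoff w fun hwχ => hw (htest.tsupport_subset hwχ)]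
    simp only [hconst, integral_const_mul, htest.integral_lap_eq_zero, mul_zero]
  have hae := (integral_eq_zero_iff_of_nonneg hχ.nonneg (h.integrable htest)).1 hintegral
  refine measure_mono_null (fun w hw => ?_) (ae_iff.1 hae)
  simp [hχ.eq_one hw]

theorem setLIntegral_cutoff_mul_le (h : IsTruncatedRieszMeasure u Ω ν r νr)
    (hχ : IsCutoff Ω K χ) (hK : sublevel u Ω r ⊆ K) (hv : ∀ z ∈ Ω, ContDiffAt ℝ 2 v z)
    (hv0 : ∀ z ∈ Ω, 0 ≤ v z) (hlap : ∀ z ∈ Ω, 0 ≤ lap v z) :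
    ∫⁻ z in sublevel u Ω r, ENNReal.ofReal (χ z * v z) ∂ν ≤
      ∫⁻ z, ENNReal.ofReal (χ z * v z) ∂(νr - ν.restrict {z | z ∈ Ω ∧ r ≤ u z}) := by
  have := h.finite
  have : IsFiniteMeasure νr := ⟨h.measure_univ_le.trans_lt (measure_lt_top ν univ)⟩
  obtain ⟨hν, hνr⟩ := h.lintegral_cutoff_mul_eq hχ hv hv0
  have hmeas : MeasurableSet {z | z ∈ Ω ∧ r ≤ u z} := by
    convert h.isOpen.measurableSet.diff h.isOpen_sublevel.measurableSet using 1
    ext z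
    simp +contextual
  have hdisjoint : Disjoint (sublevel u Ω r) {z | z ∈ Ω ∧ r ≤ u z} :=
    Set.disjoint_left.2 fun z hz hz' => hz.2.not_ge hz'.2
  have hle : ∫ z, χ z * v z ∂ν ≤ ∫ z, χ z * v z ∂νr := by
    rw [h.integral_cutoff_mul_eq hχ hK hv, le_add_iff_nonneg_right]
    exact mul_nonneg (by norm_num) (setIntegral_nonneg h.isOpen.measurableSet fun z hz =>
      mul_nonneg (sub_nonneg.2 (le_max_left _ _)) (hlap z hz))
  have hfinite : ∫⁻ z in {z | z ∈ Ω ∧ r ≤ u z}, ENNReal.ofReal (χ z * v z) ∂ν ≠ ⊤ :=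
    ne_top_of_le_ne_top (hν ▸ ENNReal.ofReal_ne_top) (setLIntegral_le_lintegral _ _)
  refine (ENNReal.add_le_add_iff_right hfinite).1 ?_
  calc _ = ∫⁻ z in sublevel u Ω r ∪ {z | z ∈ Ω ∧ r ≤ u z}, ENNReal.ofReal (χ z * v z) ∂ν :=
        (lintegral_union hmeas hdisjoint).symm
    _ ≤ ∫⁻ z, ENNReal.ofReal (χ z * v z) ∂ν := setLIntegral_le_lintegral _ _
    _ ≤ ∫⁻ z, ENNReal.ofReal (χ z * v z) ∂νr := by
        rw [hν, hνr]
        exact ENNReal.ofReal_le_ofReal hle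
    _ ≤ _ := (lintegral_mono' (measure_le_sub_add _ _) le_rfl).trans_eq
        (lintegral_add_measure _ _ _)

theorem setLIntegral_le_of_lap_nonneg (h : IsTruncatedRieszMeasure u Ω ν r νr)
    (hv : ∀ z ∈ Ω, ContDiffAt ℝ 2 v z) (hv0 : ∀ z ∈ Ω, 0 ≤ v z) (hlap : ∀ z ∈ Ω, 0 ≤ lap v z) :
    ∫⁻ z in sublevel u Ω r, ENNReal.ofReal (v z) ∂ν ≤
      ∫⁻ z, ENNReal.ofReal (v z) ∂(νr - ν.restrict {z | z ∈ Ω ∧ r ≤ u z}) := by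
  obtain ⟨hcompact, hsubset⟩ := h.exhaustion.exh r h.neg
  obtain ⟨χ, hχ⟩ := exists_isCutoff h.isOpen hcompact hsubset
  have hcompl : (νr - ν.restrict {z | z ∈ Ω ∧ r ≤ u z}) Ωᶜ = 0 :=
    le_antisymm ((Measure.sub_le Ωᶜ).trans h.riesz_max.1.le) bot_le
  exact (hχ.setLIntegral_le_setLIntegral_mul h.isOpen_sublevel.measurableSet subset_closure ν).trans
    ((h.setLIntegral_cutoff_mul_le hχ subset_closure hv hv0 hlap).trans
      (hχ.lintegral_mul_le hv0 hcompl))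

end IsTruncatedRieszMeasure

/-! ### Harmonic majorants -/

/-- A smooth convex replacement for `t ↦ max t 0`, vanishing for `t ≤ 0` and at least `t - 1`. -/
def smoothRamp (t : ℝ) : ℝ :=
  ∫ x in (0 : ℝ)..t, Real.smoothTransition x

section SmoothRamp

theorem deriv_smoothRamp : deriv smoothRamp = Real.smoothTransition :=
  funext fun _ => Real.smoothTransition.continuous.deriv_integral _ _ _

theorem contDiff_smoothRamp : ContDiff ℝ 2 smoothRamp := by
  rw [show (2 : WithTop ℕ∞) = 1 + 1 by norm_num, contDiff_succ_iff_deriv, deriv_smoothRamp]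
  exact ⟨fun t => ((Real.smoothTransition.continuous.integral_hasStrictDerivAt 0
    t).hasDerivAt).differentiableAt, by simp, Real.smoothTransition.contDiff⟩

theorem smoothRamp_eq_zero {t : ℝ} (ht : t ≤ 0) : smoothRamp t = 0 := by
  rw [smoothRamp, intervalIntegral.integral_congr (g := fun _ => (0 : ℝ)) fun x hx => ?_]
  · exact intervalIntegral.integral_zero
  rw [uIcc_of_ge ht] at hx
  exact Real.smoothTransition.zero_of_nonpos hx.2

theorem smoothRamp_nonneg (t : ℝ) : 0 ≤ smoothRamp t := by
  rcases le_total t 0 with ht | ht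
  · exact (smoothRamp_eq_zero ht).ge
  · exact intervalIntegral.integral_nonneg ht fun x _ => Real.smoothTransition.nonneg x

theorem sub_one_le_smoothRamp (t : ℝ) : t - 1 ≤ smoothRamp t := by
  rcases le_total t 1 with ht | ht
  · exact (sub_nonpos.2 ht).trans (smoothRamp_nonneg t)
  have hint (a b : ℝ) : IntervalIntegrable Real.smoothTransition volume a b :=
    Real.smoothTransition.continuous.intervalIntegrable a b
  have hone : ∫ x in (1 : ℝ)..t, Real.smoothTransition x = t - 1 := by
    rw [intervalIntegral.integral_congr (g := fun _ => (1 : ℝ)) fun x hx => ?_]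
    · simp
    · rw [uIcc_of_le ht] at hx
      exact Real.smoothTransition.one_of_one_le hx.1
  calc t - 1 ≤ smoothRamp 1 + (t - 1) := le_add_of_nonneg_left (smoothRamp_nonneg 1)
    _ = smoothRamp t := by
        rw [← hone]
        exact intervalIntegral.integral_add_adjacent_intervals (hint 0 1) (hint 1 t)

end SmoothRamp

/-- A smooth version of the function equal to `max(w, h)` on `D` and to `w` off `D`. If `h < w` on
the frontier of `D`, then it inherits smoothness and subharmonicity from `w` and `h`. -/
def smoothGluing (D : Set ℂ) (w h : ℂ → ℝ) (z : ℂ) : ℝ :=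
  w z + D.indicator (fun z => smoothRamp (h z - w z)) z

section SmoothGluing

variable {D : Set ℂ} {w h : ℂ → ℝ} {z : ℂ}

theorem smoothGluing_of_notMem (hz : z ∉ D) : smoothGluing D w h z = w z := by
  rw [smoothGluing, indicator_of_notMem hz, add_zero]

theorem le_smoothGluing (D : Set ℂ) (w h : ℂ → ℝ) (z : ℂ) : w z ≤ smoothGluing D w h z :=
  le_add_of_nonneg_right (indicator_nonneg (fun _ _ => smoothRamp_nonneg _) z)

theorem sub_one_le_smoothGluing (hz : z ∈ D) : h z - 1 ≤ smoothGluing D w h z := by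
  rw [smoothGluing, indicator_of_mem hz]
  linarith [sub_one_le_smoothRamp (h z - w z)]

theorem smoothGluing_eventuallyEq_of_mem (hD : IsOpen D) (hz : z ∈ D) :
    smoothGluing D w h =ᶠ[𝓝 z] fun z => w z + smoothRamp (h z - w z) := by
  filter_upwards [hD.mem_nhds hz] with y hy
  rw [smoothGluing, indicator_of_mem hy]

theorem smoothGluing_eventuallyEq_of_notMem (hD : IsOpen D) (hw : ContinuousAt w z)
    (hh : ContinuousAt h z) (hlt : z ∈ frontier D → h z < w z) (hz : z ∉ D) :
    smoothGluing D w h =ᶠ[𝓝 z] w := by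
  by_cases hzD : z ∈ closure D
  · filter_upwards [hh.eventually_lt hw (hlt (hD.frontier_eq ▸ ⟨hzD, hz⟩))] with y hy
    rw [smoothGluing, add_eq_left]
    exact indicator_apply_eq_zero.2 fun _ => smoothRamp_eq_zero (sub_nonpos.2 hy.le)
  · filter_upwards [isClosed_closure.isOpen_compl.mem_nhds hzD] with y hy
    exact smoothGluing_of_notMem fun hyD => hy (subset_closure hyD)

theorem contDiffAt_smoothGluing (hD : IsOpen D) (hw : ContDiffAt ℝ 2 w z) (hh : ContDiffAt ℝ 2 h z)
    (hlt : z ∈ frontier D → h z < w z) : ContDiffAt ℝ 2 (smoothGluing D w h) z := by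
  by_cases hz : z ∈ D
  · exact (hw.add (contDiff_smoothRamp.contDiffAt.comp z (hh.sub hw))).congr_of_eventuallyEq
      (smoothGluing_eventuallyEq_of_mem hD hz)
  · exact hw.congr_of_eventuallyEq
      (smoothGluing_eventuallyEq_of_notMem hD hw.continuousAt hh.continuousAt hlt hz)

-- Inside `D`, with `η = smoothRamp` and `k = h - w`, the Laplacian is
-- `(1 - η'(k)) Δw + η'(k) Δh + η''(k) |∇k|²`.
theorem lap_smoothGluing_nonneg (hD : IsOpen D) (hw : ContDiffAt ℝ 2 w z) (hh : ContDiffAt ℝ 2 h z)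
    (hlt : z ∈ frontier D → h z < w z) (hlapw : 0 ≤ lap w z) (hlaph : 0 ≤ lap h z) :
    0 ≤ lap (smoothGluing D w h) z := by
  by_cases hz : z ∈ D
  · have hk : ContDiffAt ℝ 2 (fun z => h z - w z) z := hh.sub hw
    have hηk : ContDiffAt ℝ 2 (fun z => smoothRamp (h z - w z)) z :=
      contDiff_smoothRamp.contDiffAt.comp z hk
    have hη'' : 0 ≤ deriv Real.smoothTransition (h z - w z) :=
      Real.smoothTransition.monotone.deriv_nonneg
    have hη' : 0 ≤ Real.smoothTransition (h z - w z) := Real.smoothTransition.nonneg _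
    have hη'1 : 0 ≤ 1 - Real.smoothTransition (h z - w z) :=
      sub_nonneg.2 (Real.smoothTransition.le_one _)
    rw [lap_congr (smoothGluing_eventuallyEq_of_mem hD hz),
      lap_add hw hηk, lap_comp contDiff_smoothRamp.contDiffAt hk, lap_sub hh hw,
      deriv_smoothRamp]
    calc 0 ≤ (1 - Real.smoothTransition (h z - w z)) * lap w z +
          Real.smoothTransition (h z - w z) * lap h z +
          deriv Real.smoothTransition (h z - w z) *
            (fderiv ℝ (fun z => h z - w z) z 1 ^ 2 + fderiv ℝ (fun z => h z - w z) z I ^ 2) := by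
          positivity
      _ = _ := by ring
  · rwa [lap_congr
      (smoothGluing_eventuallyEq_of_notMem hD hw.continuousAt hh.continuousAt hlt hz)]

end SmoothGluing

section HarmonicMajorant

variable {Ω : Set ℂ} {u : ℂ → ℝ} {ν νr : Measure ℂ} {r s p : ℝ} {ψ f : ℂ → ℂ}

theorem div_ofReal_mem_ball (hs0 : 0 < s) {w : ℂ} (hw : ‖w‖ < s) : w / s ∈ ball (0 : ℂ) 1 := by
  rwa [mem_ball_zero_iff, norm_div, norm_real, Real.norm_of_nonneg hs0.le, div_lt_one hs0]

theorem IsConformalOnto.isOpen_sublevel_norm_discInverse (hψ : IsConformalOnto ψ Ω) (s : ℝ) :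
    IsOpen (sublevel (fun z => ‖discInverse ψ z‖) Ω s) :=
  hψ.differentiableOn_discInverse.continuousOn.norm.isOpen_inter_preimage hψ.isOpen isOpen_Iio

theorem IsConformalOnto.norm_discInverse_eq_of_mem_frontier (hψ : IsConformalOnto ψ Ω) {z : ℂ}
    (hz : z ∈ Ω) (hzs : z ∈ frontier (sublevel (fun z => ‖discInverse ψ z‖) Ω s)) :
    ‖discInverse ψ z‖ = s := by
  rw [(hψ.isOpen_sublevel_norm_discInverse s).frontier_eq] at hzs
  have hcont : ContinuousAt (fun z => ‖discInverse ψ z‖) z :=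
    (hψ.differentiableOn_discInverse.continuousOn.continuousAt (hψ.isOpen.mem_nhds hz)).norm
  refine le_antisymm ?_ (not_lt.1 fun hlt => hzs.2 ⟨hz, hlt⟩)
  exact le_of_tendsto_of_frequently hcont
    ((mem_closure_iff_frequently.1 hzs.1).mono fun y hy => hy.2.le)

theorem IsConformalOnto.continuousOn_smoothNormPow_dilation (hψ : IsConformalOnto ψ Ω)
    (hf : DifferentiableOn ℂ f Ω) (p : ℝ) (hs0 : 0 ≤ s) (hs1 : s < 1) :
    ContinuousOn (fun ζ : ℂ => smoothNormPow p f (ψ (s * ζ))) (sphere 0 1) := by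
  have hcont : ContinuousOn (smoothNormPow p f) Ω := fun z hz =>
    (contDiffAt_smoothNormPow hψ.isOpen hf hz).continuousAt.continuousWithinAt
  exact hcont.comp (continuousOn_sphere_of_diffContOnCl
    (diffContOnCl_dilation hψ.differentiableOn hs0 hs1)) fun ζ hζ =>
      hψ.mapsTo (ofReal_mul_mem_ball hs0 hs1 (sphere_subset_closedBall hζ))

theorem integral_harmonicMeasure_le_re_add {φ : ℂ → ℝ} (hφ : ContinuousOn φ (sphere 0 1))
    {Q : ℂ → ℂ} (hQ : DiffContOnCl ℂ Q (ball 0 1)) {ε : ℝ}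
    (hφQ : ∀ ζ ∈ sphere (0 : ℂ) 1, φ ζ ≤ (Q ζ).re + ε) {z : ℂ} (hz : z ∈ ball (0 : ℂ) 1) :
    ∫ θ, φ (circleMap 0 1 θ) ∂harmonicMeasure z ≤ (Q z).re + ε := by
  have := isProbabilityMeasure_harmonicMeasure hz
  have hQi : Integrable (fun θ => (Q (circleMap 0 1 θ)).re) (harmonicMeasure z) :=
    (integrable_harmonicMeasure_of_continuousOn hz (continuousOn_sphere_of_diffContOnCl hQ)).re
  calc ∫ θ, φ (circleMap 0 1 θ) ∂harmonicMeasure z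
      ≤ ∫ θ, ((Q (circleMap 0 1 θ)).re + ε) ∂harmonicMeasure z :=
        integral_mono (integrable_harmonicMeasure_of_continuousOn hz hφ)
          (hQi.add (integrable_const ε)) fun θ => hφQ _ (circleMap_zero_one_mem_sphere θ)
    _ = (Q z).re + ε := by
        rw [integral_add hQi (integrable_const ε), integral_const, probReal_univ, one_smul,
          integral_re_harmonicMeasure_of_diffContOnCl hz hQ]

/-- The function harmonic on `{‖ψ⁻¹‖ < s}` whose values on the boundary `{‖ψ⁻¹‖ = s}` are those of
the subharmonic `smoothNormPow p f`, hence its least harmonic majorant there: a Poisson integral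
transplanted by the chart `w ↦ ψ (s w)`. -/
def harmonicMajorant (p : ℝ) (ψ f : ℂ → ℂ) (s : ℝ) (z : ℂ) : ℝ :=
  ∫ θ, smoothNormPow p f (ψ (s * circleMap 0 1 θ)) ∂harmonicMeasure (discInverse ψ z / s)

-- `v` glues `w = smoothNormPow p f` to the harmonic function `Re Q(κ/s) - 1`, where `κ` is the
-- inverse of `ψ` and `Re Q` approximates `w ∘ ψ(s ·)` on the unit circle.
theorem IsConformalOnto.exists_subharmonic_majorant (hψ : IsConformalOnto ψ Ω)
    (hf : DifferentiableOn ℂ f Ω) (hp : 0 ≤ p) (hs0 : 0 < s) (hs1 : s < 1) :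
    ∃ v : ℂ → ℝ, (∀ z ∈ Ω, ContDiffAt ℝ 2 v z) ∧ (∀ z, 0 ≤ v z) ∧ (∀ z ∈ Ω, 0 ≤ lap v z) ∧
      (∀ z ∈ Ω, ‖discInverse ψ z‖ < s → harmonicMajorant p ψ f s z ≤ v z + 3) ∧
      ∀ z ∈ Ω, s ≤ ‖discInverse ψ z‖ → v z = smoothNormPow p f z := by
  have hcont := hψ.continuousOn_smoothNormPow_dilation hf p hs0.le hs1
  obtain ⟨Q, hQ, hQw⟩ := exists_differentiable_abs_re_sub_lt hcont one_pos
  set κ := discInverse ψ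
  set D := sublevel (fun z => ‖κ z‖) Ω s
  have hDopen : IsOpen D := hψ.isOpen_sublevel_norm_discInverse s
  have hQκ : DifferentiableOn ℂ (fun z => Q (κ z / s) - 1) Ω :=
    (hQ.comp_differentiableOn (hψ.differentiableOn_discInverse.div_const _)).sub_const 1
  have hlt (z : ℂ) (hz : z ∈ Ω) (hzD : z ∈ frontier D) :
      (Q (κ z / s) - 1).re < smoothNormPow p f z := by
    have hκs : ‖κ z‖ = s := hψ.norm_discInverse_eq_of_mem_frontier hz hzD
    have hsphere : κ z / s ∈ sphere (0 : ℂ) 1 := by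
      rw [mem_sphere_zero_iff_norm, norm_div, hκs, norm_real, Real.norm_of_nonneg hs0.le,
        div_self hs0.ne']
    have happrox := (abs_lt.1 (hQw _ hsphere)).1
    rw [mul_div_cancel₀ _ (ofReal_ne_zero.2 hs0.ne'), hψ.apply_discInverse hz] at happrox
    rw [sub_re, one_re]
    linarith
  have hw (z : ℂ) (hz : z ∈ Ω) : ContDiffAt ℝ 2 (smoothNormPow p f) z :=
    contDiffAt_smoothNormPow hψ.isOpen hf hz
  have hh (z : ℂ) (hz : z ∈ Ω) : ContDiffAt ℝ 2 (fun z => (Q (κ z / s) - 1).re) z :=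
    contDiffAt_re_of_differentiableOn hψ.isOpen hQκ hz
  refine ⟨smoothGluing D (smoothNormPow p f) fun z => (Q (κ z / s) - 1).re,
    fun z hz => contDiffAt_smoothGluing hDopen (hw z hz) (hh z hz) (hlt z hz),
    fun z => (smoothNormPow_nonneg p f z).trans (le_smoothGluing _ _ _ z),
    fun z hz => lap_smoothGluing_nonneg hDopen (hw z hz) (hh z hz) (hlt z hz)
      (lap_smoothNormPow_nonneg hp hψ.isOpen hf hz)
      (lap_re_of_differentiableOn hψ.isOpen hQκ hz).ge,
    fun z hz hzs => ?_, fun z _ hzs => smoothGluing_of_notMem fun hzD => hzs.not_gt hzD.2⟩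
  have hint := integral_harmonicMeasure_le_re_add hcont hQ.diffContOnCl
    (fun ζ hζ => (sub_le_iff_le_add'.1 (le_of_abs_le (hQw ζ hζ).le))) (div_ofReal_mem_ball hs0 hzs)
  have hglue := sub_one_le_smoothGluing (w := smoothNormPow p f)
    (h := fun z => (Q (κ z / s) - 1).re) (show z ∈ D from ⟨hz, hzs⟩)
  rw [sub_re, one_re] at hglue
  rw [harmonicMajorant]
  linarith

theorem lintegral_smoothNormPow_le (hp : 0 ≤ p) (f : ℂ → ℂ) (μ : Measure ℂ) :
    ∫⁻ z, ENNReal.ofReal (smoothNormPow p f z) ∂μ ≤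
      ENNReal.ofReal (2 ^ p) * (∫⁻ z, ENNReal.ofReal (‖f z‖ ^ p) ∂μ + μ univ) := by
  have hpoint (z : ℂ) : ENNReal.ofReal (smoothNormPow p f z) ≤
      ENNReal.ofReal (2 ^ p) * (ENNReal.ofReal (‖f z‖ ^ p) + 1) := by
    rw [← ENNReal.ofReal_one, ← ENNReal.ofReal_add (by positivity) zero_le_one,
      ← ENNReal.ofReal_mul (by positivity)]
    exact ENNReal.ofReal_le_ofReal (smoothNormPow_le hp f z)
  refine (lintegral_mono hpoint).trans_eq ?_
  rw [lintegral_const_mul' _ _ ENNReal.ofReal_ne_top, lintegral_add_right _ measurable_const,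
    lintegral_one]

theorem IsTruncatedRieszMeasure.setLIntegral_harmonicMajorant_le
    (h : IsTruncatedRieszMeasure u Ω ν r νr) (hψ : IsConformalOnto ψ Ω)
    (hf : DifferentiableOn ℂ f Ω) (hp : 0 ≤ p) (hs0 : 0 < s) (hs1 : s < 1)
    (hsub : sublevel (fun z => ‖discInverse ψ z‖) Ω s ⊆ sublevel u Ω r) :
    ∫⁻ z in sublevel (fun z => ‖discInverse ψ z‖) Ω s,
        ENNReal.ofReal (harmonicMajorant p ψ f s z) ∂ν ≤
      ENNReal.ofReal (2 ^ p) * (∫⁻ z, ENNReal.ofReal (‖f z‖ ^ p)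
        ∂(νr - ν.restrict {z | z ∈ Ω ∧ r ≤ u z}) + ν univ) + 3 * ν univ := by
  obtain ⟨v, hv, hv0, hlap, hvD, hvcompl⟩ := hψ.exists_subharmonic_majorant hf hp hs0 hs1
  set D := sublevel (fun z => ‖discInverse ψ z‖) Ω s
  set μ := νr - ν.restrict {z | z ∈ Ω ∧ r ≤ u z}
  have hμle : μ ≤ νr := Measure.sub_le
  have hvμ : ∀ᵐ z ∂μ, v z = smoothNormPow p f z := by
    refine hμle.absolutelyContinuous.ae_le ?_
    filter_upwards [show ∀ᵐ z ∂νr, z ∈ Ω from h.riesz_max.1,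
      measure_eq_zero_iff_ae_notMem.1 h.measure_sublevel] with z hz hzr
    exact hvcompl z hz (not_lt.1 fun hzs => hzr (hsub ⟨hz, hzs⟩))
  calc _ ≤ ∫⁻ z in D, (ENNReal.ofReal (v z) + 3) ∂ν := by
        refine setLIntegral_mono' (hψ.isOpen_sublevel_norm_discInverse s).measurableSet
          fun z hz => ?_
        rw [← ENNReal.ofReal_ofNat, ← ENNReal.ofReal_add (hv0 z) (by norm_num)]
        exact ENNReal.ofReal_le_ofReal (hvD z hz.1 hz.2)
    _ = ∫⁻ z in D, ENNReal.ofReal (v z) ∂ν + 3 * ν D := by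
        rw [lintegral_add_right _ measurable_const, setLIntegral_const]
    _ ≤ ∫⁻ z in sublevel u Ω r, ENNReal.ofReal (v z) ∂ν + 3 * ν univ := by
        gcongr
        exact subset_univ D
    _ ≤ ∫⁻ z, ENNReal.ofReal (v z) ∂μ + 3 * ν univ := by
        gcongr ?_ + _
        exact h.setLIntegral_le_of_lap_nonneg hv (fun z _ => hv0 z) hlap
    _ = ∫⁻ z, ENNReal.ofReal (smoothNormPow p f z) ∂μ + 3 * ν univ := by
        rw [lintegral_congr_ae (hvμ.mono fun z hz => congrArg ENNReal.ofReal hz)]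
    _ ≤ _ := by
        gcongr ?_ + _
        refine (lintegral_smoothNormPow_le hp f μ).trans ?_
        gcongr _ * (_ + ?_)
        exact (hμle univ).trans h.measure_univ_le

end HarmonicMajorant

theorem integral_harmonicMeasure_zero_le {z : ℂ} (hz : z ∈ ball (0 : ℂ) 1) {φ : ℝ → ℝ}
    (hφ0 : ∀ θ, 0 ≤ φ θ) (hφ : Integrable φ (harmonicMeasure z)) :
    ∫ θ, φ θ ∂harmonicMeasure 0 ≤ (1 + ‖z‖) / (1 - ‖z‖) * ∫ θ, φ θ ∂harmonicMeasure z := by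
  have hle := harmonicMeasure_le_smul (mem_ball_self one_pos) hz
  rw [norm_zero, add_zero, sub_zero, div_one, one_mul] at hle
  have hconst : 0 ≤ (1 + ‖z‖) / (1 - ‖z‖) :=
    div_nonneg (by positivity) (sub_nonneg.2 (mem_ball_zero_iff.1 hz).le)
  refine (integral_mono_measure hle (Eventually.of_forall hφ0)
    (hφ.smul_measure ENNReal.ofReal_ne_top)).trans_eq ?_
  rw [integral_smul_measure, ENNReal.toReal_ofReal hconst, smul_eq_mul]

theorem tendsto_poissonKernel {w : ℕ → ℂ} {w₀ : ℂ} (hw₀ : w₀ ∈ ball (0 : ℂ) 1)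
    (hw : Tendsto w atTop (𝓝 w₀)) {ζ : ℂ} (hζ : ζ ∈ sphere (0 : ℂ) 1) :
    Tendsto (fun n => poissonKernel 0 (w n) ζ) atTop (𝓝 (poissonKernel 0 w₀ ζ)) := by
  have hne : ζ - w₀ ≠ 0 := sub_ne_zero.2 (sphere_disjoint_ball.ne_of_mem hζ hw₀)
  simp only [poissonKernel_def, sub_zero]
  exact ((hw.norm.pow 2).const_sub _).div ((hw.const_sub ζ).norm.pow 2)
    (pow_ne_zero _ (norm_ne_zero_iff.2 hne))

theorem lintegral_harmonicMeasure_le_liminf {w : ℕ → ℂ} {w₀ : ℂ} (hw₀ : w₀ ∈ ball (0 : ℂ) 1)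
    (hw : Tendsto w atTop (𝓝 w₀)) {φ : ℕ → ℝ → ℝ≥0∞} {φ₀ : ℝ → ℝ≥0∞}
    (hφ : ∀ n, Measurable (φ n))
    (hlim : ∀ᵐ θ ∂harmonicMeasure 0, Tendsto (fun n => φ n θ) atTop (𝓝 (φ₀ θ))) :
    ∫⁻ θ, φ₀ θ ∂harmonicMeasure w₀ ≤
      liminf (fun n => ∫⁻ θ, φ n θ ∂harmonicMeasure (w n)) atTop := by
  let k (z : ℂ) (θ : ℝ) : ℝ≥0∞ := ENNReal.ofReal ((2 * π)⁻¹ * poissonKernel 0 z (circleMap 0 1 θ))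
  have hk (z : ℂ) : Measurable (k z) := measurable_harmonicMeasure_density z
  have hlim' : ∀ᵐ θ ∂volume.restrict (Ioc 0 (2 * π)),
      Tendsto (fun n => φ n θ) atTop (𝓝 (φ₀ θ)) := by
    rwa [harmonicMeasure_zero, Measure.ae_ennreal_smul_measure_iff
      (ENNReal.ofReal_pos.2 (inv_pos.2 Real.two_pi_pos)).ne'] at hlim
  have hφ₀ : AEMeasurable φ₀ (volume.restrict (Ioc 0 (2 * π))) :=
    aemeasurable_of_tendsto_metrizable_ae atTop (fun n => (hφ n).aemeasurable) hlim'
  have hprod : ∀ᵐ θ ∂volume.restrict (Ioc 0 (2 * π)),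
      Tendsto (fun n => (k (w n) * φ n) θ) atTop (𝓝 ((k w₀ * φ₀) θ)) := by
    filter_upwards [hlim'] with θ hθ
    have hζ := circleMap_zero_one_mem_sphere θ
    have hpos : 0 < (2 * π)⁻¹ * poissonKernel 0 w₀ (circleMap 0 1 θ) :=
      mul_pos (inv_pos.2 Real.two_pi_pos) (poissonKernel_pos hw₀ hζ)
    exact ENNReal.Tendsto.mul (ENNReal.tendsto_ofReal
      ((tendsto_poissonKernel hw₀ hw hζ).const_mul _)) (Or.inl (ENNReal.ofReal_pos.2 hpos).ne') hθ
      (Or.inr ENNReal.ofReal_ne_top)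
  calc ∫⁻ θ, φ₀ θ ∂harmonicMeasure w₀
      = ∫⁻ θ in Ioc 0 (2 * π), (k w₀ * φ₀) θ :=
        lintegral_withDensity_eq_lintegral_mul₀ (hk w₀).aemeasurable hφ₀
    _ = ∫⁻ θ in Ioc 0 (2 * π), liminf (fun n => (k (w n) * φ n) θ) atTop :=
        lintegral_congr_ae (hprod.mono fun θ hθ => hθ.liminf_eq.symm)
    _ ≤ liminf (fun n => ∫⁻ θ in Ioc 0 (2 * π), (k (w n) * φ n) θ) atTop :=
        lintegral_liminf_le fun n => (hk (w n)).mul (hφ n)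
    _ = liminf (fun n => ∫⁻ θ, φ n θ ∂harmonicMeasure (w n)) atTop := by
        congr with n
        exact (lintegral_withDensity_eq_lintegral_mul _ (hk (w n)) (hφ n)).symm

section BoundedHarmonicMajorants

variable {Ω : Set ℂ} {ν : Measure ℂ} {p s : ℝ} {ψ f : ℂ → ℂ} {B : ℝ≥0∞}

theorem IsConformalOnto.integrable_smoothNormPow_dilation (hψ : IsConformalOnto ψ Ω)
    (hf : DifferentiableOn ℂ f Ω) (p : ℝ) (hs0 : 0 ≤ s) (hs1 : s < 1) {z : ℂ}
    (hz : z ∈ ball (0 : ℂ) 1) :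
    Integrable (fun θ => smoothNormPow p f (ψ (s * circleMap 0 1 θ))) (harmonicMeasure z) :=
  integrable_harmonicMeasure_of_continuousOn (f := fun ζ => smoothNormPow p f (ψ (s * ζ))) hz
    (hψ.continuousOn_smoothNormPow_dilation hf p hs0 hs1)

theorem IsConformalOnto.continuousOn_harmonicMajorant (hψ : IsConformalOnto ψ Ω)
    (hf : DifferentiableOn ℂ f Ω) (p : ℝ) (hs0 : 0 < s) (hs1 : s < 1) :
    ContinuousOn (harmonicMajorant p ψ f s) (sublevel (fun z => ‖discInverse ψ z‖) Ω s) := by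
  have hint := hψ.integrable_smoothNormPow_dilation hf p hs0.le hs1 (mem_ball_self one_pos)
  have hball (z : ℂ) (hz : z ∈ sublevel (fun z => ‖discInverse ψ z‖) Ω s) :
      discInverse ψ z / s ∈ ball (0 : ℂ) 1 := div_ofReal_mem_ball hs0 hz.2
  refine (continuous_re.comp_continuousOn ((differentiableOn_herglotz
    (φ := fun ζ => smoothNormPow p f (ψ (s * ζ))) hint).continuousOn.comp
    ((hψ.differentiableOn_discInverse.continuousOn.mono fun z hz => hz.1).div_const _)
    hball)).congr fun z hz => ?_
  exact (re_herglotz (φ := fun ζ => smoothNormPow p f (ψ (s * ζ))) hint (hball z hz)).symm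

theorem IsConformalOnto.exists_measure_sublevel_ne_zero (hψ : IsConformalOnto ψ Ω)
    (hν : ν Ωᶜ = 0) (hν0 : ν ≠ 0) :
    ∃ a ∈ Ioo (0 : ℝ) 1, ν (sublevel (fun z => ‖discInverse ψ z‖) Ω a) ≠ 0 := by
  by_contra! h
  have hle : ∫⁻ _, 1 ∂ν ≤ 0 :=
    lintegral_le_of_forall_sublevel zero_lt_one
      (fun z hz => mem_ball_zero_iff.1 (hψ.mapsTo_discInverse hz)) hν
      fun a ha => by rw [setLIntegral_one, h a ha]
  rw [lintegral_one, nonpos_iff_eq_zero, Measure.measure_univ_eq_zero] at hle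
  exact hν0 hle

theorem IsConformalOnto.integral_smoothNormPow_le_mul_harmonicMajorant (hψ : IsConformalOnto ψ Ω)
    (hf : DifferentiableOn ℂ f Ω) (p : ℝ) (hs0 : 0 < s) (hs1 : s < 1) {t : ℝ} (ht : t < 1) {z : ℂ}
    (hz : ‖discInverse ψ z‖ ≤ t * s) :
    ∫ θ, smoothNormPow p f (ψ (s * circleMap 0 1 θ)) ∂harmonicMeasure 0 ≤
      (1 + t) / (1 - t) * harmonicMajorant p ψ f s z := by
  have hzt : ‖discInverse ψ z / s‖ ≤ t := by
    rwa [norm_div, norm_real, Real.norm_of_nonneg hs0.le, div_le_iff₀ hs0]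
  have ht0 : 0 ≤ t := (norm_nonneg _).trans hzt
  have hzball : discInverse ψ z / s ∈ ball (0 : ℂ) 1 := mem_ball_zero_iff.2 (hzt.trans_lt ht)
  have hconst : (1 + ‖discInverse ψ z / s‖) / (1 - ‖discInverse ψ z / s‖) ≤ (1 + t) / (1 - t) :=
    div_le_div₀ (by positivity) (by gcongr) (sub_pos.2 ht) (by gcongr)
  have hint := hψ.integrable_smoothNormPow_dilation hf p hs0.le hs1 hzball
  exact (integral_harmonicMeasure_zero_le hzball (fun θ => smoothNormPow_nonneg p f _) hint).trans
    (mul_le_mul_of_nonneg_right hconst (integral_nonneg fun θ => smoothNormPow_nonneg p f _))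

-- By Harnack, the mean of the boundary values is at most a multiple of the majorant on a fixed
-- compact set charged by `ν`.
theorem IsConformalOnto.exists_integral_smoothNormPow_le (hψ : IsConformalOnto ψ Ω)
    (hf : DifferentiableOn ℂ f Ω) (hν : ν Ωᶜ = 0) (hν0 : ν ≠ 0) (hBtop : B ≠ ⊤)
    (hB : ∀ s ∈ Ioo (0 : ℝ) 1, ∫⁻ z in sublevel (fun z => ‖discInverse ψ z‖) Ω s,
      ENNReal.ofReal (harmonicMajorant p ψ f s z) ∂ν ≤ B) :
    ∃ ρ ∈ Ioo (0 : ℝ) 1, ∃ C, ∀ s ∈ Ioo ρ 1,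
      ∫ θ, smoothNormPow p f (ψ (s * circleMap 0 1 θ)) ∂harmonicMeasure 0 ≤ C := by
  obtain ⟨a, ⟨ha0, ha1⟩, hνa⟩ := hψ.exists_measure_sublevel_ne_zero hν hν0
  obtain ⟨ρ, haρ, hρ1⟩ := exists_between ha1
  have hρ0 : 0 < ρ := ha0.trans haρ
  set D := sublevel (fun z => ‖discInverse ψ z‖) Ω a
  obtain ⟨K, hK0, hK⟩ : ∃ K : ℝ, 0 ≤ K ∧ ∀ s ∈ Ioo ρ 1, ∀ z ∈ D,
      ∫ θ, smoothNormPow p f (ψ (s * circleMap 0 1 θ)) ∂harmonicMeasure 0 ≤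
        K * harmonicMajorant p ψ f s z := by
    have ht1 : a / ρ < 1 := (div_lt_one hρ0).2 haρ
    refine ⟨(1 + a / ρ) / (1 - a / ρ), div_nonneg (by positivity) (sub_nonneg.2 ht1.le),
      fun s hs z hz => hψ.integral_smoothNormPow_le_mul_harmonicMajorant hf p (hρ0.trans hs.1) hs.2
        ht1 (hz.2.le.trans ?_)⟩
    rw [div_mul_eq_mul_div, le_div_iff₀ hρ0]
    exact mul_le_mul_of_nonneg_left hs.1.le ha0.le
  have hKB : ENNReal.ofReal K * B ≠ ⊤ := ENNReal.mul_ne_top ENNReal.ofReal_ne_top hBtop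
  refine ⟨ρ, ⟨hρ0, hρ1⟩, (ENNReal.ofReal K * B / ν D).toReal, fun s hs => ?_⟩
  set A := ∫ θ, smoothNormPow p f (ψ (s * circleMap 0 1 θ)) ∂harmonicMeasure 0
  have hmul : ENNReal.ofReal A * ν D ≤ ENNReal.ofReal K * B :=
    calc ENNReal.ofReal A * ν D
        ≤ ∫⁻ z in D, ENNReal.ofReal K * ENNReal.ofReal (harmonicMajorant p ψ f s z) ∂ν := by
          rw [← setLIntegral_const]
          refine setLIntegral_mono' (hψ.isOpen_sublevel_norm_discInverse a).measurableSet
            fun z hz => ?_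
          rw [← ENNReal.ofReal_mul hK0]
          exact ENNReal.ofReal_le_ofReal (hK s hs z hz)
      _ = ENNReal.ofReal K * ∫⁻ z in D, ENNReal.ofReal (harmonicMajorant p ψ f s z) ∂ν :=
          lintegral_const_mul' _ _ ENNReal.ofReal_ne_top
      _ ≤ ENNReal.ofReal K * B := by
          gcongr
          refine (lintegral_mono_set ?_).trans (hB s ⟨hρ0.trans hs.1, hs.2⟩)
          exact fun z hz => ⟨hz.1, hz.2.trans (haρ.trans hs.1)⟩
  exact (ENNReal.ofReal_le_iff_le_toReal (ENNReal.div_lt_top hKB hνa).ne).1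
    ((ENNReal.le_div_iff_mul_le (Or.inl hνa) (Or.inr hKB)).2 hmul)

theorem IsConformalOnto.differentiableOn_comp (hψ : IsConformalOnto ψ Ω)
    (hf : DifferentiableOn ℂ f Ω) : DifferentiableOn ℂ (f ∘ ψ) (ball 0 1) :=
  hf.comp hψ.differentiableOn hψ.mapsTo

theorem IsConformalOnto.continuousOn_comp_dilation (hψ : IsConformalOnto ψ Ω)
    (hf : DifferentiableOn ℂ f Ω) (hs0 : 0 ≤ s) (hs1 : s < 1) :
    ContinuousOn (fun ζ => f (ψ (s * ζ))) (sphere 0 1) :=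
  continuousOn_sphere_of_diffContOnCl
    (diffContOnCl_dilation (hψ.differentiableOn_comp hf) hs0 hs1)

theorem IsConformalOnto.memHardyOne_comp (hψ : IsConformalOnto ψ Ω) (hf : DifferentiableOn ℂ f Ω)
    (hp : 1 ≤ p) {ρ C : ℝ} (hρ : ρ ∈ Ioo (0 : ℝ) 1)
    (hC : ∀ s ∈ Ioo ρ 1,
      ∫ θ, smoothNormPow p f (ψ (s * circleMap 0 1 θ)) ∂harmonicMeasure 0 ≤ C) :
    MemHardyOne (f ∘ ψ) := by
  obtain ⟨s, -, hs, hlim⟩ := exists_seq_strictMono_tendsto' hρ.2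
  have h0 : (0 : ℂ) ∈ ball (0 : ℂ) 1 := mem_ball_self one_pos
  have hs0 (n : ℕ) : 0 ≤ s n := (hρ.1.trans (hs n).1).le
  refine ⟨hψ.differentiableOn_comp hf, s, hs0, fun n => (hs n).2, hlim, C, fun n => ?_⟩
  have hint := (integrable_harmonicMeasure_of_continuousOn (f := fun ζ => f (ψ (s n * ζ))) h0
    (hψ.continuousOn_comp_dilation hf (hs0 n) (hs n).2)).norm
  exact (integral_mono hint (hψ.integrable_smoothNormPow_dilation hf p (hs0 n) (hs n).2 h0)
    fun θ => norm_le_smoothNormPow hp f _).trans (hC (s n) (hs n))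

theorem IsConformalOnto.integrable_norm_boundaryValue_rpow (hψ : IsConformalOnto ψ Ω)
    (hf : DifferentiableOn ℂ f Ω) (hg : MemHardyOne (f ∘ ψ)) (hp : 0 ≤ p) {ρ C : ℝ}
    (hρ : ρ ∈ Ioo (0 : ℝ) 1)
    (hC : ∀ s ∈ Ioo ρ 1,
      ∫ θ, smoothNormPow p f (ψ (s * circleMap 0 1 θ)) ∂harmonicMeasure 0 ≤ C) :
    Integrable (fun θ => ‖boundaryValue (f ∘ ψ) (circleMap 0 1 θ)‖ ^ p) (harmonicMeasure 0) := by
  obtain ⟨s, -, hs, hlim⟩ := exists_seq_strictMono_tendsto' hρ.2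
  have h0 : (0 : ℂ) ∈ ball (0 : ℂ) 1 := mem_ball_self one_pos
  have hs0 (n : ℕ) : 0 ≤ s n := (hρ.1.trans (hs n).1).le
  have hint (n : ℕ) : Integrable (fun θ => ‖f (ψ (s n * circleMap 0 1 θ))‖ ^ p)
      (harmonicMeasure 0) :=
    integrable_harmonicMeasure_of_continuousOn (f := fun ζ => ‖f (ψ (s n * ζ))‖ ^ p) h0
      ((hψ.continuousOn_comp_dilation hf (hs0 n) (hs n).2).norm.rpow_const fun _ _ => Or.inr hp)
  refine (integrable_and_integral_le_of_tendsto_ae hint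
    (fun n => Eventually.of_forall fun θ => by positivity) (Eventually.of_forall fun n => ?_)
    (tendsto_const_nhds (x := C)) ?_).1
  · exact (integral_mono (hint n)
      (hψ.integrable_smoothNormPow_dilation hf p (hs0 n) (hs n).2 h0)
      fun θ => norm_rpow_le_smoothNormPow hp f _).trans (hC (s n) (hs n))
  · filter_upwards [hg.ae_NTLim] with θ hθ
    exact (hθ.tendsto_radial hs0 (fun n => (hs n).2) hlim).norm.rpow_const (Or.inr hp)

theorem IsConformalOnto.lintegral_norm_rpow_le_harmonicMajorant (hψ : IsConformalOnto ψ Ω)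
    (hf : DifferentiableOn ℂ f Ω) (hp : 0 ≤ p) (hs0 : 0 < s) (hs1 : s < 1) {z : ℂ}
    (hz : ‖discInverse ψ z‖ < s) :
    ∫⁻ θ, ENNReal.ofReal (‖f (ψ (s * circleMap 0 1 θ))‖ ^ p)
        ∂harmonicMeasure (discInverse ψ z / s) ≤
      ENNReal.ofReal (harmonicMajorant p ψ f s z) := by
  rw [harmonicMajorant, ofReal_integral_eq_lintegral_ofReal
    (hψ.integrable_smoothNormPow_dilation hf p hs0.le hs1 (div_ofReal_mem_ball hs0 hz))
    (Eventually.of_forall fun θ => smoothNormPow_nonneg p f _)]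
  exact lintegral_mono fun θ => ENNReal.ofReal_le_ofReal (norm_rpow_le_smoothNormPow hp f _)

theorem IsConformalOnto.ofReal_integral_boundaryValue_le_liminf (hψ : IsConformalOnto ψ Ω)
    (hf : DifferentiableOn ℂ f Ω) (hg : MemHardyOne (f ∘ ψ)) (hp : 0 ≤ p)
    (hint : Integrable (fun θ => ‖boundaryValue (f ∘ ψ) (circleMap 0 1 θ)‖ ^ p)
      (harmonicMeasure 0))
    {s : ℕ → ℝ} (hs : ∀ n, s n ∈ Ioo (0 : ℝ) 1) (hlim : Tendsto s atTop (𝓝 1)) {z : ℂ}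
    (hz : z ∈ Ω) :
    ENNReal.ofReal (∫ θ, ‖boundaryValue (f ∘ ψ) (circleMap 0 1 θ)‖ ^ p
        ∂harmonicMeasure (discInverse ψ z)) ≤
      liminf (fun n => ENNReal.ofReal (harmonicMajorant p ψ f (s n) z)) atTop := by
  have hκ : discInverse ψ z ∈ ball (0 : ℂ) 1 := hψ.mapsTo_discInverse hz
  have hκlim : Tendsto (fun n => discInverse ψ z / s n) atTop (𝓝 (discInverse ψ z)) := by
    have hofReal := (continuous_ofReal.tendsto 1).comp hlim
    rw [ofReal_one] at hofReal
    have hdiv := (tendsto_const_nhds (x := discInverse ψ z)).div hofReal one_ne_zero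
    rwa [div_one] at hdiv
  rw [ofReal_integral_eq_lintegral_ofReal
    ((integrable_harmonicMeasure_congr hκ (mem_ball_self one_pos)).2 hint)
    (Eventually.of_forall fun θ => by positivity)]
  refine (lintegral_harmonicMeasure_le_liminf
    (φ := fun n θ => ENNReal.ofReal (‖f (ψ (s n * circleMap 0 1 θ))‖ ^ p)) hκ hκlim (fun n => ?_)
    ?_).trans (liminf_le_liminf ?_)
  · exact (((hψ.continuousOn_comp_dilation hf (hs n).1.le (hs n).2).comp_continuous
      (continuous_circleMap 0 1) circleMap_zero_one_mem_sphere).measurable.norm.pow_const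
        p).ennreal_ofReal
  · filter_upwards [hg.ae_NTLim] with θ hθ
    exact ENNReal.tendsto_ofReal ((hθ.tendsto_radial (fun n => (hs n).1.le) (fun n => (hs n).2)
      hlim).norm.rpow_const (Or.inr hp))
  · filter_upwards [hlim.eventually (lt_mem_nhds (mem_ball_zero_iff.1 hκ))] with n hn
    exact hψ.lintegral_norm_rpow_le_harmonicMajorant hf hp (hs n).1 (hs n).2 hn

theorem IsConformalOnto.lintegral_integral_boundaryValue_le (hψ : IsConformalOnto ψ Ω)
    (hf : DifferentiableOn ℂ f Ω) (hg : MemHardyOne (f ∘ ψ)) (hp : 0 ≤ p)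
    (hint : Integrable (fun θ => ‖boundaryValue (f ∘ ψ) (circleMap 0 1 θ)‖ ^ p)
      (harmonicMeasure 0)) (hν : ν Ωᶜ = 0)
    (hB : ∀ s ∈ Ioo (0 : ℝ) 1, ∫⁻ z in sublevel (fun z => ‖discInverse ψ z‖) Ω s,
      ENNReal.ofReal (harmonicMajorant p ψ f s z) ∂ν ≤ B) :
    ∫⁻ z, ENNReal.ofReal (∫ θ, ‖boundaryValue (f ∘ ψ) (circleMap 0 1 θ)‖ ^ p
      ∂harmonicMeasure (discInverse ψ z)) ∂ν ≤ B := by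
  obtain ⟨s, -, hs, hlim⟩ := exists_seq_strictMono_tendsto' (zero_lt_one' ℝ)
  let D (n : ℕ) : Set ℂ := sublevel (fun z => ‖discInverse ψ z‖) Ω (s n)
  let M (n : ℕ) (z : ℂ) : ℝ≥0∞ := ENNReal.ofReal (harmonicMajorant p ψ f (s n) z)
  have hD (n : ℕ) : MeasurableSet (D n) := (hψ.isOpen_sublevel_norm_discInverse _).measurableSet
  have hM (n : ℕ) : AEMeasurable ((D n).indicator (M n)) ν :=
    (aemeasurable_indicator_iff (hD n)).2 ((hψ.continuousOn_harmonicMajorant hf p (hs n).1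
      (hs n).2).aemeasurable (hD n)).ennreal_ofReal
  calc _ ≤ ∫⁻ z, liminf (fun n => (D n).indicator (M n) z) atTop ∂ν := by
        refine lintegral_mono_ae ?_
        filter_upwards [show ∀ᵐ z ∂ν, z ∈ Ω from hν] with z hz
        refine (hψ.ofReal_integral_boundaryValue_le_liminf hf hg hp hint hs hlim hz).trans_eq
          (liminf_congr ?_)
        filter_upwards [hlim.eventually (lt_mem_nhds (mem_ball_zero_iff.1
          (hψ.mapsTo_discInverse hz)))] with n hn
        exact (indicator_of_mem (show z ∈ D n from ⟨hz, hn⟩) (M n)).symm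
    _ ≤ liminf (fun n => ∫⁻ z, (D n).indicator (M n) z ∂ν) atTop := lintegral_liminf_le' hM
    _ ≤ liminf (fun _ => B) atTop := by
        refine liminf_le_liminf (Eventually.of_forall fun n => ?_)
        rw [lintegral_indicator (hD n)]
        exact hB (s n) (hs n)
    _ = B := liminf_const B

end BoundedHarmonicMajorants

/-! ### The factorization in `H^p_u` -/

/-- `μfam r` is the Monge–Ampère measure `μ_{u,r}` for all levels `r < 0` close to `0`. The Riesz
measure of the truncation, existentially quantified in `IsMAMeasure`, is recorded together with the
properties of `IsTruncatedRieszMeasure`. -/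
def IsMongeAmpereFamily (u : ℂ → ℝ) (Ω : Set ℂ) (ν : Measure ℂ) (μfam : ℝ → Measure ℂ) : Prop :=
  ∀ᶠ r in 𝓝[<] (0 : ℝ), ∃ νr, IsTruncatedRieszMeasure u Ω ν r νr ∧
    μfam r = νr - ν.restrict {z | z ∈ Ω ∧ r ≤ u z}

section PoletskyStessin

variable {Ω : Set ℂ} {u v : ℂ → ℝ} {ν : Measure ℂ} {μfam : ℝ → Measure ℂ} {p s : ℝ} {ψ f h : ℂ → ℂ}

theorem IsExhaustion.isMongeAmpereFamily (hu : IsExhaustion u Ω) (hΩ : IsOpen Ω)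
    (hΩ' : Ω.Nonempty) (hν : IsRieszMeasure u Ω ν) (hfin : ν univ < ⊤)
    (hμ : ∀ r < 0, IsMAMeasure u Ω ν r (μfam r)) : IsMongeAmpereFamily u Ω ν μfam := by
  obtain ⟨a, ha⟩ := hΩ'
  filter_upwards [self_mem_nhdsWithin,
    mem_nhdsWithin_of_mem_nhds (lt_mem_nhds (hu.neg a ha))] with r hr hra
  obtain ⟨νr, hνr, hμr⟩ := hμ r hr
  exact ⟨νr, ⟨hΩ, hu, hν, ⟨hfin⟩, hr, hνr, a, ha, hra⟩, hμr⟩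

theorem IsMongeAmpereFamily.ne_zero (hμ : IsMongeAmpereFamily u Ω ν μfam) : ν ≠ 0 :=
  let ⟨_, _, hr, _⟩ := hμ.exists
  hr.ne_zero

theorem IsMongeAmpereFamily.psNormPow_le_of_harmonicOn (hμ : IsMongeAmpereFamily u Ω ν μfam)
    (hv : HarmonicOn v Ω) (hhv : ∀ z ∈ Ω, ‖h z‖ ^ p ≤ v z) :
    psNormPow p μfam h ≤ ∫⁻ z, ENNReal.ofReal (v z) ∂ν := by
  refine limsup_le_of_le (by isBoundedDefault) ?_
  filter_upwards [hμ] with r ⟨νr, hr, hμr⟩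
  have hle : μfam r ≤ νr := hμr ▸ Measure.sub_le
  calc ∫⁻ z, ENNReal.ofReal (‖h z‖ ^ p) ∂(μfam r)
      ≤ ∫⁻ z, ENNReal.ofReal (‖h z‖ ^ p) ∂νr := lintegral_mono' hle le_rfl
    _ ≤ ∫⁻ z, ENNReal.ofReal (v z) ∂νr := by
        refine lintegral_mono_ae ?_
        filter_upwards [show ∀ᵐ z ∂νr, z ∈ Ω from hr.riesz_max.1] with z hz
        exact ENNReal.ofReal_le_ofReal (hhv z hz)
    _ ≤ ∫⁻ z, ENNReal.ofReal (v z) ∂ν :=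
        hr.lintegral_le_of_lap_eq_zero
          (fun z hz => hv.1.contDiffAt (hr.isOpen.mem_nhds hz))
          (fun z hz => (Real.rpow_nonneg (norm_nonneg _) p).trans (hhv z hz)) hv.2

theorem IsMongeAmpereFamily.psNormPow_le_of_norm_le_one (hμ : IsMongeAmpereFamily u Ω ν μfam)
    (hp : 0 ≤ p) (hh : ∀ z ∈ Ω, ‖h z‖ ≤ 1) : psNormPow p μfam h ≤ ν univ := by
  simpa only [ENNReal.ofReal_one, lintegral_one] using
    hμ.psNormPow_le_of_harmonicOn (v := fun _ => 1) ⟨contDiffOn_const, fun z _ => lap_const 1 z⟩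
    fun z hz => Real.rpow_le_one (norm_nonneg _) (hh z hz) hp

theorem IsConformalOnto.eventually_sublevel_subset (hψ : IsConformalOnto ψ Ω)
    (hu : ContinuousOn u Ω) (hneg : ∀ z ∈ Ω, u z < 0) (hs0 : 0 ≤ s) (hs1 : s < 1) :
    ∀ᶠ r in 𝓝[<] (0 : ℝ), sublevel (fun z => ‖discInverse ψ z‖) Ω s ⊆ sublevel u Ω r := by
  have hball : closedBall (0 : ℂ) s ⊆ ball 0 1 := closedBall_subset_ball hs1
  obtain ⟨w, hw, hmax⟩ := (isCompact_closedBall (0 : ℂ) s).exists_isMaxOn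
    (nonempty_closedBall.2 hs0) ((hu.comp hψ.differentiableOn.continuousOn hψ.mapsTo).mono hball)
  filter_upwards [mem_nhdsWithin_of_mem_nhds
    (lt_mem_nhds (hneg _ (hψ.mapsTo (hball hw))))] with r hr z ⟨hz, hzs⟩
  have hle : u (ψ (discInverse ψ z)) ≤ u (ψ w) := hmax (mem_closedBall_zero_iff.2 hzs.le)
  rw [hψ.apply_discInverse hz] at hle
  exact ⟨hz, hle.trans_lt hr⟩

theorem IsMongeAmpereFamily.setLIntegral_harmonicMajorant_le
    (hμ : IsMongeAmpereFamily u Ω ν μfam) (hψ : IsConformalOnto ψ Ω) (hf : DifferentiableOn ℂ f Ω)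
    (hp : 0 ≤ p) {M : ℝ≥0∞} (hM : psNormPow p μfam f < M) (hs : s ∈ Ioo (0 : ℝ) 1) :
    ∫⁻ z in sublevel (fun z => ‖discInverse ψ z‖) Ω s,
        ENNReal.ofReal (harmonicMajorant p ψ f s z) ∂ν ≤
      ENNReal.ofReal (2 ^ p) * (M + ν univ) + 3 * ν univ := by
  obtain ⟨_, _, htrunc, _⟩ := hμ.exists
  obtain ⟨r, ⟨νr, hr, hμr⟩, hrM, hsub⟩ := (hμ.and ((eventually_lt_of_limsup_lt hM
    (by isBoundedDefault)).and (hψ.eventually_sublevel_subset htrunc.exhaustion.subh.1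
      htrunc.exhaustion.neg hs.1.le hs.2))).exists
  rw [hμr] at hrM
  refine (hr.setLIntegral_harmonicMajorant_le hψ hf hp hs.1 hs.2 hsub).trans ?_
  gcongr

theorem IsConformalOnto.harmonicOn_integral_harmonicMeasure (hψ : IsConformalOnto ψ Ω) {φ : ℂ → ℝ}
    (hφ : Integrable (fun θ => φ (circleMap 0 1 θ)) (harmonicMeasure 0)) :
    HarmonicOn (fun z => ∫ θ, φ (circleMap 0 1 θ) ∂harmonicMeasure (discInverse ψ z)) Ω := by
  have hdiff : DifferentiableOn ℂ (herglotz φ ∘ discInverse ψ) Ω :=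
    (differentiableOn_herglotz hφ).comp hψ.differentiableOn_discInverse hψ.mapsTo_discInverse
  have hre : EqOn (fun z => ∫ θ, φ (circleMap 0 1 θ) ∂harmonicMeasure (discInverse ψ z))
      (fun z => ((herglotz φ ∘ discInverse ψ) z).re) Ω :=
    fun z hz => (re_herglotz hφ (hψ.mapsTo_discInverse hz)).symm
  refine ⟨ContDiffOn.congr (fun z hz =>
    (contDiffAt_re_of_differentiableOn hψ.isOpen hdiff hz).contDiffWithinAt) hre, fun z hz => ?_⟩
  rw [lap_congr (hre.eventuallyEq_of_mem (hψ.isOpen.mem_nhds hz)),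
    lap_re_of_differentiableOn hψ.isOpen hdiff hz]

end PoletskyStessin

/-- The outer factor of `f` on `Ω = ψ(𝔻)`: the outer function on the disc whose modulus on the
circle is that of the boundary values of `f ∘ ψ`, transported to `Ω`. -/
def outerFactor (ψ f : ℂ → ℂ) (z : ℂ) : ℂ :=
  outerFunction (fun ζ => ‖boundaryValue (f ∘ ψ) ζ‖) (discInverse ψ z)

/-- The inner factor of `f` on `Ω = ψ(𝔻)`, complementary to `outerFactor ψ f`. -/
def innerFactor (ψ f : ℂ → ℂ) (z : ℂ) : ℂ :=
  f z / outerFactor ψ f z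

section InnerOuter

variable {Ω : Set ℂ} {ψ f : ℂ → ℂ}

theorem outerFactor_ne_zero (z : ℂ) : outerFactor ψ f z ≠ 0 :=
  exp_ne_zero _

theorem innerFactor_mul_outerFactor (z : ℂ) : innerFactor ψ f z * outerFactor ψ f z = f z :=
  div_mul_cancel₀ _ (outerFactor_ne_zero z)

variable (hψ : IsConformalOnto ψ Ω) (hg : MemHardyOne (f ∘ ψ))
  (hne : ∃ z ∈ ball (0 : ℂ) 1, (f ∘ ψ) z ≠ 0)

include hψ

theorem IsConformalOnto.eqOn_outerFactor_comp :
    EqOn (outerFunction fun ζ => ‖boundaryValue (f ∘ ψ) ζ‖) (outerFactor ψ f ∘ ψ) (ball 0 1) :=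
  fun z hz => by rw [Function.comp_apply, outerFactor, hψ.discInverse_apply hz]

include hg hne

theorem IsConformalOnto.differentiableOn_outerFactor : DifferentiableOn ℂ (outerFactor ψ f) Ω :=
  (differentiableOn_outerFunction (w := fun ζ => ‖boundaryValue (f ∘ ψ) ζ‖)
    (hg.integrable_log_norm_boundaryValue hne)).comp hψ.differentiableOn_discInverse
    hψ.mapsTo_discInverse

theorem IsConformalOnto.norm_outerFactor_rpow_le {p : ℝ}
    (hint : Integrable (fun θ => ‖boundaryValue (f ∘ ψ) (circleMap 0 1 θ)‖ ^ p)
      (harmonicMeasure 0)) {z : ℂ} (hz : z ∈ Ω) :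
    ‖outerFactor ψ f z‖ ^ p ≤ ∫ θ, ‖boundaryValue (f ∘ ψ) (circleMap 0 1 θ)‖ ^ p
      ∂harmonicMeasure (discInverse ψ z) :=
  norm_outerFunction_rpow_le (w := fun ζ => ‖boundaryValue (f ∘ ψ) ζ‖)
    (hg.ae_boundaryValue_pos hne) (hg.integrable_log_norm_boundaryValue hne) hint
    (hψ.mapsTo_discInverse hz)

theorem IsConformalOnto.ae_NTLim_outerFactor_comp :
    ∀ᵐ θ ∂harmonicMeasure 0, NTLim (ball 0 1) (outerFactor ψ f ∘ ψ) (circleMap 0 1 θ)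
      (boundaryValue (outerFunction fun ζ => ‖boundaryValue (f ∘ ψ) ζ‖) (circleMap 0 1 θ)) :=
  (ae_NTLim_outerFunction (w := fun ζ => ‖boundaryValue (f ∘ ψ) ζ‖) (hg.ae_boundaryValue_pos hne)
    (hg.integrable_log_norm_boundaryValue hne) (hg.integrable_norm_boundaryValue hne)).mono
    fun _ hθ => hθ.congr hψ.eqOn_outerFactor_comp

theorem IsConformalOnto.omegaOuter_outerFactor : OmegaOuter Ω ψ (outerFactor ψ f) := by
  have h0 : (0 : ℂ) ∈ ball (0 : ℂ) 1 := mem_ball_self one_pos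
  set F := outerFunction fun ζ => ‖boundaryValue (f ∘ ψ) ζ‖
  have hlog : Real.log ‖outerFactor ψ f (ψ 0)‖ =
      ∫ θ, Real.log ‖boundaryValue (f ∘ ψ) (circleMap 0 1 θ)‖ ∂harmonicMeasure 0 := by
    rw [← Function.comp_apply (f := outerFactor ψ f), ← hψ.eqOn_outerFactor_comp h0,
      norm_outerFunction (w := fun ζ => ‖boundaryValue (f ∘ ψ) ζ‖)
        (hg.integrable_log_norm_boundaryValue hne) h0, Real.log_exp]
  refine ⟨hψ.differentiableOn_outerFactor hg hne, boundaryValue F,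
    ae_arcLen_unitBall (hψ.ae_NTLim_outerFactor_comp hg hne), ?_⟩
  rw [hlog, integral_arcLen_unitBall fun ξ => Real.log ‖boundaryValue F ξ‖]
  exact integral_congr_ae ((hg.ae_norm_boundaryValue_outerFunction_eq hne).mono
    fun θ hθ => congrArg Real.log hθ.symm)

theorem IsConformalOnto.norm_innerFactor_le_one {z : ℂ} (hz : z ∈ Ω) :
    ‖innerFactor ψ f z‖ ≤ 1 := by
  have hle := hg.norm_le_norm_outerFunction hne (hψ.mapsTo_discInverse hz)
  rw [Function.comp_apply, hψ.apply_discInverse hz] at hle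
  rw [innerFactor, norm_div]
  exact div_le_one_of_le₀ hle (norm_nonneg _)

theorem IsConformalOnto.omegaInner_innerFactor (hf : DifferentiableOn ℂ f Ω) :
    OmegaInner Ω ψ (innerFactor ψ f) := by
  refine ⟨hf.div (hψ.differentiableOn_outerFactor hg hne) fun z _ => outerFactor_ne_zero z,
    ae_arcLen_unitBall ?_⟩
  filter_upwards [hg.ae_NTLim, hg.ae_boundaryValue_pos hne, hψ.ae_NTLim_outerFactor_comp hg hne,
    hg.ae_norm_boundaryValue_outerFunction_eq hne] with θ hfθ hpos hFθ hnorm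
  refine ⟨_, hfθ.div hFθ (norm_pos_iff.1 (hnorm.symm ▸ hpos)), ?_⟩
  rw [norm_div, hnorm, div_self hpos.ne']

end InnerOuter

theorem omegaInner_one (Ω : Set ℂ) (ψ : ℂ → ℂ) : OmegaInner Ω ψ fun _ => 1 :=
  ⟨differentiableOn_const 1, Eventually.of_forall fun _ =>
    ⟨1, fun _ _ => tendsto_const_nhds, norm_one⟩⟩

-- `log 0 = 0` makes the zero function outer, which the factorization of `f = 0` requires.
theorem omegaOuter_zero (Ω : Set ℂ) (ψ : ℂ → ℂ) : OmegaOuter Ω ψ fun _ => 0 :=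
  ⟨differentiableOn_const 0, fun _ => 0, Eventually.of_forall fun _ _ _ => tendsto_const_nhds,
    by simp⟩

section Factorization

variable {Ω : Set ℂ} {u : ℂ → ℝ} {ν : Measure ℂ} {μfam : ℝ → Measure ℂ} {p : ℝ} {ψ f : ℂ → ℂ}

theorem IsMongeAmpereFamily.exists_memHardyOne_and_lintegral_lt_top
    (hμ : IsMongeAmpereFamily u Ω ν μfam) (hψ : IsConformalOnto ψ Ω) (hp : 1 ≤ p)
    (hf : MemPS p Ω μfam f) :
    MemHardyOne (f ∘ ψ) ∧
      Integrable (fun θ => ‖boundaryValue (f ∘ ψ) (circleMap 0 1 θ)‖ ^ p) (harmonicMeasure 0) ∧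
      ∫⁻ z, ENNReal.ofReal (∫ θ, ‖boundaryValue (f ∘ ψ) (circleMap 0 1 θ)‖ ^ p
        ∂harmonicMeasure (discInverse ψ z)) ∂ν < ⊤ := by
  have hp0 : 0 ≤ p := zero_le_one.trans hp
  obtain ⟨_, _, htrunc, _⟩ := hμ.exists
  have := htrunc.finite
  obtain ⟨M, hM, hMtop⟩ := exists_between hf.2
  have hB := fun s hs => hμ.setLIntegral_harmonicMajorant_le hψ hf.1 hp0 hM (s := s) hs
  have hBtop : ENNReal.ofReal (2 ^ p) * (M + ν univ) + 3 * ν univ < ⊤ := by finiteness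
  obtain ⟨ρ, hρ, C, hC⟩ :=
    hψ.exists_integral_smoothNormPow_le hf.1 htrunc.riesz.1 hμ.ne_zero hBtop.ne hB
  have hg := hψ.memHardyOne_comp hf.1 hp hρ hC
  have hint := hψ.integrable_norm_boundaryValue_rpow hf.1 hg hp0 hρ hC
  exact ⟨hg, hint,
    (hψ.lintegral_integral_boundaryValue_le hf.1 hg hp0 hint htrunc.riesz.1 hB).trans_lt hBtop⟩

theorem stmt10_general (hu : IsExhaustion u Ω) (hν : IsRieszMeasure u Ω ν) (hfin : ν univ < ⊤)
    (hμ : ∀ r < 0, IsMAMeasure u Ω ν r (μfam r)) (hψ : IsConformalOnto ψ Ω) (hp : 1 ≤ p)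
    (hf : MemPS p Ω μfam f) :
    ∃ I F : ℂ → ℂ, OmegaInner Ω ψ I ∧ OmegaOuter Ω ψ F ∧
      (∀ z ∈ Ω, f z = I z * F z) ∧ MemPS p Ω μfam I ∧ MemPS p Ω μfam F := by
  have hp0 : 0 ≤ p := zero_le_one.trans hp
  have hfam := hu.isMongeAmpereFamily hψ.isOpen ⟨0, hψ.zero_mem⟩ hν hfin hμ
  have hbounded {h : ℂ → ℂ} (hh : ∀ z ∈ Ω, ‖h z‖ ≤ 1) : psNormPow p μfam h < ⊤ :=
    (hfam.psNormPow_le_of_norm_le_one hp0 hh).trans_lt hfin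
  by_cases hne : ∃ z ∈ ball (0 : ℂ) 1, (f ∘ ψ) z ≠ 0
  · obtain ⟨hg, hint, hBtop⟩ := hfam.exists_memHardyOne_and_lintegral_lt_top hψ hp hf
    have hI := hψ.omegaInner_innerFactor hg hne hf.1
    have hF := hψ.omegaOuter_outerFactor hg hne
    exact ⟨innerFactor ψ f, outerFactor ψ f, hI, hF,
      fun z _ => (innerFactor_mul_outerFactor z).symm,
      ⟨hI.1, hbounded fun z hz => hψ.norm_innerFactor_le_one hg hne hz⟩,
      hF.1, (hfam.psNormPow_le_of_harmonicOn (hψ.harmonicOn_integral_harmonicMeasure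
        (φ := fun ζ => ‖boundaryValue (f ∘ ψ) ζ‖ ^ p) hint)
        fun z hz => hψ.norm_outerFactor_rpow_le hg hne hint hz).trans_lt hBtop⟩
  · push Not at hne
    have hf0 (z : ℂ) (hz : z ∈ Ω) : f z = 0 := by
      rw [← hψ.apply_discInverse hz]
      exact hne _ (hψ.mapsTo_discInverse hz)
    have hI := omegaInner_one Ω ψ
    have hF := omegaOuter_zero Ω ψ
    exact ⟨_, _, hI, hF, fun z hz => by rw [hf0 z hz, mul_zero],
      ⟨hI.1, hbounded fun _ _ => norm_one.le⟩, hF.1, hbounded fun _ _ => by simp⟩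

end Factorization

/-- Every `f ∈ H^p_u(Ω)` factors as `f = I·F` with `I` `Ω`-inner and `F`
`Ω`-outer, and moreover `I, F ∈ H^p_u(Ω)`. -/
theorem stmt10 (Ω : Set ℂ) (hΩ : AnalyticJordanDomain Ω)
    (u : ℂ → ℝ) (hu : IsExhaustion u Ω)
    (ν : Measure ℂ) (hν : IsRieszMeasure u Ω ν) (hfin : ν Set.univ < ⊤)
    (μfam : ℝ → Measure ℂ) (hμ : ∀ r : ℝ, r < 0 → IsMAMeasure u Ω ν r (μfam r))
    (ψ : ℂ → ℂ) (hψ : IsConformalOnto ψ Ω)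
    (p : ℝ) (hp : 1 ≤ p)
    (f : ℂ → ℂ) (hf : MemPS p Ω μfam f) :
    ∃ I F : ℂ → ℂ, OmegaInner Ω ψ I ∧ OmegaOuter Ω ψ F ∧
      (∀ z ∈ Ω, f z = I z * F z) ∧ MemPS p Ω μfam I ∧ MemPS p Ω μfam F :=
  stmt10_general hu hν hfin hμ hψ hp hf

end
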